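/- Let j be a positive real number. Then the following are equivalent: (a) rank_ℤ E^{(D)}(ℚ) < 2j for every nonzero integer D (i.e., for every nonzero integer D there is no ℤ-linearly independent family of ⌈2j⌉ points in the abelian group E^{(D)}(ℚ)); (b) Q_E(j,k) converges for some real k ≥ 1; (c) Q_E(j,k) converges for every real k ≥ 1. -/

import Mathlib

noncomputable section

/-- `F(u,v) = v·(u³ + au²v + buv² + cv³) = v⁴ f(u/v)`. -/
def Fbin (a b c u v : ℤ) : ℤ := v * (u^3 + a*u^2*v + b*u*v^2 + c*v^3)

/-- `Ψ = {(u,v) ∈ ℤ² : gcd(u,v) = 1 and F(u,v) ≠ 0}`. -/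
def Psi (a b c : ℤ) : Set (ℤ × ℤ) := {p | Int.gcd p.1 p.2 = 1 ∧ Fbin a b c p.1 p.2 ≠ 0}

/-- `h(u/v) = max(1, log|u|, log|v|)` for coprime `u, v`. -/
def ht (u v : ℤ) : ℝ := max 1 (max (Real.log |(u : ℝ)|) (Real.log |(v : ℝ)|))

/-- the polynomial `f(x) = x³ + ax² + bx + c` has three distinct complex roots. -/
def DistinctRoots (a b c : ℤ) : Prop :=
  ∃ r₁ r₂ r₃ : ℂ, r₁ ≠ r₂ ∧ r₁ ≠ r₃ ∧ r₂ ≠ r₃ ∧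
    ∀ z : ℂ, z^3 + a*z^2 + b*z + c = (z - r₁) * (z - r₂) * (z - r₃)

/-- `sq` is a squarefree-part function: for nonzero `n`, `sq n` is squarefree and
`n = sq n · m²` for some rational `m`. -/
def IsSqfreePart (sq : ℤ → ℤ) : Prop :=
  ∀ n : ℤ, n ≠ 0 → Squarefree (sq n) ∧ ∃ m : ℚ, (n : ℚ) = sq n * m^2

/-- the general term `|s(F(u,v))|^{-k} · h(u/v)^{-j}` of `S_E(j,k)`. -/
def STerm (a b c : ℤ) (sq : ℤ → ℤ) (j k : ℝ) (p : ℤ × ℤ) : ℝ :=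
  |(sq (Fbin a b c p.1 p.2) : ℝ)| ^ (-k) * ht p.1 p.2 ^ (-j)

/-- index set of `S_E(j,k,X)`: `(u,v) ∈ Ψ` with `u/v ∈ X`. -/
def SIdx (a b c : ℤ) (X : Set ℝ) : Set (ℤ × ℤ) :=
  {p | p ∈ Psi a b c ∧ ((p.1 : ℝ) / (p.2 : ℝ)) ∈ X}

/-- `S_E(j,k,X)` converges. -/
def SConv (a b c : ℤ) (sq : ℤ → ℤ) (j k : ℝ) (X : Set ℝ) : Prop :=
  Summable fun p : SIdx a b c X => STerm a b c sq j k p.1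

/-- index set of `R_E(j,k,X)`: `t ≥ 1`, `(u,v) ∈ Ψ`, `u/v ∈ X`, `t² ∣ F(u,v)`. -/
def RIdx (a b c : ℤ) (X : Set ℝ) : Set (ℕ × ℤ × ℤ) :=
  {q | 1 ≤ q.1 ∧ q.2 ∈ Psi a b c ∧ ((q.2.1 : ℝ) / (q.2.2 : ℝ)) ∈ X ∧
    (q.1 : ℤ)^2 ∣ Fbin a b c q.2.1 q.2.2}

/-- the general term `t^{2k} · |F(u,v)|^{-k} · h(u/v)^{-j}` of `R_E(j,k)`. -/
def RTerm (a b c : ℤ) (j k : ℝ) (q : ℕ × ℤ × ℤ) : ℝ :=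
  (q.1 : ℝ) ^ (2*k) * |(Fbin a b c q.2.1 q.2.2 : ℝ)| ^ (-k) * ht q.2.1 q.2.2 ^ (-j)

/-- `R_E(j,k,X)` converges. -/
def RConv (a b c : ℤ) (j k : ℝ) (X : Set ℝ) : Prop :=
  Summable fun q : RIdx a b c X => RTerm a b c j k q.1

/-- `Ω_d = {α ∈ ℤ/d²ℤ : f(α) ≡ 0 (mod d²)}`. -/
def OmegaSet (a b c : ℤ) (d : ℕ) : Set (ZMod (d^2)) :=
  {α | α^3 + (a : ZMod (d^2))*α^2 + (b : ZMod (d^2))*α + (c : ZMod (d^2)) = 0}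

/-- the lattice `L_{α,d,d'} = {(u,v) : u ≡ αv (mod d²), v ≡ 0 (mod d'²)}`. -/
def latL (d d' : ℕ) (α : ZMod (d^2)) : Set (ℤ × ℤ) :=
  {p | ((p.1 : ZMod (d^2)) = α * (p.2 : ZMod (d^2))) ∧ ((d' : ℤ))^2 ∣ p.2}

/-- `ω` is a choice, for coprime `d, d' ≥ 1` and `α ∈ Ω_d`, of a shortest nonzero
vector `ω_{α,d,d'}` of the lattice `L_{α,d,d'}` for the Euclidean norm. -/
def IsShortestChoice (a b c : ℤ) (ω : (d d' : ℕ) → ZMod (d^2) → ℤ × ℤ) : Prop :=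
  ∀ d d' : ℕ, 0 < d → 0 < d' → Nat.Coprime d d' → ∀ α ∈ OmegaSet a b c d,
    ω d d' α ∈ latL d d' α ∧ ω d d' α ≠ 0 ∧
    ∀ p ∈ latL d d' α, p ≠ 0 →
      (ω d d' α).1^2 + (ω d d' α).2^2 ≤ p.1^2 + p.2^2

/-- index set of `Q_E(j,k)`: coprime `d, d' ≥ 1`, `α ∈ Ω_d`, `ω_{α,d,d'} ∈ Ψ`. -/
def QIdx (a b c : ℤ) (ω : (d d' : ℕ) → ZMod (d^2) → ℤ × ℤ) :
    Set (Σ d : ℕ, ℕ × ZMod (d^2)) :=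
  {x | 0 < x.1 ∧ 0 < x.2.1 ∧ Nat.Coprime x.1 x.2.1 ∧ x.2.2 ∈ OmegaSet a b c x.1 ∧
    ω x.1 x.2.1 x.2.2 ∈ Psi a b c}

/-- the general term `(dd')^{2k} · max(1, log(dd'))^{-j} · ‖ω_{α,d,d'}‖^{-4k}` of `Q_E(j,k)`. -/
def QTerm (j k : ℝ) (ω : (d d' : ℕ) → ZMod (d^2) → ℤ × ℤ)
    (x : Σ d : ℕ, ℕ × ZMod (d^2)) : ℝ :=
  ((x.1 : ℝ) * (x.2.1 : ℝ)) ^ (2*k) * max 1 (Real.log ((x.1 : ℝ) * (x.2.1 : ℝ))) ^ (-j) *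
    Real.sqrt (((ω x.1 x.2.1 x.2.2).1 : ℝ)^2 + ((ω x.1 x.2.1 x.2.2).2 : ℝ)^2) ^ (-(4*k))

/-- `Q_E(j,k)` converges. -/
def QConv (a b c : ℤ) (j k : ℝ) (ω : (d d' : ℕ) → ZMod (d^2) → ℤ × ℤ) : Prop :=
  Summable fun x : QIdx a b c ω => QTerm j k ω x.1

/-- the quadratic twist `E^{(D)} : Dy² = f(x)`, in Weierstrass form
`y² = x³ + aDx² + bD²x + cD³` (isomorphic via `(x,y) ↦ (Dx, D²y)`). -/
def twist (a b c D : ℤ) : WeierstrassCurve.Affine ℚ :=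
  { a₁ := 0, a₂ := a*D, a₃ := 0, a₄ := b*D^2, a₆ := c*D^3 }

/-- `rank_ℤ E^{(D)}(ℚ) < 2j` for every nonzero integer `D`: there is no
ℤ-linearly independent family of `⌈2j⌉` rational points on `E^{(D)}`. -/
def RankBound (a b c : ℤ) (j : ℝ) : Prop :=
  ∀ D : ℤ, D ≠ 0 →
    ¬ ∃ P : Fin ⌈2*j⌉₊ → (twist a b c D).Point, LinearIndependent ℤ P

/-- `X ⊆ ℝ` is broad: open, and meets both `(e_max, ∞)` and `(-∞, e_min)`. -/
def Broad (a b c : ℤ) (X : Set ℝ) : Prop :=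
  IsOpen X ∧ (∃ x ∈ X, ∀ r : ℝ, r^3 + a*r^2 + b*r + c = 0 → r < x) ∧
    (∃ x ∈ X, ∀ r : ℝ, r^3 + a*r^2 + b*r + c = 0 → x < r)

/-- the set of triples `(α, d, d')` with `d, d'` coprime positive integers,
`dd' = t`, and `α ∈ Ω_d`. -/
def TripSet (a b c : ℤ) (t : ℕ) : Set (Σ d : ℕ, ℕ × ZMod (d^2)) :=
  {x | 0 < x.1 ∧ 0 < x.2.1 ∧ Nat.Coprime x.1 x.2.1 ∧ x.1 * x.2.1 = t ∧
    x.2.2 ∈ OmegaSet a b c x.1}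

end

/-!
Coprime pairs `±(u, v)` with `F(u, v) = D m²`, `m ≠ 0`, correspond to pairs of opposite points of
`E^{(D)}(ℚ)` with `x = u / v`. Measured by the height of `u / v`, the naive and canonical heights
differ by a constant independent of `D`, and for squarefree `D` the canonical height of a
nontorsion point is at least a constant times `max(1, log |D|)`.

If all ranks are at most `r`, then `E^{(D)}(ℚ)` has `O(B^{r/2})` points of height at most
`B max(1, log |D|)`. A term of `Q_E(j, k)` with `F(ω) = (dd')² D s²`, `D` squarefree, is at most a
constant times `|D s²|⁻¹ h(ω)^{-j}`, where `h` is the logarithmic height; summing over `ω`, `s` and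
`D` gives convergence for `j > max(1, r/2)`. Conversely, let `P₁, …, Pᵣ` be independent on a twist
with `r ≥ 2j`. One of any two combinations `∑ nᵢ Pᵢ` differing by `P₁` stays away from the
two-torsion in `E^{(D)}(ℝ)`, so that `|F(u, v)|` is of the order of `‖(u, v)‖⁴` there; a large such
`(u, v)` is then, up to sign, the shortest vector of its lattice, and these vectors alone make
`Q_E(j, k)` diverge.

The condition `1 < j` is automatic because some twist has rank at least two. Rational curves on the
surface `f(x₁) f(x₂) = y²` put two points on a common twist; if all ranks were at most one, these
two points would be proportional modulo torsion with a ratio forced by the growth of their heights,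
which is irrational for `j`-invariant `0` and otherwise would make the doubles of the points equal
up to sign.
-/

/-! ### Quadratic heights on abelian groups -/

section QuadraticHeight

open Filter Topology

variable {A : Type*} [AddCommGroup A]

/-- Nonnegative functions satisfying the parallelogram law: the two properties of a canonical
height on an abelian group that the counting arguments use. -/
structure IsQuadraticHeight (H : A → ℝ) : Prop where
  nonneg : ∀ P, 0 ≤ H P
  parallelogram : ∀ P Q, H (P + Q) + H (P - Q) = 2 * H P + 2 * H Q

/-- The sequence `h(2ⁿP) / 4ⁿ`, whose limit is Tate's canonical height attached to `h`. -/
noncomputable def tateSeq (h : A → ℝ) (P : A) (n : ℕ) : ℝ := h ((2 ^ n : ℕ) • P) / 4 ^ n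

section Tate

variable {h : A → ℝ} {C : ℝ}

theorem dist_tateSeq_succ_le (h0 : h 0 = 0)
    (hq : ∀ P Q, |h (P + Q) + h (P - Q) - 2 * h P - 2 * h Q| ≤ C) (P : A) (n : ℕ) :
    dist (tateSeq h P n) (tateSeq h P (n + 1)) ≤ C / 4 * (1 / 4 : ℝ) ^ n := by
  have hdouble : |h ((2 ^ (n + 1) : ℕ) • P) - 4 * h ((2 ^ n : ℕ) • P)| ≤ C := by
    convert hq ((2 ^ n : ℕ) • P) ((2 ^ n : ℕ) • P) using 2
    rw [sub_self, h0, ← two_nsmul, smul_smul, ← pow_succ']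
    ring
  have hdiff : tateSeq h P (n + 1) - tateSeq h P n =
      (h ((2 ^ (n + 1) : ℕ) • P) - 4 * h ((2 ^ n : ℕ) • P)) * (1 / 4 * (1 / 4) ^ n) := by
    simp only [tateSeq, one_div, inv_pow]
    field_simp
    ring
  rw [dist_comm, Real.dist_eq, hdiff, abs_mul, abs_of_pos (by positivity : (0 : ℝ) < _ * _ ^ n)]
  calc _ ≤ C * (1 / 4 * (1 / 4 : ℝ) ^ n) := by gcongr
    _ = C / 4 * (1 / 4 : ℝ) ^ n := by ring

theorem tateSeq_parallelogram_le
    (hq : ∀ P Q, |h (P + Q) + h (P - Q) - 2 * h P - 2 * h Q| ≤ C) (P Q : A) (n : ℕ) :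
    |tateSeq h (P + Q) n + tateSeq h (P - Q) n - (2 * tateSeq h P n + 2 * tateSeq h Q n)| ≤
      C * (1 / 4 : ℝ) ^ n := by
  have hn := hq ((2 ^ n : ℕ) • P) ((2 ^ n : ℕ) • Q)
  rw [← nsmul_add, ← nsmul_sub] at hn
  have hscale :
      tateSeq h (P + Q) n + tateSeq h (P - Q) n - (2 * tateSeq h P n + 2 * tateSeq h Q n) =
      (h ((2 ^ n : ℕ) • (P + Q)) + h ((2 ^ n : ℕ) • (P - Q)) - 2 * h ((2 ^ n : ℕ) • P) -
        2 * h ((2 ^ n : ℕ) • Q)) * (1 / 4 : ℝ) ^ n := by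
    simp only [tateSeq, one_div, inv_pow]
    field_simp
    ring
  rw [hscale, abs_mul, abs_of_pos (by positivity : (0 : ℝ) < (1 / 4) ^ n)]
  gcongr

theorem exists_isQuadraticHeight_abs_sub_le (h0 : h 0 = 0) (hn : ∀ P, 0 ≤ h P)
    (hq : ∀ P Q, |h (P + Q) + h (P - Q) - 2 * h P - 2 * h Q| ≤ C) :
    ∃ H : A → ℝ, IsQuadraticHeight H ∧ ∀ P, |H P - h P| ≤ C := by
  have hC : 0 ≤ C := (abs_nonneg _).trans (hq 0 0)
  have hdist := dist_tateSeq_succ_le h0 hq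
  choose H hH using fun P => cauchySeq_tendsto_of_complete <|
    cauchySeq_of_le_geometric (1 / 4 : ℝ) (C / 4) (by norm_num) (hdist P)
  refine ⟨H, ⟨fun P => ge_of_tendsto' (hH P) fun n => div_nonneg (hn _) (by positivity),
    fun P Q => ?_⟩, fun P => ?_⟩
  · have hdefect :=
      ((hH (P + Q)).add (hH (P - Q))).sub (((hH P).const_mul 2).add ((hH Q).const_mul 2))
    have hgeom : Tendsto (fun n : ℕ => C * (1 / 4 : ℝ) ^ n) atTop (𝓝 0) := by
      simpa using (tendsto_pow_atTop_nhds_zero_of_lt_one (r := (1 / 4 : ℝ)) (by norm_num)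
        (by norm_num)).const_mul C
    exact sub_eq_zero.1 <| tendsto_nhds_unique hdefect <|
      squeeze_zero_norm (tateSeq_parallelogram_le hq P Q) hgeom
  · have hlim := dist_le_of_le_geometric_of_tendsto₀ (1 / 4 : ℝ) (C / 4) (by norm_num) (hdist P)
      (hH P)
    rw [dist_comm, Real.dist_eq, show tateSeq h P 0 = h P by simp [tateSeq]] at hlim
    linarith [show C / 4 / (1 - 1 / 4) = C / 3 by ring]

end Tate

namespace IsQuadraticHeight

variable {H : A → ℝ}

theorem map_zero (hH : IsQuadraticHeight H) : H 0 = 0 := by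
  have h := hH.parallelogram 0 0
  rw [add_zero, sub_zero] at h
  linarith

theorem map_neg (hH : IsQuadraticHeight H) (P : A) : H (-P) = H P := by
  have h := hH.parallelogram 0 P
  rw [zero_add, zero_sub, hH.map_zero] at h
  linarith

theorem map_nsmul (hH : IsQuadraticHeight H) (n : ℕ) (P : A) : H (n • P) = n ^ 2 * H P := by
  induction n using Nat.strong_induction_on with
  | _ n ih =>
    match n with
    | 0 => simp [hH.map_zero]
    | 1 => simp
    | n + 2 =>
      have h := hH.parallelogram ((n + 1) • P) P
      rw [← succ_nsmul, succ_nsmul P n, add_sub_cancel_right, ← succ_nsmul, ih n (by omega),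
        ih (n + 1) (by omega)] at h
      push_cast at h ⊢
      linarith

theorem map_zsmul (hH : IsQuadraticHeight H) (n : ℤ) (P : A) : H (n • P) = n ^ 2 * H P := by
  obtain ⟨m, rfl | rfl⟩ := n.eq_nat_or_neg
  · rw [natCast_zsmul, hH.map_nsmul, Int.cast_natCast]
  · rw [neg_smul, hH.map_neg, natCast_zsmul, hH.map_nsmul, Int.cast_neg, Int.cast_natCast, neg_sq]

theorem map_add_le (hH : IsQuadraticHeight H) (P Q : A) : H (P + Q) ≤ 2 * H P + 2 * H Q := by
  linarith [hH.parallelogram P Q, hH.nonneg (P - Q)]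

theorem map_sub_le (hH : IsQuadraticHeight H) (P Q : A) : H (P - Q) ≤ 2 * H P + 2 * H Q := by
  linarith [hH.parallelogram P Q, hH.nonneg (P + Q)]

theorem map_add_of_isOfFinAddOrder (hH : IsQuadraticHeight H) (P : A) {T : A}
    (hT : IsOfFinAddOrder T) : H (P + T) = H P := by
  obtain ⟨n, hn, hT⟩ := isOfFinAddOrder_iff_nsmul_eq_zero.1 hT
  have h := hH.map_nsmul n (P + T)
  rw [nsmul_add, hT, add_zero, hH.map_nsmul] at h
  exact (mul_left_cancel₀ (by positivity) h).symm

theorem map_of_isOfFinAddOrder (hH : IsQuadraticHeight H) {T : A} (hT : IsOfFinAddOrder T) :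
    H T = 0 := by
  simpa [hH.map_zero] using hH.map_add_of_isOfFinAddOrder 0 hT

theorem map_eq_of_isOfFinAddOrder_sub (hH : IsQuadraticHeight H) {P Q : A}
    (hT : IsOfFinAddOrder (P - Q)) : H P = H Q := by
  simpa using hH.map_add_of_isOfFinAddOrder Q hT

theorem map_sum_le (hH : IsQuadraticHeight H) {r : ℕ} (P : Fin r → A) :
    H (∑ i, P i) ≤ 2 ^ r * ∑ i, H (P i) := by
  induction r with
  | zero => simp [hH.map_zero]
  | succ r ih =>
    rw [Fin.sum_univ_succ, Fin.sum_univ_succ, pow_succ]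
    have hsplit := hH.map_add_le (P 0) (∑ i : Fin r, P i.succ)
    have htail := ih fun i => P i.succ
    have hpow : (1 : ℝ) ≤ 2 ^ r := one_le_pow₀ one_le_two
    nlinarith [hH.nonneg (P 0)]

end IsQuadraticHeight

theorem exists_fin_generators_mod_torsion {r : ℕ}
    (hr : ¬∃ P : Fin (r + 1) → A, LinearIndependent ℤ P) (S : Finset A) :
    ∃ s ≤ r, ∃ e : Fin s → A, ∀ P ∈ S, ∃ z : Fin s → ℤ, IsOfFinAddOrder (P - ∑ i, z i • e i) := by
  let G : Submodule ℤ A := Submodule.span ℤ (S : Set A)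
  have : Module.Finite ℤ G := Module.Finite.span_finset ℤ S
  let T := Submodule.torsion ℤ G
  have : Module.Free ℤ (G ⧸ T) := Module.free_of_finite_type_torsion_free'
  let b := Module.finBasis ℤ (G ⧸ T)
  choose e he using fun i => Submodule.mkQ_surjective T (b i)
  have hli : LinearIndependent ℤ fun i => (e i : A) := by
    refine (LinearIndependent.of_comp T.mkQ ?_).map' G.subtype (by simp)
    rw [show T.mkQ ∘ e = b from funext he]
    exact b.linearIndependent
  refine ⟨Module.finrank ℤ (G ⧸ T), ?_, fun i => e i, fun P hP => ?_⟩
  · by_contra! hlt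
    exact hr ⟨_, hli.comp (Fin.castLE hlt) (Fin.castLE_injective hlt)⟩
  · let P' : G := ⟨P, Submodule.subset_span hP⟩
    have hmem : T.mkQ (P' - ∑ i, b.repr (T.mkQ P') i • e i) = 0 := by
      simp only [map_sub, map_sum, map_smul, he, b.sum_repr, sub_self]
    rw [Submodule.mkQ_apply, Submodule.Quotient.mk_eq_zero] at hmem
    obtain ⟨n, hn⟩ := hmem
    refine ⟨fun i => b.repr (T.mkQ P') i, isOfFinAddOrder_iff_zsmul_eq_zero.2
      ⟨n, nonZeroDivisors.ne_zero n.2, ?_⟩⟩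
    simpa [P', Submonoid.smul_def] using congrArg Subtype.val hn

namespace IsQuadraticHeight

variable {H : A → ℝ} {m B : ℝ} {N : ℕ}

theorem isOfFinAddOrder_of_sub_zsmul (hH : IsQuadraticHeight H)
    (hm : ∀ P, H P < m → IsOfFinAddOrder P) (hN : 4 * B < N ^ 2 * m) (hN0 : 1 ≤ N) {P Q R : A}
    (hP : H P ≤ B) (hQ : H Q ≤ B) (hR : IsOfFinAddOrder (P - Q - (N : ℤ) • R)) :
    IsOfFinAddOrder (P - Q) := by
  have hNR : (N : ℝ) ^ 2 * H R < N ^ 2 * m := by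
    have := hH.map_eq_of_isOfFinAddOrder_sub hR
    rw [hH.map_zsmul, Int.cast_natCast] at this
    linarith [hH.map_sub_le P Q]
  have hR' := hm R (lt_of_mul_lt_mul_left hNR (by positivity))
  simpa using hR.add (hR'.zsmul (i := (N : ℤ)))

theorem card_le_of_forall_le (hH : IsQuadraticHeight H) {r : ℕ}
    (hr : ¬∃ P : Fin (r + 1) → A, LinearIndependent ℤ P)
    (hm : ∀ P, H P < m → IsOfFinAddOrder P) {K : ℕ}
    (hK : ∀ S : Finset A, (∀ P ∈ S, IsOfFinAddOrder P) → S.card ≤ K)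
    (hN : 4 * B < N ^ 2 * m) (hN0 : 1 ≤ N) (S : Finset A) (hS : ∀ P ∈ S, H P ≤ B) :
    S.card ≤ K * N ^ r := by
  classical
  have : NeZero N := ⟨by omega⟩
  obtain ⟨s, hs, e, he⟩ := exists_fin_generators_mod_torsion hr S
  choose! z hz using he
  -- Two points of `S` with the same coordinates modulo `N` differ by a torsion point.
  let φ : A → Fin s → ZMod N := fun P i => z P i
  have hfiber : ∀ P ∈ S, ∀ Q ∈ S, φ P = φ Q → IsOfFinAddOrder (P - Q) := by
    intro P hP Q hQ hPQ
    choose w hw using fun i =>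
      (ZMod.intCast_eq_intCast_iff_dvd_sub _ _ _).1 (congrFun hPQ i).symm
    refine hH.isOfFinAddOrder_of_sub_zsmul hm hN hN0 (hS P hP) (hS Q hQ)
      (R := ∑ i, w i • e i) ?_
    have hNw : (N : ℤ) • ∑ i, w i • e i = ∑ i, z P i • e i - ∑ i, z Q i • e i := by
      simp only [Finset.smul_sum, smul_smul, ← hw, sub_smul, Finset.sum_sub_distrib]
    rw [hNw, sub_sub_sub_comm, sub_eq_add_neg]
    exact (hz P hP).add (hz Q hQ).neg
  have hcard : S.card ≤ K * (Finset.univ : Finset (Fin s → ZMod N)).card := by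
    refine Finset.card_le_mul_card_image_of_maps_to (f := φ) (fun _ _ => Finset.mem_univ _) K ?_
    intro y _
    rcases (S.filter (φ · = y)).eq_empty_or_nonempty with hempty | ⟨Q, hQ⟩
    · simp [hempty]
    · rw [← Finset.card_image_of_injective _ (sub_left_injective (b := Q))]
      refine hK _ fun R hR => ?_
      obtain ⟨P, hP, rfl⟩ := Finset.mem_image.1 hR
      rw [Finset.mem_filter] at hP hQ
      exact hfiber P hP.1 Q hQ.1 (hP.2.trans hQ.2.symm)
  rw [Finset.card_univ, Fintype.card_fun, ZMod.card, Fintype.card_fin] at hcard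
  exact hcard.trans (Nat.mul_le_mul_left _ (Nat.pow_le_pow_right hN0 hs))

theorem card_le_of_forall_le_real (hH : IsQuadraticHeight H) {r : ℕ}
    (hr : ¬∃ P : Fin (r + 1) → A, LinearIndependent ℤ P) (hm0 : 0 < m)
    (hm : ∀ P, H P < m → IsOfFinAddOrder P) {K : ℕ}
    (hK : ∀ S : Finset A, (∀ P ∈ S, IsOfFinAddOrder P) → S.card ≤ K) (hB : 0 ≤ B)
    (S : Finset A) (hS : ∀ P ∈ S, H P ≤ B) :
    (S.card : ℝ) ≤ K * (2 * √(B / m) + 1) ^ r := by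
  have hN : 4 * B < ((⌊2 * √(B / m)⌋₊ + 1 : ℕ) : ℝ) ^ 2 * m := by
    have hlt : 2 * √(B / m) < (⌊2 * √(B / m)⌋₊ + 1 : ℕ) := by
      exact_mod_cast Nat.lt_floor_add_one _
    have hsq := pow_lt_pow_left₀ hlt (by positivity) two_ne_zero
    rw [mul_pow, Real.sq_sqrt (by positivity), mul_div_assoc', div_lt_iff₀ hm0] at hsq
    linarith
  have hcard := hH.card_le_of_forall_le hr hm hK hN (Nat.le_add_left _ _) S hS
  calc (S.card : ℝ) ≤ K * ((⌊2 * √(B / m)⌋₊ + 1 : ℕ) : ℝ) ^ r := by exact_mod_cast hcard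
    _ ≤ K * (2 * √(B / m) + 1) ^ r := by
        push_cast
        gcongr
        exact Nat.floor_le (by positivity)

theorem one_le_sq_mul_of_not_isOfFinAddOrder (hH : IsQuadraticHeight H) {K : ℕ}
    (hK : ∀ S : Finset A, (∀ P ∈ S, H P ≤ 1) → S.card ≤ K) {P : A} (hP : ¬IsOfFinAddOrder P) :
    1 ≤ ((K : ℝ) + 1) ^ 2 * H P := by
  classical
  by_contra! hlt
  have hinj : Function.Injective fun n : ℕ => n • P :=
    injective_nsmul_iff_not_isOfFinAddOrder.2 hP
  have hcard := hK ((Finset.Icc 1 (K + 1)).image fun n : ℕ => n • P) fun Q hQ => by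
    obtain ⟨n, hn, rfl⟩ := Finset.mem_image.1 hQ
    have hnK : (n : ℝ) ≤ K + 1 := by exact_mod_cast (Finset.mem_Icc.1 hn).2
    have hP0 := hH.nonneg P
    calc H (n • P) = n ^ 2 * H P := hH.map_nsmul n P
      _ ≤ (K + 1) ^ 2 * H P := by gcongr
      _ ≤ 1 := hlt.le
  rw [Finset.card_image_of_injective _ hinj, Nat.card_Icc] at hcard
  omega

end IsQuadraticHeight

end QuadraticHeight

/-! ### The addition-subtraction map on `x`-coordinates -/

section AdditionSubtraction

open WeierstrassCurve WeierstrassCurve.Affine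

variable {K : Type*} [Field K] {W : Affine K} {x₁ x₂ y₁ y₂ : K}

theorem addSubMap_eval (s t u : K) :
    (fun i => (addSubMap W i).eval ![s, t, u]) =
      ![s ^ 2 - W.b₄ * s * u - W.b₆ * t * u - W.b₈ * u ^ 2,
        2 * t * s + W.b₂ * s * u + W.b₄ * t * u + W.b₆ * u ^ 2, t ^ 2 - 4 * s * u] := by
  ext i
  fin_cases i <;> simp [addSubMap]

theorem addX_mul_addX_of_equation {l m : K} (e₁ : W.Equation x₁ y₁) (e₂ : W.Equation x₂ y₂)
    (hx : x₁ ≠ x₂) (hl : l * (x₁ - x₂) = y₁ - y₂) (hm : m * (x₁ - x₂) = y₁ - W.negY x₂ y₂) :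
    (x₁ - x₂) ^ 2 * (W.addX x₁ x₂ l * W.addX x₁ x₂ m) =
      (x₁ * x₂) ^ 2 - W.b₄ * (x₁ * x₂) - W.b₆ * (x₁ + x₂) - W.b₈ := by
  rw [equation_iff] at e₁ e₂
  set w₁ := W.a₁ * x₁ + W.a₃
  set w₂ := W.a₁ * x₂ + W.a₃
  set g₁ := x₁ ^ 3 + W.a₂ * x₁ ^ 2 + W.a₄ * x₁ + W.a₆
  set g₂ := x₂ ^ 3 + W.a₂ * x₂ ^ 2 + W.a₄ * x₂ + W.a₆
  set S := g₁ + g₂ - (W.a₂ + x₁ + x₂) * (x₁ - x₂) ^ 2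
  set T := 2 * y₁ * y₂ + w₂ * y₁ + w₁ * y₂
  have hadd : (x₁ - x₂) ^ 2 * W.addX x₁ x₂ l = S - T := by
    rw [addX]
    linear_combination (l * (x₁ - x₂) + (y₁ - y₂) + W.a₁ * (x₁ - x₂)) * hl + e₁ + e₂
  have hsub : (x₁ - x₂) ^ 2 * W.addX x₁ x₂ m = S + T + w₁ * w₂ := by
    rw [negY] at hm
    rw [addX]
    linear_combination (m * (x₁ - x₂) + (y₁ + y₂ + w₂) + W.a₁ * (x₁ - x₂)) * hm + e₁ + e₂
  have hTT : T * (T + w₁ * w₂) = 4 * g₁ * g₂ + w₂ ^ 2 * g₁ + w₁ ^ 2 * g₂ := by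
    rw [← e₁, ← e₂]
    ring
  refine mul_left_cancel₀ (pow_ne_zero 2 (sub_ne_zero.2 hx)) ?_
  rw [b₄, b₆, b₈]
  linear_combination hadd * ((x₁ - x₂) ^ 2 * W.addX x₁ x₂ m) + (S - T) * hsub - hTT

variable [DecidableEq K]

theorem addSubMap_sym2x_of_X_ne (h₁ : W.Nonsingular x₁ y₁) (h₂ : W.Nonsingular x₂ y₂)
    (hx : x₁ ≠ x₂) :
    (fun i => (addSubMap W i).eval ((Point.some x₁ y₁ h₁).sym2x (.some x₂ y₂ h₂))) =
      (x₁ - x₂) ^ 2 • (Point.some x₁ y₁ h₁ + .some x₂ y₂ h₂).sym2x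
        (Point.some x₁ y₁ h₁ - .some x₂ y₂ h₂) := by
  have e₁ := (equation_iff ..).1 h₁.1
  have e₂ := (equation_iff ..).1 h₂.1
  have hl := div_mul_cancel₀ (y₁ - y₂) (sub_ne_zero.2 hx)
  have hm := div_mul_cancel₀ (y₁ - W.negY x₂ y₂) (sub_ne_zero.2 hx)
  rw [sub_eq_add_neg (Point.some x₁ y₁ h₁), Point.neg_some, Point.add_of_X_ne hx,
    Point.add_of_X_ne hx, Point.sym2x_some_some, Point.sym2x_some_some, addSubMap_eval,
    slope_of_X_ne hx, slope_of_X_ne hx]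
  generalize (y₁ - y₂) / (x₁ - x₂) = l at hl ⊢
  generalize (y₁ - W.negY x₂ y₂) / (x₁ - x₂) = m at hm ⊢
  have hmul := addX_mul_addX_of_equation h₁.1 h₂.1 hx hl hm
  simp only [negY, addX, b₂, b₄, b₆, b₈] at hm hmul ⊢
  ext i
  fin_cases i
  · simpa using hmul.symm
  · simp; grind
  · simp; grind

theorem addSubMap_sym2x_self_of_Y_ne (h : W.Nonsingular x₁ y₁) (hy : y₁ ≠ W.negY x₁ y₁) :
    (fun i => (addSubMap W i).eval ((Point.some x₁ y₁ h).sym2x (.some x₁ y₁ h))) =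
      (y₁ - W.negY x₁ y₁) ^ 2 • (Point.some x₁ y₁ h + .some x₁ y₁ h).sym2x 0 := by
  have e := (equation_iff ..).1 h.1
  have hl := div_mul_cancel₀ (3 * x₁ ^ 2 + 2 * W.a₂ * x₁ + W.a₄ - W.a₁ * y₁) (sub_ne_zero.2 hy)
  rw [Point.add_self_of_Y_ne hy, Point.sym2x_some_some, Point.sym2x_some_zero, addSubMap_eval,
    slope_of_Y_ne rfl hy]
  generalize (3 * x₁ ^ 2 + 2 * W.a₂ * x₁ + W.a₄ - W.a₁ * y₁) / (y₁ - W.negY x₁ y₁) = l at hl ⊢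
  simp only [negY, addX, b₂, b₄, b₆, b₈] at hl ⊢
  ext i
  fin_cases i <;> simp <;> grind

theorem exists_addSubMap_sym2x_self [W.IsElliptic] (P : W.Point) :
    ∃ κ : K, κ ≠ 0 ∧ (fun i => (addSubMap W i).eval (P.sym2x P)) = κ • (P + P).sym2x 0 := by
  obtain _ | ⟨x, y, h⟩ := P
  · exact ⟨1, one_ne_zero, by
      rw [← Point.zero_def, add_zero, Point.sym2x_zero_zero, addSubMap_eval]
      simp⟩
  by_cases hy : y = W.negY x y
  · have hne := addSubMap_ne_zero W (Point.sym2x_ne_zero (Point.some x y h) (.some x y h))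
    have e := (equation_iff ..).1 h.1
    rw [Point.add_self_of_Y_eq hy, Point.sym2x_zero_zero]
    rw [Point.sym2x_some_some, addSubMap_eval] at hne ⊢
    simp only [negY, b₂, b₄, b₆, b₈] at *
    have h₁ : 2 * (x + x) * (x * x) + (W.a₁ ^ 2 + 4 * W.a₂) * (x * x) * 1 +
      (2 * W.a₄ + W.a₁ * W.a₃) * (x + x) * 1 + (W.a₃ ^ 2 + 4 * W.a₆) * 1 ^ 2 = 0 := by grind
    have h₂ : (x + x) ^ 2 - 4 * (x * x) * 1 = 0 := by ring
    rw [h₁, h₂] at hne ⊢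
    generalize (x * x) ^ 2 - _ - _ - _ = κ at hne ⊢
    exact ⟨κ, fun h₀ => hne (by rw [h₀]; ext i; fin_cases i <;> rfl), by simp⟩
  · exact ⟨_, pow_ne_zero 2 (sub_ne_zero.2 hy), addSubMap_sym2x_self_of_Y_ne h hy⟩

theorem exists_addSubMap_sym2x [W.IsElliptic] (P Q : W.Point) :
    ∃ κ : K, κ ≠ 0 ∧
      (fun i => (addSubMap W i).eval (P.sym2x Q)) = κ • (P + Q).sym2x (P - Q) := by
  by_cases hx : P.xRep = Q.xRep
  · obtain rfl | rfl := Point.eq_or_eq_neg_of_xRep_eq_xRep hx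
    · simpa using exists_addSubMap_sym2x_self P
    · simpa [Point.sym2x_neg_left, Point.sym2x_neg_right, Point.sym2x_comm 0, ← neg_add',
        -neg_add_rev] using exists_addSubMap_sym2x_self Q
  · match P, Q with
    | 0, 0 => simp at hx
    | 0, .some x y h =>
      refine ⟨1, one_ne_zero, ?_⟩
      simp [Point.sym2x_neg_right, addSubMap_eval, -Point.neg_some, sq, two_mul]
    | .some x y h, 0 => exact ⟨1, one_ne_zero, by simp [addSubMap_eval, sq, two_mul]⟩
    | .some x₁ y₁ h₁, .some x₂ y₂ h₂ =>
      have hx : x₁ ≠ x₂ := by simpa using hx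
      exact ⟨_, pow_ne_zero 2 (sub_ne_zero.2 hx), addSubMap_sym2x_of_X_ne h₁ h₂ hx⟩

end AdditionSubtraction

/-! ### Naive and canonical heights on the twists -/

section Twist

open WeierstrassCurve WeierstrassCurve.Affine

variable {a b c D : ℤ}

theorem DistinctRoots.discr_ne_zero (hf : DistinctRoots a b c) :
    a ^ 2 * b ^ 2 - 4 * b ^ 3 - 4 * a ^ 3 * c - 27 * c ^ 2 + 18 * a * b * c ≠ 0 := by
  obtain ⟨r, s, t, hrs, hrt, hst, h⟩ := hf
  have h₀ := h 0
  have h₁ := h 1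
  have h₂ := h (-1)
  have ha : (a : ℂ) = -(r + s + t) := by linear_combination (1 / 2) * h₁ + (1 / 2) * h₂ - h₀
  have hb : (b : ℂ) = r * s + r * t + s * t := by linear_combination (1 / 2) * h₁ - (1 / 2) * h₂
  have hc : (c : ℂ) = -(r * s * t) := by linear_combination h₀
  intro hdisc
  have hcast := congrArg (Int.cast : ℤ → ℂ) hdisc
  push_cast at hcast
  rw [ha, hb, hc] at hcast
  have hprod : ((r - s) * (r - t) * (s - t)) ^ 2 = 0 := by linear_combination hcast
  simp [sub_eq_zero, hrs, hrt, hst] at hprod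

theorem twist_isElliptic (hf : DistinctRoots a b c) (hD : D ≠ 0) :
    (twist a b c D).IsElliptic := by
  have hΔ : (twist a b c D).Δ = ((16 * D ^ 6 *
      (a ^ 2 * b ^ 2 - 4 * b ^ 3 - 4 * a ^ 3 * c - 27 * c ^ 2 + 18 * a * b * c) : ℤ) : ℚ) := by
    simp only [Δ, b₂, b₄, b₆, b₈, twist]
    push_cast
    ring
  refine ⟨isUnit_iff_ne_zero.2 ?_⟩
  rw [hΔ, Int.cast_ne_zero]
  exact mul_ne_zero (by positivity) hf.discr_ne_zero

theorem twist_equation_iff {X Y : ℚ} : (twist a b c D).Equation X Y ↔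
    Y ^ 2 = X ^ 3 + a * D * X ^ 2 + b * D ^ 2 * X + c * D ^ 3 := by
  rw [equation_iff]
  simp [twist]

theorem twist_nonsingular (hf : DistinctRoots a b c) (hD : D ≠ 0) {X Y : ℚ}
    (h : Y ^ 2 = X ^ 3 + a * D * X ^ 2 + b * D ^ 2 * X + c * D ^ 3) :
    (twist a b c D).Nonsingular X Y := by
  have := twist_isElliptic hf hD
  exact equation_iff_nonsingular.1 (twist_equation_iff.2 h)

theorem twist_negY (X Y : ℚ) : (twist a b c D).negY X Y = -Y := by
  simp [negY, twist]

/-- The `x`-coordinate of a point on the model `Dy² = f(x)`, that is `X / D` for the point `(X, Y)`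
of the Weierstrass model; the point at infinity gets the junk value `0`. -/
noncomputable def twistX : (twist a b c D).Point → ℚ
  | .zero => 0
  | .some X _ _ => X / D

@[simp]
theorem twistX_zero : twistX (0 : (twist a b c D).Point) = 0 := rfl

@[simp]
theorem twistX_some {X Y : ℚ} (h : (twist a b c D).Nonsingular X Y) :
    twistX (.some X Y h) = X / D := rfl

@[simp]
theorem twistX_neg (P : (twist a b c D).Point) : twistX (-P) = twistX P := by
  rcases P with _ | ⟨X, Y, h⟩ <;> rfl

theorem eq_or_eq_neg_of_twistX_eq (hD : D ≠ 0) {P Q : (twist a b c D).Point} (hP : P ≠ 0)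
    (hQ : Q ≠ 0) (h : twistX P = twistX Q) : P = Q ∨ P = -Q := by
  rcases P with _ | ⟨X₁, Y₁, h₁⟩
  · exact absurd rfl hP
  rcases Q with _ | ⟨X₂, Y₂, h₂⟩
  · exact absurd rfl hQ
  refine Point.eq_or_eq_neg_of_xRep_eq_xRep ?_
  rw [twistX_some, twistX_some, div_left_inj' (Int.cast_ne_zero.2 hD)] at h
  simp [h]

/-- The logarithmic height of the `x`-coordinate on `Dy² = f(x)`. Measuring `X / D` rather than
`X` makes all comparison constants below independent of `D`. -/
noncomputable def naiveHeight (P : (twist a b c D).Point) : ℝ := Height.logHeight₁ (twistX P)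

theorem naiveHeight_zero : naiveHeight (0 : (twist a b c D).Point) = 0 := by
  simp [naiveHeight]

theorem naiveHeight_nonneg (P : (twist a b c D).Point) : 0 ≤ naiveHeight P := by
  rw [naiveHeight]
  positivity

theorem naiveHeight_eq_logHeight_xRep (P : (twist a b c D).Point) :
    naiveHeight P = Height.logHeight ![P.xRep 0, D * P.xRep 1] := by
  rcases P with _ | ⟨X, Y, h⟩
  · rw [← Point.zero_def, naiveHeight_zero]
    simp
  · simp [naiveHeight, Height.logHeight₁_div_eq_logHeight]

/-- The symmetric square of the homogeneous `x`-coordinates `(X : D)` of two points. -/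
noncomputable def twistSym2x (P Q : (twist a b c D).Point) : Fin 3 → ℚ :=
  ![P.sym2x Q 0, D * P.sym2x Q 1, D ^ 2 * P.sym2x Q 2]

theorem exists_abs_logHeight_twistSym2x_sub_le (a b c : ℤ) : ∃ C : ℝ, ∀ D : ℤ, D ≠ 0 →
    ∀ P Q : (twist a b c D).Point,
      |Height.logHeight (twistSym2x P Q) - (naiveHeight P + naiveHeight Q)| ≤ C := by
  obtain ⟨C, hC⟩ := Height.abs_logHeight_sym2_sub_le (K := ℚ)
  refine ⟨C, fun D hD P Q => ?_⟩
  have hrep (R : (twist a b c D).Point) : ![R.xRep 0, D * R.xRep 1] ≠ 0 := by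
    rcases R with _ | ⟨X, Y, h⟩
    · simp [← Point.zero_def]
    · simp [hD]
  convert hC (hrep P) (hrep Q) using 3
  · congr 1
    ext i
    fin_cases i <;> simp [twistSym2x, Point.sym2x] <;> ring
  · rw [naiveHeight_eq_logHeight_xRep, naiveHeight_eq_logHeight_xRep]

theorem addSubMap_twist_one_twistSym2x (P Q : (twist a b c D).Point) :
    (fun i => (addSubMap (twist a b c 1) i).eval (twistSym2x P Q)) = fun i : Fin 3 =>
      (D : ℚ) ^ (i : ℕ) * (addSubMap (twist a b c D) i).eval (P.sym2x Q) := by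
  ext i
  fin_cases i <;> simp [addSubMap, twistSym2x, twist, b₂, b₄, b₆, b₈] <;> ring

theorem exists_addSubMap_twistSym2x (hf : DistinctRoots a b c) (hD : D ≠ 0)
    (P Q : (twist a b c D).Point) : ∃ κ : ℚ, κ ≠ 0 ∧
      (fun i => (addSubMap (twist a b c 1) i).eval (twistSym2x P Q)) =
        κ • twistSym2x (P + Q) (P - Q) := by
  have := twist_isElliptic hf hD
  obtain ⟨κ, hκ, h⟩ := exists_addSubMap_sym2x P Q
  refine ⟨κ, hκ, ?_⟩
  rw [addSubMap_twist_one_twistSym2x]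
  ext i
  rw [congrFun h i]
  fin_cases i <;> simp [twistSym2x] <;> ring

theorem exists_abs_naiveHeight_parallelogram_le (hf : DistinctRoots a b c) : ∃ C : ℝ,
    ∀ D : ℤ, D ≠ 0 → ∀ P Q : (twist a b c D).Point,
      |naiveHeight (P + Q) + naiveHeight (P - Q) - 2 * naiveHeight P - 2 * naiveHeight Q| ≤ C := by
  have := twist_isElliptic hf one_ne_zero
  obtain ⟨C₁, hC₁⟩ := abs_logHeight_addSubMap_sub_two_mul_logHeight_le (twist a b c 1)
  obtain ⟨C₂, hC₂⟩ := exists_abs_logHeight_twistSym2x_sub_le a b c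
  refine ⟨C₁ + 3 * C₂, fun D hD P Q => ?_⟩
  obtain ⟨κ, hκ, h⟩ := exists_addSubMap_twistSym2x hf hD P Q
  have hmap := hC₁ (twistSym2x P Q)
  rw [h, Height.logHeight_smul_eq_logHeight _ hκ] at hmap
  have hPQ := hC₂ D hD P Q
  have hsum := hC₂ D hD (P + Q) (P - Q)
  rw [abs_le] at *
  constructor <;> linarith

theorem exists_canonicalHeight (hf : DistinctRoots a b c) : ∃ C : ℝ, 0 ≤ C ∧ ∀ D : ℤ, D ≠ 0 →
    ∃ H : (twist a b c D).Point → ℝ, IsQuadraticHeight H ∧ ∀ P, |H P - naiveHeight P| ≤ C := by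
  obtain ⟨C, hC⟩ := exists_abs_naiveHeight_parallelogram_le hf
  exact ⟨C, (abs_nonneg _).trans (hC 1 one_ne_zero 0 0), fun D hD =>
    exists_isQuadraticHeight_abs_sub_le naiveHeight_zero naiveHeight_nonneg (hC D hD)⟩

theorem card_le_three_of_twistX_eq (hD : D ≠ 0) (x : ℚ) (S : Finset (twist a b c D).Point)
    (hS : ∀ P ∈ S, twistX P = x) : S.card ≤ 3 := by
  classical
  by_cases h : ∃ P ∈ S, P ≠ 0
  · obtain ⟨P, hP, hP0⟩ := h
    refine (Finset.card_le_card (t := {0, P, -P}) fun Q hQ => ?_).trans Finset.card_le_three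
    by_cases hQ0 : Q = 0
    · simp [hQ0]
    · simpa [hQ0] using eq_or_eq_neg_of_twistX_eq hD hQ0 hP0 ((hS Q hQ).trans (hS P hP).symm)
  · push Not at h
    have hle := Finset.card_le_card (t := {0}) fun P hP => Finset.mem_singleton.2 (h P hP)
    exact hle.trans (by simp)

theorem exists_card_le_of_naiveHeight_le (a b c : ℤ) (B : ℝ) : ∃ K : ℕ, ∀ D : ℤ, D ≠ 0 →
    ∀ S : Finset (twist a b c D).Point, (∀ P ∈ S, naiveHeight P ≤ B) → S.card ≤ K := by
  have hfin : {x : ℚ | Height.logHeight₁ x ≤ B}.Finite :=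
    NumberField.finite_setOfPred_logHeight₁_le ℚ B
  refine ⟨3 * hfin.toFinset.card, fun D hD S hS => ?_⟩
  refine Finset.card_le_mul_card_image_of_maps_to (f := twistX)
    (fun P hP => hfin.mem_toFinset.2 (hS P hP)) 3 fun x _ => ?_
  exact card_le_three_of_twistX_eq hD x _ fun P hP => (Finset.mem_filter.1 hP).2

end Twist

/-! ### Coprime pairs on a fixed twist -/

section PsiTwist

open WeierstrassCurve WeierstrassCurve.Affine

variable {a b c D : ℤ}

theorem exists_intCast_eq_of_eq_squarefree_mul_sq {F : ℤ} (hD : Squarefree D) {t : ℚ}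
    (h : (F : ℚ) = D * t ^ 2) : ∃ n : ℤ, (n : ℚ) = t := by
  have hden : (t.den : ℤ) ^ 2 ∣ D := by
    have hcop : IsCoprime ((t.den : ℤ) ^ 2) (t.num ^ 2) := (Rat.isCoprime_num_den t).symm.pow
    have hcast : (D * t.num ^ 2 : ℚ) = t.den ^ 2 * F := by
      rw [h, ← Rat.mul_den_eq_num]
      ring
    exact hcop.dvd_of_dvd_mul_right ⟨F, by exact_mod_cast hcast⟩
  have hunit : IsUnit (t.den : ℤ) := hD _ (by rwa [← sq])
  exact ⟨t.num, (Rat.den_eq_one_iff t).1 (by simpa using Int.isUnit_iff.1 hunit)⟩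

theorem natAbs_num_den_intCast_div {u v : ℤ} (hv : v ≠ 0) (h : Int.gcd u v = 1) :
    ((u : ℚ) / v).num.natAbs = u.natAbs ∧ ((u : ℚ) / v).den = v.natAbs := by
  rw [← Rat.divInt_eq_div, Rat.num_divInt, Rat.den_divInt, if_neg hv, Int.gcd_comm, h]
  simp [Int.natAbs_mul, Int.natAbs_sign, hv]

theorem eq_or_eq_neg_of_intCast_div_eq {p q : ℤ × ℤ} (hp : Int.gcd p.1 p.2 = 1)
    (hq : Int.gcd q.1 q.2 = 1) (hp0 : p.2 ≠ 0) (hq0 : q.2 ≠ 0)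
    (h : (p.1 : ℚ) / p.2 = q.1 / q.2) : p = q ∨ p = -q := by
  have hden : p.2.natAbs = q.2.natAbs := by
    rw [← (natAbs_num_den_intCast_div hp0 hp).2, h, (natAbs_num_den_intCast_div hq0 hq).2]
  rw [div_eq_div_iff (by exact_mod_cast hp0) (by exact_mod_cast hq0)] at h
  have hcross : p.1 * q.2 = q.1 * p.2 := by exact_mod_cast h
  simp only [Prod.ext_iff, Prod.fst_neg, Prod.snd_neg]
  rcases Int.natAbs_eq_natAbs_iff.1 hden with h2 | h2
  · exact .inl ⟨mul_right_cancel₀ hq0 (by rw [hcross, h2]), h2⟩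
  · exact .inr ⟨mul_right_cancel₀ hq0 (by rw [hcross, h2]; ring), h2⟩

theorem ht_eq_max_logHeight₁ {u v : ℤ} (h : Int.gcd u v = 1) (hv : v ≠ 0) :
    ht u v = max 1 (Height.logHeight₁ ((u : ℚ) / v)) := by
  have hmono : Monotone fun n : ℕ => Real.log n := fun m n hmn => by
    rcases m.eq_zero_or_pos with rfl | hm
    · simpa using Real.log_natCast_nonneg n
    · exact Real.log_le_log (by exact_mod_cast hm) (by exact_mod_cast hmn)
  obtain ⟨hnum, hden⟩ := natAbs_num_den_intCast_div hv h
  rw [Rat.logHeight₁_eq_log_max, hnum, hden, hmono.map_max, ht, ← Int.cast_abs, ← Int.cast_abs,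
    Nat.cast_natAbs, Nat.cast_natAbs]

theorem abs_num_le_exp_logHeight₁ (x : ℚ) : |(x.num : ℝ)| ≤ Real.exp (Height.logHeight₁ x) := by
  have hpos : 0 < max x.num.natAbs x.den := lt_max_of_lt_right x.den_pos
  rw [Rat.logHeight₁_eq_log_max, Real.exp_log (by exact_mod_cast hpos), ← Int.cast_abs,
    ← Nat.cast_natAbs]
  exact_mod_cast le_max_left _ _

theorem den_le_exp_logHeight₁ (x : ℚ) : (x.den : ℝ) ≤ Real.exp (Height.logHeight₁ x) := by
  have hpos : 0 < max x.num.natAbs x.den := lt_max_of_lt_right x.den_pos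
  rw [Rat.logHeight₁_eq_log_max, Real.exp_log (by exact_mod_cast hpos)]
  exact_mod_cast le_max_right _ _

theorem Fbin_eq_pow_mul {u v : ℤ} (hv : v ≠ 0) : (Fbin a b c u v : ℚ) =
    v ^ 4 * ((u / v : ℚ) ^ 3 + a * (u / v : ℚ) ^ 2 + b * (u / v : ℚ) + c) := by
  rw [Fbin]
  push_cast
  field_simp

theorem abs_Fbin_le {u v : ℤ} {M : ℝ} (hu : |(u : ℝ)| ≤ M) (hv : |(v : ℝ)| ≤ M) :
    |(Fbin a b c u v : ℝ)| ≤ (1 + |(a : ℝ)| + |(b : ℝ)| + |(c : ℝ)|) * M ^ 4 := by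
  have hM : 0 ≤ M := (abs_nonneg _).trans hu
  have hcubic : |(u ^ 3 + a * u ^ 2 * v + b * u * v ^ 2 + c * v ^ 3 : ℝ)| ≤
      M ^ 3 + |(a : ℝ)| * M ^ 2 * M + |(b : ℝ)| * M * M ^ 2 + |(c : ℝ)| * M ^ 3 := by
    refine ((abs_add_le _ _).trans (add_le_add_left ((abs_add_le _ _).trans
      (add_le_add_left (abs_add_le _ _) _)) _)).trans ?_
    simp only [abs_mul, abs_pow]
    gcongr
  calc |(Fbin a b c u v : ℝ)|
      = |(v : ℝ)| * |(u ^ 3 + a * u ^ 2 * v + b * u * v ^ 2 + c * v ^ 3 : ℝ)| := by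
        rw [Fbin, ← abs_mul]
        push_cast
        rfl
    _ ≤ M * (M ^ 3 + |(a : ℝ)| * M ^ 2 * M + |(b : ℝ)| * M * M ^ 2 + |(c : ℝ)| * M ^ 3) := by
        gcongr
    _ = _ := by ring

/-- The pairs of `Ψ` whose value `F(u, v)` is `D` times a square, that is, those for which `u / v`
is the `x`-coordinate of a rational point on `Dy² = f(x)`. -/
def PsiTwist (a b c D : ℤ) : Set (ℤ × ℤ) :=
  {p | p ∈ Psi a b c ∧ ∃ n : ℤ, Fbin a b c p.1 p.2 = D * n ^ 2}

theorem snd_ne_zero_of_mem_Psi {p : ℤ × ℤ} (h : p ∈ Psi a b c) : p.2 ≠ 0 := by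
  intro h0
  exact h.2 (by rw [Fbin, h0, zero_mul])

theorem exists_point_of_mem_PsiTwist (hf : DistinctRoots a b c) (hD : D ≠ 0) {p : ℤ × ℤ}
    (hp : p ∈ PsiTwist a b c D) : ∃ P : (twist a b c D).Point, twistX P = p.1 / p.2 := by
  obtain ⟨hΨ, n, hn⟩ := hp
  have hv := snd_ne_zero_of_mem_Psi hΨ
  have hF := Fbin_eq_pow_mul (a := a) (b := b) (c := c) (u := p.1) hv
  rw [hn] at hF
  push_cast at hF
  refine ⟨.some (D * (p.1 / p.2)) (D ^ 2 * n / p.2 ^ 2) (twist_nonsingular hf hD ?_), ?_⟩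
  · calc ((D : ℚ) ^ 2 * n / p.2 ^ 2) ^ 2 = D ^ 3 * (D * n ^ 2) / p.2 ^ 4 := by field_simp
      _ = _ := by rw [hF]; field_simp
  · rw [twistX_some]
    field_simp

theorem Fbin_num_den_eq (hD : D ≠ 0) {X Y : ℚ} (h : (twist a b c D).Nonsingular X Y) :
    (Fbin a b c (X / D).num (X / D).den : ℚ) = D * ((X / D).den ^ 2 * Y / D ^ 2) ^ 2 := by
  have hDq : (D : ℚ) ≠ 0 := Int.cast_ne_zero.2 hD
  have heq := twist_equation_iff.1 h.1
  rw [Fbin_eq_pow_mul (by exact_mod_cast (X / D).den_nz), Int.cast_natCast, Rat.num_div_den]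
  field_simp
  rw [heq]
  ring

theorem num_den_mem_PsiTwist (hD : Squarefree D) {X Y : ℚ}
    (h : (twist a b c D).Nonsingular X Y) (hY : Y ≠ 0) :
    ((X / D).num, ((X / D).den : ℤ)) ∈ PsiTwist a b c D := by
  have hD0 : (D : ℚ) ≠ 0 := Int.cast_ne_zero.2 hD.ne_zero
  have hF := Fbin_num_den_eq hD.ne_zero h
  obtain ⟨n, hn⟩ := exists_intCast_eq_of_eq_squarefree_mul_sq hD hF
  refine ⟨⟨(X / D).reduced, fun h0 => ?_⟩, n, ?_⟩
  · rw [h0, Int.cast_zero, eq_comm] at hF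
    revert hF
    positivity
  · rw [← hn] at hF
    exact_mod_cast hF

theorem exists_log_abs_le_logHeight₁_of_mem_PsiTwist (a b c : ℤ) : ∃ C : ℝ, 0 ≤ C ∧
    ∀ {D : ℤ}, D ≠ 0 → ∀ {p : ℤ × ℤ}, p ∈ PsiTwist a b c D →
      Real.log |(D : ℝ)| ≤ 4 * Height.logHeight₁ (p.1 / p.2 : ℚ) + C := by
  have hconst : (1 : ℝ) ≤ 1 + |(a : ℝ)| + |(b : ℝ)| + |(c : ℝ)| := by
    linarith [abs_nonneg (a : ℝ), abs_nonneg (b : ℝ), abs_nonneg (c : ℝ)]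
  refine ⟨Real.log (1 + |(a : ℝ)| + |(b : ℝ)| + |(c : ℝ)|), Real.log_nonneg hconst, ?_⟩
  rintro D hD p ⟨hΨ, n, hn⟩
  have hn0 : n ≠ 0 := by
    rintro rfl
    exact hΨ.2 (by rw [hn, zero_pow two_ne_zero, mul_zero])
  obtain ⟨hnum, hden⟩ := natAbs_num_den_intCast_div (snd_ne_zero_of_mem_Psi hΨ) hΨ.1
  have hu := abs_num_le_exp_logHeight₁ (p.1 / p.2)
  have hv := den_le_exp_logHeight₁ (p.1 / p.2)
  rw [← Int.cast_abs, ← Nat.cast_natAbs, hnum, Nat.cast_natAbs, Int.cast_abs] at hu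
  rw [hden, Nat.cast_natAbs, Int.cast_abs] at hv
  have hDF : |(D : ℝ)| ≤ |(Fbin a b c p.1 p.2 : ℝ)| := by
    have hsq : 1 ≤ |n ^ 2| := Int.one_le_abs (pow_ne_zero 2 hn0)
    rw [hn]
    exact_mod_cast (abs_mul D _).symm ▸ le_mul_of_one_le_right (abs_nonneg D) hsq
  have hlog := Real.log_le_log (by positivity) (hDF.trans (abs_Fbin_le hu hv))
  rw [Real.log_mul (by positivity) (by positivity), Real.log_pow, Real.log_exp] at hlog
  push_cast at hlog
  linarith

end PsiTwist

/-! ### Uniform height bounds over the family of twists -/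

section UniformHeight

open WeierstrassCurve WeierstrassCurve.Affine

variable {a b c D : ℤ}

theorem some_add_self_eq_zero_iff {X Y : ℚ} (h : (twist a b c D).Nonsingular X Y) :
    Point.some X Y h + .some X Y h = 0 ↔ Y = 0 := by
  have hY : Y = (twist a b c D).negY X Y ↔ Y = 0 := by
    rw [twist_negY, self_eq_neg]
  refine ⟨fun h0 => ?_, fun h0 => Point.add_self_of_Y_eq (hY.2 h0)⟩
  by_contra hne
  rw [Point.add_self_of_Y_ne (hY.not.2 hne)] at h0
  exact Point.some_ne_zero _ h0

theorem exists_log_abs_le_naiveHeight (a b c : ℤ) : ∃ C : ℝ, 0 ≤ C ∧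
    ∀ {D : ℤ}, Squarefree D → ∀ P : (twist a b c D).Point, P + P ≠ 0 →
      Real.log |(D : ℝ)| ≤ 4 * naiveHeight P + C := by
  obtain ⟨C, hC, hlog⟩ := exists_log_abs_le_logHeight₁_of_mem_PsiTwist a b c
  refine ⟨C, hC, fun {D} hD P hP => ?_⟩
  rcases P with _ | ⟨X, Y, h⟩
  · exact absurd (add_zero 0) hP
  have hY : Y ≠ 0 := (some_add_self_eq_zero_iff h).not.1 hP
  simpa [naiveHeight, Rat.num_div_den] using hlog hD.ne_zero (num_den_mem_PsiTwist hD h hY)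

theorem exists_uniform_canonicalHeight (hf : DistinctRoots a b c) :
    ∃ (C c₀ : ℝ) (K : ℕ), 0 ≤ C ∧ 0 < c₀ ∧ ∀ D : ℤ, Squarefree D →
      ∃ H : (twist a b c D).Point → ℝ, IsQuadraticHeight H ∧ (∀ P, |H P - naiveHeight P| ≤ C) ∧
        (∀ P, H P < c₀ * max 1 (Real.log |(D : ℝ)|) → IsOfFinAddOrder P) ∧
        ∀ S : Finset (twist a b c D).Point, (∀ P ∈ S, IsOfFinAddOrder P) → S.card ≤ K := by
  obtain ⟨C, hC, hH⟩ := exists_canonicalHeight hf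
  obtain ⟨K, hK⟩ := exists_card_le_of_naiveHeight_le a b c (1 + C)
  obtain ⟨C', hC', hlog⟩ := exists_log_abs_le_naiveHeight a b c
  refine ⟨C, 1 / ((1 + C' + 4 * C) * (K + 1) ^ 2 + 4), K, hC, by positivity, fun D hD => ?_⟩
  obtain ⟨H, hquad, hnaive⟩ := hH D hD.ne_zero
  have hcard (S : Finset (twist a b c D).Point) (hS : ∀ P ∈ S, H P ≤ 1) : S.card ≤ K :=
    hK D hD.ne_zero S fun P hP => by linarith [hS P hP, abs_le.1 (hnaive P)]
  refine ⟨H, hquad, hnaive, fun P hP => ?_, fun S hS => hcard S fun P hP => by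
    rw [hquad.map_of_isOfFinAddOrder (hS P hP)]
    exact zero_le_one⟩
  by_contra htors
  have hdouble : P + P ≠ 0 := fun h0 =>
    htors (isOfFinAddOrder_iff_nsmul_eq_zero.2 ⟨2, two_pos, (two_nsmul P).trans h0⟩)
  have hlow := hquad.one_le_sq_mul_of_not_isOfFinAddOrder hcard htors
  have hmax : max 1 (Real.log |(D : ℝ)|) ≤ 4 * H P + (1 + C' + 4 * C) :=
    max_le (by linarith [hquad.nonneg P])
      (by linarith [hlog hD P hdouble, abs_le.1 (hnaive P)])
  rw [div_mul_eq_mul_div, one_mul, lt_div_iff₀ (by positivity)] at hP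
  have hscale := mul_le_mul_of_nonneg_left hlow (by positivity : 0 ≤ 1 + C' + 4 * C)
  linarith

end UniformHeight

section Counting

open Finset

variable {a b c D : ℤ}

theorem one_le_ht (u v : ℤ) : 1 ≤ ht u v := le_max_left _ _

theorem ht_eq_max_naiveHeight {p : ℤ × ℤ} (hp : p ∈ PsiTwist a b c D)
    {P : (twist a b c D).Point} (hP : twistX P = p.1 / p.2) :
    ht p.1 p.2 = max 1 (naiveHeight P) := by
  rw [naiveHeight, hP, ht_eq_max_logHeight₁ hp.1.1 (snd_ne_zero_of_mem_Psi hp.1)]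

theorem exists_mul_max_log_le_ht (a b c : ℤ) : ∃ δ : ℝ, 0 < δ ∧ δ ≤ 1 ∧
    ∀ {D : ℤ}, D ≠ 0 → ∀ {p : ℤ × ℤ}, p ∈ PsiTwist a b c D →
      δ * max 1 (Real.log |(D : ℝ)|) ≤ ht p.1 p.2 := by
  obtain ⟨C, hC, hlog⟩ := exists_log_abs_le_logHeight₁_of_mem_PsiTwist a b c
  refine ⟨1 / (4 + C), by positivity, by rw [div_le_one (by positivity)]; linarith,
    fun hD p hp => ?_⟩
  have hle := hlog hD hp
  have hone := one_le_ht p.1 p.2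
  have hht : Height.logHeight₁ (p.1 / p.2 : ℚ) ≤ ht p.1 p.2 := by
    rw [ht_eq_max_logHeight₁ hp.1.1 (snd_ne_zero_of_mem_Psi hp.1)]
    exact le_max_right _ _
  rw [div_mul_eq_mul_div, one_mul, div_le_iff₀ (by positivity)]
  exact max_le (by nlinarith) (by nlinarith)

theorem card_le_two_mul_card_image_of_mem_Psi {ι : Type*} [DecidableEq ι] {T : Finset (ℤ × ℤ)}
    (hT : ∀ p ∈ T, p ∈ Psi a b c) (g : ℤ × ℤ → ι)
    (hg : ∀ p ∈ T, ∀ q ∈ T, g p = g q → (p.1 : ℚ) / p.2 = q.1 / q.2) :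
    #T ≤ 2 * #(T.image g) := by
  refine card_le_mul_card_image T 2 fun i hi => ?_
  obtain ⟨q, hq, rfl⟩ := mem_image.1 hi
  refine (card_le_card (t := {q, -q}) fun p hp => ?_).trans card_le_two
  obtain ⟨hp, hpq⟩ := mem_filter.1 hp
  simpa using eq_or_eq_neg_of_intCast_div_eq (hT p hp).1 (hT q hq).1
    (snd_ne_zero_of_mem_Psi (hT p hp)) (snd_ne_zero_of_mem_Psi (hT q hq)) (hg p hp q hq hpq)

theorem exists_card_le_of_ht_le (hf : DistinctRoots a b c) {r : ℕ}
    (hr : ∀ D : ℤ, D ≠ 0 → ¬∃ P : Fin (r + 1) → (twist a b c D).Point, LinearIndependent ℤ P) :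
    ∃ C : ℝ, 0 ≤ C ∧ ∀ D : ℤ, Squarefree D → ∀ B : ℝ, 1 ≤ B →
      ∀ T : Finset (ℤ × ℤ), (∀ p ∈ T, p ∈ PsiTwist a b c D) →
        (∀ p ∈ T, ht p.1 p.2 ≤ B * max 1 (Real.log |(D : ℝ)|)) →
          (#T : ℝ) ≤ C * B ^ ((r : ℝ) / 2) := by
  classical
  obtain ⟨C, c₀, K, hC, hc₀, hH⟩ := exists_uniform_canonicalHeight hf
  refine ⟨2 * (K * (2 * √((1 + C) / c₀) + 1) ^ r), by positivity, fun D hD B hB T hT hTB => ?_⟩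
  obtain ⟨H, hquad, hnaive, hlow, htors⟩ := hH D hD
  set L := max 1 (Real.log |(D : ℝ)|)
  have hL : 1 ≤ L := le_max_left _ _
  choose! pt hpt using fun p (hp : p ∈ T) => exists_point_of_mem_PsiTwist hf hD.ne_zero (hT p hp)
  have hpoints := hquad.card_le_of_forall_le_real (hr D hD.ne_zero) (by positivity) hlow htors
    (by positivity : 0 ≤ (1 + C) * (B * L)) (T.image pt) fun P hP => by
      obtain ⟨p, hp, rfl⟩ := mem_image.1 hP
      have hle := hTB p hp
      rw [ht_eq_max_naiveHeight (hT p hp) (hpt p hp)] at hle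
      have hBL : 1 ≤ B * L := one_le_mul_of_one_le_of_one_le hB hL
      nlinarith [abs_le.1 (hnaive (pt p)), le_max_right 1 (naiveHeight (pt p))]
  have hpairs := card_le_two_mul_card_image_of_mem_Psi (fun p hp => (hT p hp).1) pt
    fun p hp q hq hpq => by rw [← hpt p hp, ← hpt q hq, hpq]
  have hratio : √((1 + C) * (B * L) / (c₀ * L)) = √((1 + C) / c₀) * √B := by
    rw [← Real.sqrt_mul (by positivity)]
    congr 1
    field_simp
  have hsqrt : 1 ≤ √B := Real.one_le_sqrt.2 hB
  calc (#T : ℝ) ≤ 2 * #(T.image pt) := by exact_mod_cast hpairs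
    _ ≤ 2 * (K * (2 * √((1 + C) / c₀) * √B + 1 * √B) ^ r) := by
        rw [hratio, ← mul_assoc] at hpoints
        refine mul_le_mul_of_nonneg_left (hpoints.trans ?_) two_pos.le
        gcongr
        linarith
    _ = 2 * (K * (2 * √((1 + C) / c₀) + 1) ^ r) * B ^ ((r : ℝ) / 2) := by
        rw [← add_mul, mul_pow, Real.rpow_div_two_eq_sqrt _ (by linarith), Real.rpow_natCast]
        ring

theorem sum_rpow_neg_le_of_dyadic {ι : Type*} {σ j A : ℝ} (hj : 0 ≤ j) {g : ι → ℝ}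
    {S : Finset ι} {n : ℕ} (hlow : ∀ x ∈ S, 2 ^ n ≤ g x)
    (hcard : (#S : ℝ) ≤ A * (2 ^ (n + 1)) ^ σ) :
    ∑ x ∈ S, g x ^ (-j) ≤ A * 2 ^ σ * ((2 : ℝ) ^ (σ - j)) ^ n := by
  calc ∑ x ∈ S, g x ^ (-j) ≤ #S • ((2 : ℝ) ^ n) ^ (-j) := sum_le_card_nsmul _ _ _ fun x hx =>
        Real.rpow_le_rpow_of_nonpos (by positivity) (hlow x hx) (by linarith)
    _ ≤ A * (2 ^ (n + 1)) ^ σ * ((2 : ℝ) ^ n) ^ (-j) := by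
        rw [nsmul_eq_mul]
        gcongr
    _ = A * 2 ^ σ * ((2 : ℝ) ^ (σ - j)) ^ n := by
        rw [pow_succ, Real.mul_rpow (by positivity) two_pos.le, sub_eq_add_neg,
          Real.rpow_add two_pos, mul_pow, ← Real.rpow_natCast_mul two_pos.le,
          ← Real.rpow_natCast_mul two_pos.le, ← Real.rpow_mul_natCast two_pos.le,
          ← Real.rpow_mul_natCast two_pos.le, mul_comm (n : ℝ), mul_comm (n : ℝ)]
        ring

theorem exists_sum_rpow_neg_le {σ j : ℝ} (hj : 0 ≤ j) (hσj : σ < j) :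
    ∃ M : ℝ, 0 ≤ M ∧ ∀ {ι : Type*} (T : Finset ι) (g : ι → ℝ) (A : ℝ), 0 ≤ A →
      (∀ x ∈ T, 1 ≤ g x) →
      (∀ B : ℝ, 1 ≤ B → ∀ S ⊆ T, (∀ x ∈ S, g x ≤ B) → (#S : ℝ) ≤ A * B ^ σ) →
      ∑ x ∈ T, g x ^ (-j) ≤ A * M := by
  have hratio : (2 : ℝ) ^ (σ - j) < 1 :=
    Real.rpow_lt_one_of_one_lt_of_neg one_lt_two (by linarith)
  have hgeom := summable_geometric_of_lt_one (by positivity) hratio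
  refine ⟨2 ^ σ * ∑' n : ℕ, ((2 : ℝ) ^ (σ - j)) ^ n, by positivity, fun T g A hA hg hcard => ?_⟩
  choose! n hn using fun x (hx : x ∈ T) => exists_nat_pow_near (hg x hx) one_lt_two
  rw [← sum_fiberwise_of_maps_to (g := n) fun x hx => mem_image_of_mem n hx]
  calc ∑ m ∈ T.image n, ∑ x ∈ T with n x = m, g x ^ (-j)
      ≤ ∑ m ∈ T.image n, A * 2 ^ σ * ((2 : ℝ) ^ (σ - j)) ^ m := by
        refine sum_le_sum fun m _ => sum_rpow_neg_le_of_dyadic hj (fun x hx => ?_)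
          (hcard _ (one_le_pow₀ one_le_two) _ (filter_subset _ _) fun x hx => ?_)
        all_goals obtain ⟨hxT, rfl⟩ := mem_filter.1 hx
        exacts [(hn x hxT).1, (hn x hxT).2.le]
    _ ≤ A * (2 ^ σ * ∑' n : ℕ, ((2 : ℝ) ^ (σ - j)) ^ n) := by
        rw [← mul_sum, mul_assoc]
        gcongr
        exact hgeom.sum_le_tsum _ fun _ _ => by positivity

theorem exists_sum_ht_rpow_neg_le (hf : DistinctRoots a b c) {r : ℕ}
    (hr : ∀ D : ℤ, D ≠ 0 → ¬∃ P : Fin (r + 1) → (twist a b c D).Point, LinearIndependent ℤ P)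
    {j : ℝ} (hj : (r : ℝ) / 2 < j) :
    ∃ C : ℝ, 0 ≤ C ∧ ∀ D : ℤ, Squarefree D →
      ∀ T : Finset (ℤ × ℤ), (∀ p ∈ T, p ∈ PsiTwist a b c D) →
        ∑ p ∈ T, ht p.1 p.2 ^ (-j) ≤ C * max 1 (Real.log |(D : ℝ)|) ^ (-j) := by
  obtain ⟨C, hC, hcard⟩ := exists_card_le_of_ht_le hf hr
  obtain ⟨δ, hδ, hδ1, hlow⟩ := exists_mul_max_log_le_ht a b c
  obtain ⟨M, hM, hsum⟩ := exists_sum_rpow_neg_le ((by positivity : 0 ≤ (r : ℝ) / 2).trans hj.le) hj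
  refine ⟨C * M * δ ^ (-j), by positivity, fun D hD T hT => ?_⟩
  set L := max 1 (Real.log |(D : ℝ)|)
  have hL : 0 < L := zero_lt_one.trans_le (le_max_left _ _)
  have hδL : 0 < δ * L := mul_pos hδ hL
  have hscaled := hsum T (fun p => ht p.1 p.2 / (δ * L)) C hC
    (fun p hp => (one_le_div hδL).2 (hlow hD.ne_zero (hT p hp)))
    fun B hB S hST hSB => hcard D hD B hB S (fun p hp => hT p (hST hp)) fun p hp => by
      refine ((div_le_iff₀ hδL).1 (hSB p hp)).trans ?_
      gcongr
      exact mul_le_of_le_one_left (by positivity) hδ1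
  calc ∑ p ∈ T, ht p.1 p.2 ^ (-j)
      = (δ * L) ^ (-j) * ∑ p ∈ T, (ht p.1 p.2 / (δ * L)) ^ (-j) := by
        rw [mul_sum]
        refine sum_congr rfl fun p _ => ?_
        have hnonneg : 0 ≤ ht p.1 p.2 := zero_le_one.trans (one_le_ht _ _)
        rw [← Real.mul_rpow hδL.le (by positivity), mul_div_cancel₀ _ hδL.ne']
    _ ≤ (δ * L) ^ (-j) * (C * M) := by gcongr
    _ = C * M * δ ^ (-j) * L ^ (-j) := by
        rw [Real.mul_rpow hδ.le (by positivity)]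
        ring

theorem summable_nat_inv_mul_max_log_rpow_neg {j : ℝ} (hj : 1 < j) :
    Summable fun n : ℕ => (n : ℝ)⁻¹ * max 1 (Real.log n) ^ (-j) := by
  rw [← summable_condensed_iff_of_nonneg (fun n => by positivity)]
  · have hpow : Summable fun n : ℕ => Real.log 2 ^ (-j) * (n : ℝ) ^ (-j) :=
      (Real.summable_nat_rpow.2 (by linarith)).mul_left _
    rw [← summable_nat_add_iff 1] at hpow ⊢
    refine hpow.of_nonneg_of_le (fun n => by positivity) fun n => ?_
    have hlog2 : 0 < Real.log 2 := Real.log_pos one_lt_two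
    rw [Nat.cast_pow, Nat.cast_ofNat, mul_inv_cancel_left₀ (by positivity), Real.log_pow,
      mul_comm ((n + 1 : ℕ) : ℝ), ← Real.mul_rpow hlog2.le (by positivity)]
    exact Real.rpow_le_rpow_of_nonpos (by positivity) (le_max_right _ _) (by linarith)
  · intro m n hm hmn
    have hm' : (0 : ℝ) < m := by exact_mod_cast hm
    have hmn' : (m : ℝ) ≤ n := by exact_mod_cast hmn
    have hlog : max 1 (Real.log m) ≤ max 1 (Real.log n) :=
      max_le_max le_rfl (Real.log_le_log hm' hmn')
    exact mul_le_mul (inv_anti₀ hm' hmn')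
      (Real.rpow_le_rpow_of_nonpos (by positivity) hlog (by linarith)) (by positivity)
      (by positivity)

theorem summable_int_inv_mul_max_log_rpow_neg {j : ℝ} (hj : 1 < j) :
    Summable fun D : ℤ => |(D : ℝ)|⁻¹ * max 1 (Real.log |(D : ℝ)|) ^ (-j) := by
  have hnat := summable_nat_inv_mul_max_log_rpow_neg hj
  exact .of_nat_of_neg (by simpa using hnat) (by simpa using hnat)

end Counting

/-! ### Convergence of `Q_E` under a rank bound -/

section Lattice

open Finset

variable {a b c : ℤ} {ω : (d d' : ℕ) → ZMod (d ^ 2) → ℤ × ℤ}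

theorem exists_mem_latL_abs_le {d d' : ℕ} (hd : 0 < d) (hd' : 0 < d') (α : ZMod (d ^ 2)) :
    ∃ p ∈ latL d d' α, p ≠ 0 ∧ |p.1| ≤ d * d' ∧ |p.2| ≤ d * d' := by
  -- Thue's lemma: a box of sides `dd'` and `d / d'` has more than `d²` points.
  have : NeZero (d ^ 2) := ⟨by positivity⟩
  let φ : ℕ × ℕ → ZMod (d ^ 2) := fun p => p.1 - α * (d' ^ 2 * p.2)
  have hcard : #(univ : Finset (ZMod (d ^ 2))) < #(range (d * d' + 1) ×ˢ range (d / d' + 1)) := by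
    rw [card_univ, ZMod.card, card_product, card_range, card_range]
    calc d ^ 2 = d * d := sq d
      _ < d * (d' * (d / d' + 1)) := Nat.mul_lt_mul_of_pos_left (Nat.lt_mul_div_succ d hd') hd
      _ = d * d' * (d / d' + 1) := by ring
      _ ≤ _ := Nat.mul_le_mul_right _ (Nat.le_succ _)
  obtain ⟨p, hp, q, hq, hne, hφ⟩ :=
    exists_ne_map_eq_of_card_lt_of_maps_to hcard (f := φ) fun _ _ => mem_univ _
  simp only [mem_product, mem_range] at hp hq
  refine ⟨((p.1 : ℤ) - q.1, (d' : ℤ) ^ 2 * ((p.2 : ℤ) - q.2)), ⟨?_, Dvd.intro _ rfl⟩, ?_, ?_, ?_⟩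
  · push_cast
    linear_combination hφ
  · intro h0
    obtain ⟨h1, h2⟩ := Prod.ext_iff.1 h0
    have h2' := (mul_eq_zero.1 h2).resolve_left (by positivity)
    simp only [Prod.fst_zero] at h1
    exact hne (by ext <;> omega)
  · rw [abs_le, ← Nat.cast_mul]
    constructor <;> omega
  · have hdiff : |(p.2 : ℤ) - q.2| ≤ (d / d' : ℕ) := by
      rw [abs_le]
      constructor <;> omega
    calc |(d' : ℤ) ^ 2 * ((p.2 : ℤ) - q.2)| = d' ^ 2 * |(p.2 : ℤ) - q.2| := by
          rw [abs_mul, abs_of_nonneg (by positivity)]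
      _ ≤ d' ^ 2 * (d / d' : ℕ) := by gcongr
      _ = d' * (d' * (d / d' : ℕ)) := by ring
      _ ≤ d' * d := by
          gcongr
          exact_mod_cast Nat.mul_div_le d d'
      _ = d * d' := mul_comm _ _

theorem IsShortestChoice.sq_add_sq_le (hω : IsShortestChoice a b c ω) {d d' : ℕ} (hd : 0 < d)
    (hd' : 0 < d') (hdd' : Nat.Coprime d d') {α : ZMod (d ^ 2)} (hα : α ∈ OmegaSet a b c d) :
    (ω d d' α).1 ^ 2 + (ω d d' α).2 ^ 2 ≤ 2 * (d * d' : ℤ) ^ 2 := by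
  obtain ⟨p, hp, hp0, h1, h2⟩ := exists_mem_latL_abs_le hd hd' α
  have hshort := (hω d d' hd hd' hdd' α hα).2.2 p hp hp0
  linarith [sq_le_sq.2 (h1.trans (le_abs_self _)), sq_le_sq.2 (h2.trans (le_abs_self _))]

theorem sq_dvd_cubic_of_mem_latL {d d' : ℕ} {α : ZMod (d ^ 2)} (hα : α ∈ OmegaSet a b c d)
    {p : ℤ × ℤ} (hp : p ∈ latL d d' α) :
    (d : ℤ) ^ 2 ∣ p.1 ^ 3 + a * p.1 ^ 2 * p.2 + b * p.1 * p.2 ^ 2 + c * p.2 ^ 3 := by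
  have hroot : α ^ 3 + a * α ^ 2 + b * α + c = 0 := hα
  rw [← Nat.cast_pow, ← ZMod.intCast_zmod_eq_zero_iff_dvd]
  push_cast
  rw [hp.1]
  linear_combination (p.2 : ZMod (d ^ 2)) ^ 3 * hroot

theorem sq_dvd_Fbin_of_mem_latL {d d' : ℕ} {α : ZMod (d ^ 2)} (hα : α ∈ OmegaSet a b c d)
    {p : ℤ × ℤ} (hp : p ∈ latL d d' α) : ((d * d' : ℕ) : ℤ) ^ 2 ∣ Fbin a b c p.1 p.2 := by
  rw [Fbin, Nat.cast_mul, mul_pow, mul_comm]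
  exact mul_dvd_mul hp.2 (sq_dvd_cubic_of_mem_latL hα hp)

theorem isCoprime_snd_of_mem_latL {d d' : ℕ} {α : ZMod (d ^ 2)} (hα : α ∈ OmegaSet a b c d)
    {p : ℤ × ℤ} (hp : p ∈ latL d d' α) (hcop : Int.gcd p.1 p.2 = 1) :
    IsCoprime (d : ℤ) p.2 := by
  have hcubic : IsCoprime (p.1 ^ 3 + a * p.1 ^ 2 * p.2 + b * p.1 * p.2 ^ 2 + c * p.2 ^ 3) p.2 := by
    have hpow : IsCoprime (p.1 ^ 3) p.2 := (Int.isCoprime_iff_gcd_eq_one.2 hcop).pow_left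
    have hadd := hpow.add_mul_right_left (a * p.1 ^ 2 + b * p.1 * p.2 + c * p.2 ^ 2)
    rwa [show p.1 ^ 3 + (a * p.1 ^ 2 + b * p.1 * p.2 + c * p.2 ^ 2) * p.2 =
      p.1 ^ 3 + a * p.1 ^ 2 * p.2 + b * p.1 * p.2 ^ 2 + c * p.2 ^ 3 by ring] at hadd
  exact hcubic.of_isCoprime_of_dvd_left
    ((dvd_pow_self _ two_ne_zero).trans (sq_dvd_cubic_of_mem_latL hα hp))

theorem gcd_mul_natAbs_snd_of_mem_latL {d d' : ℕ} {α : ZMod (d ^ 2)}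
    (hα : α ∈ OmegaSet a b c d) {p : ℤ × ℤ} (hp : p ∈ latL d d' α)
    (hcop : Int.gcd p.1 p.2 = 1) : Nat.gcd (d * d') p.2.natAbs = d' := by
  have hd : Nat.Coprime d p.2.natAbs :=
    Int.isCoprime_iff_gcd_eq_one.1 (isCoprime_snd_of_mem_latL hα hp hcop)
  rw [hd.gcd_mul_left_cancel]
  exact Nat.gcd_eq_left (Int.natCast_dvd.1 ((dvd_pow_self _ two_ne_zero).trans hp.2))

theorem isUnit_intCast_of_isCoprime {d : ℕ} {n : ℤ} (h : IsCoprime (d : ℤ) n) :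
    IsUnit (n : ZMod (d ^ 2)) := by
  rw [ZMod.coe_int_isUnit_iff_isCoprime, Nat.cast_pow]
  exact h.pow_left

theorem eq_of_mem_latL {d d' : ℕ} {α β : ZMod (d ^ 2)} {p : ℤ × ℤ} (hp : p ∈ latL d d' α)
    (hp' : p ∈ latL d d' β) (hcop : IsCoprime (d : ℤ) p.2) : α = β :=
  (isUnit_intCast_of_isCoprime hcop).mul_right_cancel (hp.1.symm.trans hp'.1)

theorem IsShortestChoice.mem_latL (hω : IsShortestChoice a b c ω)
    {x : Σ d : ℕ, ℕ × ZMod (d ^ 2)} (hx : x ∈ QIdx a b c ω) :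
    ω x.1 x.2.1 x.2.2 ∈ latL x.1 x.2.1 x.2.2 :=
  (hω _ _ hx.1 hx.2.1 hx.2.2.1 _ hx.2.2.2.1).1

theorem IsShortestChoice.eq_of_eq (hω : IsShortestChoice a b c ω)
    {x y : Σ d : ℕ, ℕ × ZMod (d ^ 2)} (hx : x ∈ QIdx a b c ω) (hy : y ∈ QIdx a b c ω)
    (hxy : ω x.1 x.2.1 x.2.2 = ω y.1 y.2.1 y.2.2) (hmul : x.1 * x.2.1 = y.1 * y.2.1) :
    x = y := by
  have hxL := hω.mem_latL hx
  have hyL := hω.mem_latL hy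
  rw [← hxy] at hyL
  have hΨ := hx.2.2.2.2
  have hxα := hx.2.2.2.1
  have hsnd : x.2.1 = y.2.1 := by
    rw [← gcd_mul_natAbs_snd_of_mem_latL hxα hxL hΨ.1,
      ← gcd_mul_natAbs_snd_of_mem_latL hy.2.2.2.1 hyL hΨ.1, hmul]
  obtain ⟨d, d', α⟩ := x
  obtain ⟨e, e', β⟩ := y
  obtain rfl : d' = e' := hsnd
  obtain rfl : d = e := Nat.eq_of_mul_eq_mul_right hx.2.1 hmul
  obtain rfl : α = β := eq_of_mem_latL hxL hyL (isCoprime_snd_of_mem_latL hxα hxL hΨ.1)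
  rfl

theorem exists_eq_squarefree_mul_sq {m : ℤ} (hm : m ≠ 0) :
    ∃ (D : ℤ) (s : ℕ), Squarefree D ∧ m = D * (s : ℤ) ^ 2 := by
  obtain ⟨A, B, hAB, hA⟩ := Nat.sq_mul_squarefree m.natAbs
  have hm' : m = m.sign * (B ^ 2 * A : ℕ) := by rw [hAB, Int.sign_mul_natAbs]
  refine ⟨m.sign * A, B, ?_, ?_⟩
  · rw [← Int.squarefree_natAbs, Int.natAbs_mul, Int.natAbs_sign_of_ne_zero hm, one_mul]
    exact hA
  · push_cast at hm'
    linear_combination hm'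

theorem IsShortestChoice.exists_Fbin_eq (hω : IsShortestChoice a b c ω)
    {x : Σ d : ℕ, ℕ × ZMod (d ^ 2)} (hx : x ∈ QIdx a b c ω) :
    ∃ (D : ℤ) (s : ℕ), Squarefree D ∧
      Fbin a b c (ω x.1 x.2.1 x.2.2).1 (ω x.1 x.2.1 x.2.2).2 =
        ((x.1 * x.2.1 : ℕ) : ℤ) ^ 2 * (D * (s : ℤ) ^ 2) := by
  obtain ⟨m, hm⟩ := sq_dvd_Fbin_of_mem_latL hx.2.2.2.1 (hω.mem_latL hx)
  have hm0 : m ≠ 0 := by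
    rintro rfl
    exact hx.2.2.2.2.2 (by rw [hm, mul_zero])
  obtain ⟨D, s, hD, rfl⟩ := exists_eq_squarefree_mul_sq hm0
  exact ⟨D, s, hD, hm⟩

theorem IsShortestChoice.eq_of_Fbin_eq (hω : IsShortestChoice a b c ω)
    {x y : Σ d : ℕ, ℕ × ZMod (d ^ 2)} (hx : x ∈ QIdx a b c ω) (hy : y ∈ QIdx a b c ω)
    (hxy : ω x.1 x.2.1 x.2.2 = ω y.1 y.2.1 y.2.2) {m : ℤ}
    (hmx : Fbin a b c (ω x.1 x.2.1 x.2.2).1 (ω x.1 x.2.1 x.2.2).2 =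
      ((x.1 * x.2.1 : ℕ) : ℤ) ^ 2 * m)
    (hmy : Fbin a b c (ω y.1 y.2.1 y.2.2).1 (ω y.1 y.2.1 y.2.2).2 =
      ((y.1 * y.2.1 : ℕ) : ℤ) ^ 2 * m) : x = y := by
  have hm0 : m ≠ 0 := by
    rintro rfl
    exact hx.2.2.2.2.2 (by rw [hmx, mul_zero])
  rw [hxy] at hmx
  have hsq := mul_right_cancel₀ hm0 (hmx.symm.trans hmy)
  exact hω.eq_of_eq hx hy hxy (Nat.pow_left_injective two_ne_zero (by exact_mod_cast hsq))

end Lattice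

section Convergence

open Finset

variable {a b c : ℤ} {ω : (d d' : ℕ) → ZMod (d ^ 2) → ℤ × ℤ} {j k : ℝ}

theorem ht_le_two_mul_max_log {u v : ℤ} {t : ℝ} (ht : 1 ≤ t)
    (huv : (u : ℝ) ^ 2 + (v : ℝ) ^ 2 ≤ 2 * t ^ 2) : _root_.ht u v ≤ 2 * max 1 (Real.log t) := by
  have hone := le_max_left 1 (Real.log t)
  have hlog (w : ℤ) (hw : (w : ℝ) ^ 2 ≤ 2 * t ^ 2) :
      Real.log |(w : ℝ)| ≤ 2 * max 1 (Real.log t) := by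
    rcases eq_or_ne w 0 with rfl | hw0
    · simp
    have hexp : 2 ≤ Real.exp 1 := by linarith [Real.add_one_le_exp (1 : ℝ)]
    have hwt : |(w : ℝ)| ≤ Real.exp 1 * t :=
      (abs_le_of_sq_le_sq (b := 2 * t) (by nlinarith) (by positivity)).trans (by gcongr)
    have hle := Real.log_le_log (by positivity) hwt
    rw [Real.log_mul (Real.exp_pos 1).ne' (by positivity), Real.log_exp] at hle
    linarith [le_max_right 1 (Real.log t)]
  exact max_le (by linarith) (max_le (hlog u (by linarith [sq_nonneg (v : ℝ)]))
    (hlog v (by linarith [sq_nonneg (u : ℝ)])))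

theorem rpow_mul_rpow_neg_le {t m n A : ℝ} (ht : 0 ≤ t) (hm : 1 ≤ m) (hn : 0 < n) (hA : 0 ≤ A)
    (hk : 1 ≤ k) (h : t ^ 2 * m ≤ A * n ^ 4) :
    t ^ (2 * k) * n ^ (-(4 * k)) ≤ A ^ k * m⁻¹ := by
  have hpow : t ^ (2 * k) * m ^ k ≤ A ^ k * n ^ (4 * k) := by
    have hrpow := Real.rpow_le_rpow (by positivity) h (by linarith : 0 ≤ k)
    rwa [Real.mul_rpow (by positivity) (by positivity), Real.mul_rpow hA (by positivity),
      ← Real.rpow_natCast_mul ht, ← Real.rpow_natCast_mul hn.le] at hrpow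
  rw [Real.rpow_neg hn.le, ← div_eq_mul_inv, ← div_eq_mul_inv, div_le_div_iff₀ (by positivity)
    (by positivity)]
  refine le_trans ?_ hpow
  gcongr
  exact Real.self_le_rpow_of_one_le hm hk

theorem QTerm_nonneg (j k : ℝ) (ω : (d d' : ℕ) → ZMod (d ^ 2) → ℤ × ℤ)
    (x : Σ d : ℕ, ℕ × ZMod (d ^ 2)) : 0 ≤ QTerm j k ω x := by
  rw [QTerm]
  positivity

theorem IsShortestChoice.QTerm_le (hω : IsShortestChoice a b c ω) (hj : 0 ≤ j) (hk : 1 ≤ k)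
    {x : Σ d : ℕ, ℕ × ZMod (d ^ 2)} (hx : x ∈ QIdx a b c ω) {m : ℤ}
    (hm : Fbin a b c (ω x.1 x.2.1 x.2.2).1 (ω x.1 x.2.1 x.2.2).2 =
      ((x.1 * x.2.1 : ℕ) : ℤ) ^ 2 * m) :
    QTerm j k ω x ≤ (1 + |(a : ℝ)| + |(b : ℝ)| + |(c : ℝ)|) ^ k * 2 ^ j *
      (|(m : ℝ)|⁻¹ * ht (ω x.1 x.2.1 x.2.2).1 (ω x.1 x.2.1 x.2.2).2 ^ (-j)) := by
  obtain ⟨hd, hd', hdd', hα, hΨ⟩ := hx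
  have hshort := hω.sq_add_sq_le hd hd' hdd' hα
  rw [QTerm]
  set p := ω x.1 x.2.1 x.2.2
  set t : ℝ := (x.1 : ℝ) * x.2.1
  set A := 1 + |(a : ℝ)| + |(b : ℝ)| + |(c : ℝ)|
  set n := √((p.1 : ℝ) ^ 2 + (p.2 : ℝ) ^ 2)
  have ht1 : 1 ≤ t := by
    have hpos : 1 ≤ x.1 * x.2.1 := Nat.mul_pos hd hd'
    simp only [t]
    exact_mod_cast hpos
  have hm1 : 1 ≤ |(m : ℝ)| := by
    have hm0 : m ≠ 0 := by
      rintro rfl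
      exact hΨ.2 (by rw [hm, mul_zero])
    exact_mod_cast Int.one_le_abs hm0
  have hn : 0 < n := by
    have : (p.2 : ℝ) ≠ 0 := by exact_mod_cast snd_ne_zero_of_mem_Psi hΨ
    positivity
  have hmain : t ^ (2 * k) * n ^ (-(4 * k)) ≤ A ^ k * |(m : ℝ)|⁻¹ := by
    refine rpow_mul_rpow_neg_le (by positivity) hm1 hn (by positivity) hk ?_
    have hF := abs_Fbin_le (a := a) (b := b) (c := c) (M := n)
      (Real.abs_le_sqrt (le_add_of_nonneg_right (sq_nonneg (p.2 : ℝ))))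
      (Real.abs_le_sqrt (le_add_of_nonneg_left (sq_nonneg (p.1 : ℝ))))
    rwa [hm, Int.cast_mul, abs_mul, Int.cast_pow, abs_pow, Int.cast_natCast, Nat.abs_cast,
      Nat.cast_mul] at hF
  have hlog : max 1 (Real.log t) ^ (-j) ≤ 2 ^ j * ht p.1 p.2 ^ (-j) := by
    have hht : ht p.1 p.2 ≤ 2 * max 1 (Real.log t) :=
      ht_le_two_mul_max_log ht1 (by simp only [t]; exact_mod_cast hshort)
    have hpos : 0 < ht p.1 p.2 := zero_lt_one.trans_le (one_le_ht _ _)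
    have hrpow := Real.rpow_le_rpow_of_nonpos hpos hht (by linarith : -j ≤ 0)
    rw [Real.mul_rpow two_pos.le (by positivity), Real.rpow_neg two_pos.le] at hrpow
    rwa [← inv_mul_le_iff₀ (by positivity)]
  calc t ^ (2 * k) * max 1 (Real.log t) ^ (-j) * n ^ (-(4 * k))
      = t ^ (2 * k) * n ^ (-(4 * k)) * max 1 (Real.log t) ^ (-j) := by ring
    _ ≤ A ^ k * |(m : ℝ)|⁻¹ * (2 ^ j * ht p.1 p.2 ^ (-j)) := by gcongr
    _ = A ^ k * 2 ^ j * (|(m : ℝ)|⁻¹ * ht p.1 p.2 ^ (-j)) := by ring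

theorem summable_of_sum_fiber_le {ι κ : Type*} {f : ι → ℝ} (hf : ∀ i, 0 ≤ f i) (g : ι → κ)
    {B : κ → ℝ} (hB : Summable B)
    (h : ∀ y, ∀ S : Finset ι, (∀ i ∈ S, g i = y) → ∑ i ∈ S, f i ≤ B y) : Summable f := by
  classical
  refine summable_of_sum_le hf fun S => (?_ : _ ≤ ∑' y, B y)
  rw [← sum_fiberwise_of_maps_to fun i hi => mem_image_of_mem g hi]
  calc ∑ y ∈ S.image g, ∑ i ∈ S with g i = y, f i ≤ ∑ y ∈ S.image g, B y :=
        sum_le_sum fun y _ => h y _ fun i hi => (mem_filter.1 hi).2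
    _ ≤ ∑' y, B y := hB.sum_le_tsum _ fun y _ => by simpa using h y ∅ (by simp)

theorem QConv_of_rank_le (hf : DistinctRoots a b c) (hω : IsShortestChoice a b c ω) {r : ℕ}
    (hr : ∀ D : ℤ, D ≠ 0 → ¬∃ P : Fin (r + 1) → (twist a b c D).Point, LinearIndependent ℤ P)
    (hj : (r : ℝ) / 2 < j) (hj1 : 1 < j) (hk : 1 ≤ k) : QConv a b c j k ω := by
  classical
  obtain ⟨C, hC, hsum⟩ := exists_sum_ht_rpow_neg_le hf hr hj
  choose D s hD hF using fun x : QIdx a b c ω => hω.exists_Fbin_eq x.2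
  let w (x : QIdx a b c ω) : ℤ × ℤ := ω x.1.1 x.1.2.1 x.1.2.2
  have hw (x : QIdx a b c ω) : w x ∈ PsiTwist a b c (D x) :=
    ⟨x.2.2.2.2.2, ((x.1.1 * x.1.2.1 : ℕ) : ℤ) * s x, (hF x).trans (by ring)⟩
  have hinj {x y : QIdx a b c ω} (hDx : D x = D y) (hsx : s x = s y) (hxy : w x = w y) :
      x = y :=
    Subtype.ext (hω.eq_of_Fbin_eq x.2 y.2 hxy (hF x) (by rw [hDx, hsx]; exact hF y))
  set A := (1 + |(a : ℝ)| + |(b : ℝ)| + |(c : ℝ)|) ^ k * 2 ^ j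
  have hQ (x : QIdx a b c ω) : QTerm j k ω x.1 ≤
      A * (|(D x : ℝ)|⁻¹ * ((s x : ℝ) ^ 2)⁻¹ * ht (w x).1 (w x).2 ^ (-j)) := by
    have hle := hω.QTerm_le (zero_le_one.trans hj1.le) hk x.2 (hF x)
    rwa [Int.cast_mul, abs_mul, mul_inv, Int.cast_pow, abs_pow, Int.cast_natCast,
      Nat.abs_cast] at hle
  have hB := ((summable_int_inv_mul_max_log_rpow_neg hj1).mul_of_nonneg
    (Real.summable_nat_pow_inv.2 one_lt_two) (fun _ => by positivity)
    fun _ => by positivity).mul_left (A * C)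
  refine summable_of_sum_fiber_le (fun x => QTerm_nonneg _ _ _ _) (fun x => (D x, s x)) hB ?_
  rintro ⟨D₀, s₀⟩ S hS
  simp only [Prod.mk.injEq] at hS
  rcases S.eq_empty_or_nonempty with rfl | ⟨x₀, hx₀⟩
  · simp only [sum_empty]
    positivity
  have hfiber := hsum D₀ ((hS x₀ hx₀).1 ▸ hD x₀) (S.image w) fun p hp => by
    obtain ⟨x, hx, rfl⟩ := mem_image.1 hp
    exact (hS x hx).1 ▸ hw x
  rw [sum_image fun x hx y hy => hinj ((hS x hx).1.trans (hS y hy).1.symm)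
    ((hS x hx).2.trans (hS y hy).2.symm)] at hfiber
  calc ∑ x ∈ S, QTerm j k ω x.1
      ≤ ∑ x ∈ S, A * (|(D₀ : ℝ)|⁻¹ * ((s₀ : ℝ) ^ 2)⁻¹) * ht (w x).1 (w x).2 ^ (-j) := by
        refine sum_le_sum fun x hx => (hQ x).trans_eq ?_
        rw [(hS x hx).1, (hS x hx).2]
        ring
    _ ≤ A * (|(D₀ : ℝ)|⁻¹ * ((s₀ : ℝ) ^ 2)⁻¹) * (C * max 1 (Real.log |(D₀ : ℝ)|) ^ (-j)) := by
        rw [← mul_sum]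
        gcongr
    _ = _ := by ring

end Convergence

/-! ### Points away from the two-torsion -/

section AwayFromTwoTorsion

open WeierstrassCurve.Affine

variable {a b c D : ℤ}

theorem abs_quadratic_le {F : Type*} [Field F] [LinearOrder F] [IsStrictOrderedRing F]
    (p q r x : F) : |p * x ^ 2 + q * x + r| ≤ (|p| + |q| + |r|) * max 1 |x| ^ 2 := by
  have hone : 1 ≤ max 1 |x| := le_max_left _ _
  have hx : |x| ≤ max 1 |x| := le_max_right _ _
  calc |p * x ^ 2 + q * x + r| ≤ |p * x ^ 2| + |q * x| + |r| := abs_add_three _ _ _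
    _ = |p| * |x| ^ 2 + |q| * |x| + |r| * 1 := by rw [abs_mul, abs_mul, abs_pow, mul_one]
    _ ≤ |p| * max 1 |x| ^ 2 + |q| * max 1 |x| ^ 2 + |r| * max 1 |x| ^ 2 := by
        gcongr
        · exact hx.trans (le_self_pow₀ hone two_ne_zero)
        · exact one_le_pow₀ hone
    _ = _ := by ring

theorem DistinctRoots.deriv_cubic_ne_zero (hf : DistinctRoots a b c) {x : ℝ}
    (hx : x ^ 3 + a * x ^ 2 + b * x + c = 0) : 3 * x ^ 2 + 2 * a * x + b ≠ 0 := by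
  intro hx'
  have hdisc : ((a ^ 2 * b ^ 2 - 4 * b ^ 3 - 4 * a ^ 3 * c - 27 * c ^ 2 + 18 * a * b * c : ℤ) : ℝ) =
      0 := by
    push_cast
    linear_combination ((18 * b - 6 * a ^ 2) * x + 15 * a * b - 4 * a ^ 3 - 27 * c) * hx +
      ((2 * a ^ 2 - 6 * b) * x ^ 2 + (2 * a ^ 3 - 7 * a * b + 9 * c) * x + a ^ 2 * b + 3 * a * c -
        4 * b ^ 2) * hx'
  exact hf.discr_ne_zero (by exact_mod_cast hdisc)

/-- `|f| + |g|` for `f = x³ + ax² + bx + c` and `g = x⁴ - 2bx² - 8cx + b² - 4ac`, the numerator of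
the duplication formula `x(2P) = g / 4f`. -/
def duplicationSize (a b c : ℤ) (x : ℝ) : ℝ :=
  |x ^ 3 + a * x ^ 2 + b * x + c| + |x ^ 4 - 2 * b * x ^ 2 - 8 * c * x + b ^ 2 - 4 * a * c|

theorem duplicationSize_pos (hf : DistinctRoots a b c) (x : ℝ) : 0 < duplicationSize a b c x := by
  rcases eq_or_ne (x ^ 3 + a * x ^ 2 + b * x + c) 0 with hx | hx
  · refine add_pos_of_nonneg_of_pos (abs_nonneg _) (abs_pos.2 fun hg => ?_)
    exact hf.deriv_cubic_ne_zero hx (pow_eq_zero_iff two_ne_zero |>.1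
      (by linear_combination hg + (8 * x + 4 * a) * hx))
  · exact add_pos_of_pos_of_nonneg (abs_pos.2 hx) (abs_nonneg _)

theorem exists_max_pow_le_duplicationSize (hf : DistinctRoots a b c) :
    ∃ C : ℝ, 0 < C ∧ ∀ x : ℝ, max 1 |x| ^ 4 ≤ C * duplicationSize a b c x := by
  set N : ℝ := 1 + |(2 * b : ℝ)| + |(8 * c : ℝ)| + |(4 * a * c - b ^ 2 : ℝ)|
  have hN : 1 ≤ N := by
    simp only [N, add_assoc]
    exact le_add_of_nonneg_right (by positivity)
  have hcont : Continuous (duplicationSize a b c) := by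
    unfold duplicationSize
    fun_prop
  obtain ⟨x₀, -, hmin⟩ := (isCompact_Icc (a := -(2 * N)) (b := 2 * N)).exists_isMinOn
    ⟨0, by constructor <;> linarith⟩ hcont.continuousOn
  have hm := duplicationSize_pos hf x₀
  set m := duplicationSize a b c x₀
  refine ⟨2 + (2 * N) ^ 4 / m, by positivity, fun x => ?_⟩
  have hpos := duplicationSize_pos hf x
  rw [add_mul]
  by_cases hx : |x| ≤ 2 * N
  · refine le_add_of_nonneg_of_le (by positivity) ?_
    calc max 1 |x| ^ 4 ≤ (2 * N) ^ 4 := by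
          gcongr
          exact max_le (by linarith) hx
      _ = (2 * N) ^ 4 / m * m := (div_mul_cancel₀ _ hm.ne').symm
      _ ≤ (2 * N) ^ 4 / m * duplicationSize a b c x := by
          gcongr
          exact hmin (abs_le.1 hx)
  · refine le_add_of_le_of_nonneg ?_ (by positivity)
    have hx1 : max 1 |x| = |x| := max_eq_right (by linarith)
    have hquad := abs_quadratic_le (2 * b : ℝ) (8 * c) (4 * a * c - b ^ 2) x
    have hsmall : (|(2 * b : ℝ)| + |(8 * c : ℝ)| + |(4 * a * c - b ^ 2 : ℝ)|) * |x| ^ 2 ≤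
        |x| ^ 4 / 2 := by
      have hxN : N ≤ |x| ^ 2 / 2 := by nlinarith
      nlinarith [sq_nonneg |x|]
    have htri := abs_sub_abs_le_abs_sub (x ^ 4) (2 * b * x ^ 2 + 8 * c * x + (4 * a * c - b ^ 2))
    rw [abs_pow] at htri
    rw [hx1] at hquad ⊢
    rw [show x ^ 4 - (2 * b * x ^ 2 + 8 * c * x + (4 * a * c - b ^ 2)) =
      x ^ 4 - 2 * b * x ^ 2 - 8 * c * x + b ^ 2 - 4 * a * c by ring] at htri
    unfold duplicationSize
    linarith [abs_nonneg (x ^ 3 + a * x ^ 2 + b * x + c)]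

theorem twistX_some_add_some {X₁ Y₁ X₂ Y₂ : ℚ} (h₁ : (twist a b c D).Nonsingular X₁ Y₁)
    (h₂ : (twist a b c D).Nonsingular X₂ Y₂) (hX : X₁ ≠ X₂) :
    twistX (Point.some X₁ Y₁ h₁ + .some X₂ Y₂ h₂) =
      (((Y₁ - Y₂) / (X₁ - X₂)) ^ 2 - a * D - X₁ - X₂) / D := by
  rw [Point.add_of_X_ne hX, twistX_some, slope_of_X_ne hX, addX]
  simp [twist]

theorem twistX_add_self (hD : D ≠ 0) {P : (twist a b c D).Point} (hP : P + P ≠ 0) :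
    twistX (P + P) * (4 * (twistX P ^ 3 + a * twistX P ^ 2 + b * twistX P + c)) =
      twistX P ^ 4 - 2 * b * twistX P ^ 2 - 8 * c * twistX P + b ^ 2 - 4 * a * c := by
  rcases P with _ | ⟨X, Y, h⟩
  · exact absurd (add_zero 0) hP
  have hDq : (D : ℚ) ≠ 0 := Int.cast_ne_zero.2 hD
  have hY : Y ≠ 0 := (some_add_self_eq_zero_iff h).not.1 hP
  have hne : Y ≠ (twist a b c D).negY X Y := by rwa [twist_negY, ne_eq, self_eq_neg]
  have heq := twist_equation_iff.1 h.1
  rw [Point.add_self_of_Y_ne hne, twistX_some, twistX_some, slope_of_Y_ne rfl hne, addX, twist_negY]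
  obtain ⟨x, rfl⟩ : ∃ x : ℚ, X = D * x := ⟨X / D, by field_simp⟩
  have hcubic : x ^ 3 + a * x ^ 2 + b * x + c = Y ^ 2 / D ^ 3 := by
    rw [heq]
    field_simp
  rw [mul_div_cancel_left₀ x hDq, hcubic]
  simp only [twist]
  field_simp
  linear_combination -16 * D * (2 * x + a) * heq

theorem exists_abs_addX_le {F : Type*} [Field F] [LinearOrder F] [IsStrictOrderedRing F]
    (p q s X₂ Y₂ : F) :
    ∃ K : F, 0 ≤ K ∧ ∀ X Y : F, Y ^ 2 = X ^ 3 + p * X ^ 2 + q * X + s → 1 + 2 * |X₂| < |X| →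
      |((Y - Y₂) / (X - X₂)) ^ 2 - p - X - X₂| ≤ K := by
  set N := |p| + |q| + |s|
  set M := |X₂| + |q + X₂ ^ 2 + 2 * p * X₂| + |Y₂ ^ 2 + s - X₂ ^ 3 - p * X₂ ^ 2|
  refine ⟨4 * (2 * |Y₂| * (1 + N) + M), by positivity, fun X Y h hX => ?_⟩
  have hX1 : 1 ≤ |X| := by linarith [abs_nonneg X₂]
  have hmax : max 1 |X| = |X| := max_eq_right hX1
  have hY : |Y| ≤ (1 + N) * |X| ^ 2 := by
    refine abs_le_of_sq_le_sq ?_ (by positivity)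
    have hquad := (le_abs_self _).trans (abs_quadratic_le p q s X)
    rw [hmax] at hquad
    calc Y ^ 2 = X ^ 3 + (p * X ^ 2 + q * X + s) := by rw [h]; ring
      _ ≤ |X| ^ 3 + N * |X| ^ 2 := 
          add_le_add ((le_abs_self _).trans_eq (abs_pow X 3)) hquad
      _ ≤ |X| ^ 4 + N * |X| ^ 4 := by gcongr <;> first | exact hX1 | norm_num
      _ = (1 + N) * |X| ^ 4 := by ring
      _ ≤ (1 + N) ^ 2 * |X| ^ 4 := by
          gcongr
          exact le_self_pow₀ (le_add_of_nonneg_right (by positivity)) two_ne_zero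
      _ = _ := by ring
  have hsub : |X| / 2 ≤ |X - X₂| := by linarith [abs_sub_abs_le_abs_sub X X₂]
  have hne : X - X₂ ≠ 0 := abs_pos.1 ((by positivity : 0 < |X| / 2).trans_le hsub)
  have hpos : 0 < (X - X₂) ^ 2 := by positivity
  have hsum : ((Y - Y₂) / (X - X₂)) ^ 2 - p - X - X₂ = (-(2 * Y₂) * Y + (X₂ * X ^ 2 +
      (q + X₂ ^ 2 + 2 * p * X₂) * X + (Y₂ ^ 2 + s - X₂ ^ 3 - p * X₂ ^ 2))) / (X - X₂) ^ 2 := by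
    field_simp
    linear_combination h
  rw [hsum, abs_div, abs_of_pos hpos, div_le_iff₀ hpos]
  have hquad := abs_quadratic_le X₂ (q + X₂ ^ 2 + 2 * p * X₂) (Y₂ ^ 2 + s - X₂ ^ 3 - p * X₂ ^ 2) X
  rw [hmax] at hquad
  calc _ ≤ 2 * |Y₂| * |Y| + M * |X| ^ 2 := by
        refine (abs_add_le _ _).trans (add_le_add ?_ hquad)
        rw [abs_mul, abs_neg, abs_mul, abs_two]
    _ ≤ 2 * |Y₂| * ((1 + N) * |X| ^ 2) + M * |X| ^ 2 := by gcongr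
    _ = 4 * (2 * |Y₂| * (1 + N) + M) * (|X| / 2) ^ 2 := by ring
    _ ≤ 4 * (2 * |Y₂| * (1 + N) + M) * |X - X₂| ^ 2 := by gcongr
    _ = _ := by rw [sq_abs]

theorem exists_abs_twistX_le_or_abs_twistX_add_le {S : (twist a b c D).Point} (hS : S ≠ 0) :
    ∃ K : ℚ, ∀ A : (twist a b c D).Point,
      A ≠ 0 ∧ |twistX A| ≤ K ∨ A + S ≠ 0 ∧ |twistX (A + S)| ≤ K := by
  rcases S with _ | ⟨X₂, Y₂, h₂⟩
  · exact absurd rfl hS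
  obtain ⟨K, hK, hadd⟩ := exists_abs_addX_le (a * D : ℚ) (b * D ^ 2) (c * D ^ 3) X₂ Y₂
  refine ⟨(1 + 2 * |X₂| + K) / |(D : ℚ)|, fun A => ?_⟩
  rcases A with _ | ⟨X, Y, h⟩
  · rw [← Point.zero_def, zero_add, twistX_some, abs_div]
    refine .inr ⟨Point.some_ne_zero _, ?_⟩
    gcongr
    linarith [abs_nonneg X₂]
  rcases le_or_gt |X| (1 + 2 * |X₂|) with hX | hX
  · rw [twistX_some, abs_div]
    refine .inl ⟨Point.some_ne_zero _, ?_⟩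
    gcongr
    linarith
  · have hne : X ≠ X₂ := by
      rintro rfl
      linarith [abs_nonneg X]
    rw [twistX_some_add_some h h₂ hne, abs_div]
    refine .inr ⟨?_, ?_⟩
    · rw [Point.add_of_X_ne hne]
      exact Point.some_ne_zero _
    · gcongr
      linarith [hadd X Y (twist_equation_iff.1 h.1) hX, abs_nonneg X₂]

/-- `P` is a finite point whose `x`-coordinate satisfies `|f(x)| ≥ κ max(1, |x|)⁴`. As `f` is a
cubic this also keeps `x` away from infinity, so `F(u, v)` has the full size `max(|u|, |v|)⁴` at
`x = u / v`. -/
def AwayFromTwoTorsion (κ : ℝ) (P : (twist a b c D).Point) : Prop :=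
  P ≠ 0 ∧ κ * max 1 |(twistX P : ℝ)| ^ 4 ≤
    |(twistX P : ℝ) ^ 3 + a * (twistX P : ℝ) ^ 2 + b * twistX P + c|

theorem exists_awayFromTwoTorsion_of_abs_twistX_add_self_le (hf : DistinctRoots a b c)
    (hD : D ≠ 0) (K : ℚ) : ∃ κ : ℝ, 0 < κ ∧ ∀ P : (twist a b c D).Point, P + P ≠ 0 →
      |twistX (P + P)| ≤ K → AwayFromTwoTorsion κ P := by
  obtain ⟨C, hC, hbound⟩ := exists_max_pow_le_duplicationSize hf
  refine ⟨(C * (1 + 4 * |(K : ℝ)|))⁻¹, by positivity, fun P hP hK => ⟨?_, ?_⟩⟩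
  · rintro rfl
    exact hP (add_zero 0)
  have hdup := congrArg (Rat.cast : ℚ → ℝ) (twistX_add_self hD hP)
  push_cast at hdup
  have hKr : |(twistX (P + P) : ℝ)| ≤ |(K : ℝ)| := by
    exact_mod_cast hK.trans (le_abs_self K)
  rw [inv_mul_le_iff₀ (by positivity)]
  refine (hbound _).trans ?_
  rw [duplicationSize, ← hdup, abs_mul, abs_mul, abs_of_pos (by norm_num : (0 : ℝ) < 4), mul_assoc,
    add_mul, one_mul]
  set f := |(twistX P : ℝ) ^ 3 + a * (twistX P : ℝ) ^ 2 + b * twistX P + c|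
  calc C * (f + |(twistX (P + P) : ℝ)| * (4 * f)) ≤ C * (f + |(K : ℝ)| * (4 * f)) := by gcongr
    _ = C * (f + 4 * |(K : ℝ)| * f) := by ring

theorem exists_awayFromTwoTorsion_or_add (hf : DistinctRoots a b c) (hD : D ≠ 0)
    {R : (twist a b c D).Point} (hR : R + R ≠ 0) : ∃ κ : ℝ, 0 < κ ∧
      ∀ P : (twist a b c D).Point, AwayFromTwoTorsion κ P ∨ AwayFromTwoTorsion κ (P + R) := by
  obtain ⟨K, hK⟩ := exists_abs_twistX_le_or_abs_twistX_add_le hR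
  obtain ⟨κ, hκ, hdouble⟩ := exists_awayFromTwoTorsion_of_abs_twistX_add_self_le hf hD K
  refine ⟨κ, hκ, fun P => (hK (P + P)).imp (fun h => hdouble P h.1 h.2) fun h => ?_⟩
  rw [add_add_add_comm] at h
  exact hdouble _ h.1 h.2

theorem exp_logHeight₁_eq (x : ℚ) :
    Real.exp (Height.logHeight₁ x) = x.den * max 1 |(x : ℝ)| := by
  have hpos : 0 < max x.num.natAbs x.den := lt_max_of_lt_right x.den_pos
  have hden : (0 : ℝ) < x.den := by exact_mod_cast x.den_pos
  have hx : (x.den : ℝ) * |(x : ℝ)| = |(x.num : ℝ)| := by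
    rw [← Nat.abs_cast x.den, ← abs_mul]
    exact_mod_cast congrArg (fun y : ℚ => |(y : ℝ)|) (Rat.den_mul_eq_num x)
  rw [Rat.logHeight₁_eq_log_max, Real.exp_log (by exact_mod_cast hpos),
    mul_max_of_nonneg _ _ hden.le, hx, mul_one, max_comm, Nat.cast_max, Nat.cast_natAbs,
    Int.cast_abs]

theorem AwayFromTwoTorsion.mul_exp_naiveHeight_le {κ : ℝ} {P : (twist a b c D).Point}
    (hP : AwayFromTwoTorsion κ P) : κ * Real.exp (naiveHeight P) ^ 4 ≤
      |(Fbin a b c (twistX P).num (twistX P).den : ℝ)| := by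
  have hF := congrArg (Rat.cast : ℚ → ℝ) (Fbin_eq_pow_mul (a := a) (b := b) (c := c)
    (u := (twistX P).num) (v := (twistX P).den) (by exact_mod_cast (twistX P).den_nz))
  rw [Int.cast_natCast, Rat.num_div_den] at hF
  push_cast at hF
  rw [naiveHeight, exp_logHeight₁_eq, hF, abs_mul, abs_pow, Nat.abs_cast, mul_pow, mul_left_comm]
  gcongr
  exact hP.2

end AwayFromTwoTorsion

/-! ### Divergence of `Q_E` on a twist of large rank -/

section ShortVectors

variable {a b c D : ℤ} {ω : (d d' : ℕ) → ZMod (d ^ 2) → ℤ × ℤ} {j k : ℝ}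

theorem exists_mem_OmegaSet_mem_latL {d d' : ℕ} {p : ℤ × ℤ} (hcop : IsCoprime (d : ℤ) p.2)
    (hd : (d : ℤ) ^ 2 ∣ p.1 ^ 3 + a * p.1 ^ 2 * p.2 + b * p.1 * p.2 ^ 2 + c * p.2 ^ 3)
    (hd' : (d' : ℤ) ^ 2 ∣ p.2) : ∃ α ∈ OmegaSet a b c d, p ∈ latL d d' α := by
  obtain ⟨w, hw⟩ := (isUnit_intCast_of_isCoprime hcop).exists_left_inv
  refine ⟨p.1 * w, ?_, ?_, hd'⟩
  · have hcubic := (ZMod.intCast_zmod_eq_zero_iff_dvd _ (d ^ 2)).2 (by exact_mod_cast hd)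
    push_cast at hcubic
    change _ = _
    linear_combination w ^ 3 * hcubic - (a * p.1 ^ 2 * w ^ 2 + b * p.1 * w * (w * p.2 + 1) +
      c * (w ^ 2 * p.2 ^ 2 + w * p.2 + 1)) * hw
  · rw [mul_assoc, hw, mul_one]

theorem abs_le_abs_of_eq_squarefree_mul_sq {e : ℤ} (he : Squarefree e) (hD : D ≠ 0) {t : ℚ}
    (h : (D : ℚ) = e * t ^ 2) : |e| ≤ |D| := by
  obtain ⟨n, rfl⟩ := exists_intCast_eq_of_eq_squarefree_mul_sq he h
  obtain rfl : D = e * n ^ 2 := by exact_mod_cast h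
  rw [abs_mul]
  exact le_mul_of_one_le_right (abs_nonneg e) (Int.one_le_abs (right_ne_zero_of_mul hD))

theorem isCoprime_cubic {u v : ℤ} (h : IsCoprime u v) :
    IsCoprime v (u ^ 3 + a * u ^ 2 * v + b * u * v ^ 2 + c * v ^ 3) := by
  rw [show u ^ 3 + a * u ^ 2 * v + b * u * v ^ 2 + c * v ^ 3 =
    u ^ 3 + v * (a * u ^ 2 + b * u * v + c * v ^ 2) by ring]
  exact h.symm.pow_right.add_mul_left_right _

theorem exists_latL_of_Fbin_eq_mul_sq (hD : D ≠ 0) {p : ℤ × ℤ} (hp : p ∈ Psi a b c) {t : ℚ}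
    (hF : (Fbin a b c p.1 p.2 : ℚ) = D * t ^ 2) :
    ∃ d d' : ℕ, 0 < d ∧ 0 < d' ∧ Nat.Coprime d d' ∧ (∃ α ∈ OmegaSet a b c d, p ∈ latL d d' α) ∧
      |Fbin a b c p.1 p.2| ≤ |D| * ((d : ℤ) * d') ^ 2 ∧
      ((d : ℤ) * d') ^ 2 ≤ |Fbin a b c p.1 p.2| := by
  obtain ⟨u, v⟩ := p
  obtain ⟨hgcd, hF0⟩ := hp
  simp only at hgcd hF hF0 ⊢
  set w := u ^ 3 + a * u ^ 2 * v + b * u * v ^ 2 + c * v ^ 3 with hw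
  have hFw : Fbin a b c u v = v * w := rfl
  have hvw : IsCoprime v w := isCoprime_cubic (Int.isCoprime_iff_gcd_eq_one.2 hgcd)
  obtain ⟨e', d', hsq', hv⟩ := exists_eq_squarefree_mul_sq (left_ne_zero_of_mul (hFw ▸ hF0))
  obtain ⟨e, d, hsq, hw'⟩ := exists_eq_squarefree_mul_sq (right_ne_zero_of_mul (hFw ▸ hF0))
  have hFe : Fbin a b c u v = e' * e * ((d : ℤ) * d') ^ 2 := by
    rw [hFw, hw', hv]
    ring
  have hdd' : (d : ℤ) * d' ≠ 0 := fun h0 => hF0 (by rw [hFe, h0, zero_pow two_ne_zero, mul_zero])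
  have hdv : IsCoprime (d : ℤ) v :=
    hvw.symm.of_isCoprime_of_dvd_left ⟨e * d, by rw [hw']; ring⟩
  have hcop : IsCoprime (d : ℤ) d' := hdv.of_isCoprime_of_dvd_right ⟨e' * d', by rw [hv]; ring⟩
  have hee' : IsCoprime e' e :=
    (hvw.of_isCoprime_of_dvd_left ⟨_, hv⟩).of_isCoprime_of_dvd_right ⟨_, hw'⟩
  have hsqe : Squarefree (e' * e) := squarefree_mul_iff.2 ⟨hee'.isRelPrime, hsq', hsq⟩
  have ht : t ≠ 0 := by
    rintro rfl
    exact hF0 (by exact_mod_cast hF.trans (by ring : (D * 0 ^ 2 : ℚ) = 0))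
  have hle : |e' * e| ≤ |D| := abs_le_abs_of_eq_squarefree_mul_sq hsqe hD (t := d * d' / t) (by
    rw [div_pow, mul_div_assoc', eq_div_iff (by positivity), ← hF, hFe]
    push_cast
    ring)
  rw [hFe, abs_mul, abs_of_nonneg (sq_nonneg ((d : ℤ) * d'))]
  exact ⟨d, d', Nat.pos_of_ne_zero (by exact_mod_cast left_ne_zero_of_mul hdd'),
    Nat.pos_of_ne_zero (by exact_mod_cast right_ne_zero_of_mul hdd'),
    Nat.isCoprime_iff_coprime.1 hcop,
    exists_mem_OmegaSet_mem_latL hdv ⟨e, by rw [← hw, hw']; ring⟩ ⟨e', by rw [hv]; ring⟩,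
    by gcongr, le_mul_of_one_le_left (sq_nonneg _) (Int.one_le_abs hsqe.ne_zero)⟩

theorem sq_dvd_det_of_mem_latL {d d' : ℕ} (hdd' : Nat.Coprime d d') {α : ZMod (d ^ 2)}
    {p q : ℤ × ℤ} (hp : p ∈ latL d d' α) (hq : q ∈ latL d d' α) :
    ((d : ℤ) * d') ^ 2 ∣ p.1 * q.2 - p.2 * q.1 := by
  rw [mul_pow]
  refine (Nat.isCoprime_iff_coprime.2 hdd').pow.mul_dvd ?_
    (dvd_sub (hq.2.mul_left _) (hp.2.mul_right _))
  have hcast : ((p.1 * q.2 - p.2 * q.1 : ℤ) : ZMod (d ^ 2)) = 0 := by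
    push_cast
    rw [hp.1, hq.1]
    ring
  exact_mod_cast (ZMod.intCast_zmod_eq_zero_iff_dvd _ _).1 hcast

theorem exists_eq_zsmul_of_det_eq_zero {p q : ℤ × ℤ} (hp : IsCoprime p.1 p.2)
    (h : p.1 * q.2 - p.2 * q.1 = 0) : ∃ n : ℤ, q = n • p := by
  obtain ⟨x, y, hxy⟩ := hp
  refine ⟨x * q.1 + y * q.2, Prod.ext ?_ ?_⟩
  · simp only [Prod.smul_fst, smul_eq_mul]
    linear_combination -q.1 * hxy - y * h
  · simp only [Prod.smul_snd, smul_eq_mul]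
    linear_combination -q.2 * hxy + x * h

theorem IsShortestChoice.eq_or_eq_neg_of_mem_latL (hω : IsShortestChoice a b c ω) {d d' : ℕ}
    (hd : 0 < d) (hd' : 0 < d') (hdd' : Nat.Coprime d d') {α : ZMod (d ^ 2)}
    (hα : α ∈ OmegaSet a b c d) {p : ℤ × ℤ} (hp : IsCoprime p.1 p.2) (hpL : p ∈ latL d d' α)
    (hlt : p.1 ^ 2 + p.2 ^ 2 < ((d : ℤ) * d') ^ 2) : ω d d' α = p ∨ ω d d' α = -p := by
  obtain ⟨hωL, hω0, hmin⟩ := hω d d' hd hd' hdd' α hα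
  have hpos : 0 < p.1 ^ 2 + p.2 ^ 2 := by
    rcases hp.ne_zero_or_ne_zero with h | h <;> positivity
  have hle := hmin p hpL (by rintro rfl; simp at hpos)
  have hdet : p.1 * (ω d d' α).2 - p.2 * (ω d d' α).1 = 0 := by
    refine Int.eq_zero_of_abs_lt_dvd (sq_dvd_det_of_mem_latL hdd' hpL hωL) (lt_of_le_of_lt ?_ hlt)
    rw [abs_le]
    constructor
    · nlinarith [sq_nonneg (p.1 + (ω d d' α).2), sq_nonneg (p.2 - (ω d d' α).1)]
    · nlinarith [sq_nonneg (p.1 - (ω d d' α).2), sq_nonneg (p.2 + (ω d d' α).1)]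
  obtain ⟨n, hn⟩ := exists_eq_zsmul_of_det_eq_zero hp hdet
  rw [hn] at hle hω0 ⊢
  simp only [Prod.smul_fst, Prod.smul_snd, smul_eq_mul, mul_pow] at hle
  have hn1 : n ^ 2 ≤ 1 := by
    rw [← mul_add] at hle
    exact le_of_mul_le_mul_right (hle.trans_eq (one_mul _).symm) hpos
  have hn0 : n ≠ 0 := by
    rintro rfl
    exact hω0 (zero_smul ℤ p)
  obtain ⟨hn2, hn3⟩ := abs_le.1 ((sq_le_one_iff_abs_le_one n).1 hn1)
  obtain rfl | rfl : n = 1 ∨ n = -1 := by omega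
  · exact .inl (one_smul ℤ p)
  · exact .inr (neg_one_smul ℤ p)

theorem neg_mem_Psi {p : ℤ × ℤ} (hp : p ∈ Psi a b c) : -p ∈ Psi a b c := by
  refine ⟨by simpa using hp.1, ?_⟩
  convert hp.2 using 1
  simp only [Fbin, Prod.fst_neg, Prod.snd_neg]
  ring

theorem IsShortestChoice.exists_mem_QIdx_eq_or_eq_neg (hω : IsShortestChoice a b c ω)
    (hD : D ≠ 0) {p : ℤ × ℤ} (hp : p ∈ Psi a b c) {t : ℚ}
    (hF : (Fbin a b c p.1 p.2 : ℚ) = D * t ^ 2)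
    (hlt : |D| * (p.1 ^ 2 + p.2 ^ 2) < |Fbin a b c p.1 p.2|) :
    ∃ x ∈ QIdx a b c ω, (ω x.1 x.2.1 x.2.2 = p ∨ ω x.1 x.2.1 x.2.2 = -p) ∧
      |Fbin a b c p.1 p.2| ≤ |D| * ((x.1 : ℤ) * x.2.1) ^ 2 ∧
      ((x.1 : ℤ) * x.2.1) ^ 2 ≤ |Fbin a b c p.1 p.2| := by
  obtain ⟨d, d', hd, hd', hdd', ⟨α, hα, hpL⟩, hle, hge⟩ := exists_latL_of_Fbin_eq_mul_sq hD hp hF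
  have hor := hω.eq_or_eq_neg_of_mem_latL hd hd' hdd' hα (Int.isCoprime_iff_gcd_eq_one.2 hp.1) hpL
    (lt_of_mul_lt_mul_left (hlt.trans_le hle) (abs_nonneg D))
  refine ⟨⟨d, d', α⟩, ⟨hd, hd', hdd', hα, ?_⟩, hor, hle, hge⟩
  rcases hor with h | h
  · exact h ▸ hp
  · exact h ▸ neg_mem_Psi hp

theorem le_QTerm (hj : 0 ≤ j) (hk : 0 ≤ k) {x : Σ d : ℕ, ℕ × ZMod (d ^ 2)} {p : ℤ × ℤ} {M L : ℝ}
    (hM : 0 ≤ M) (hx : 0 < (x.1 : ℝ) * x.2.1)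
    (hp : ω x.1 x.2.1 x.2.2 = p ∨ ω x.1 x.2.1 x.2.2 = -p)
    (hpos : 0 < (p.1 : ℝ) ^ 2 + (p.2 : ℝ) ^ 2)
    (hpM : (p.1 : ℝ) ^ 2 + (p.2 : ℝ) ^ 2 ≤ M * (x.1 * x.2.1))
    (hL : Real.log (x.1 * x.2.1) ≤ L) :
    M ^ (-(2 * k)) * max 1 L ^ (-j) ≤ QTerm j k ω x := by
  have hω : ((ω x.1 x.2.1 x.2.2).1 : ℝ) ^ 2 + ((ω x.1 x.2.1 x.2.2).2 : ℝ) ^ 2 =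
      (p.1 : ℝ) ^ 2 + (p.2 : ℝ) ^ 2 := by
    rcases hp with h | h <;> simp [h]
  rw [QTerm, hω, Real.sqrt_eq_rpow, ← Real.rpow_mul hpos.le]
  set t := (x.1 : ℝ) * x.2.1
  set n := (p.1 : ℝ) ^ 2 + (p.2 : ℝ) ^ 2
  have hn : M ^ (-(2 * k)) * t ^ (-(2 * k)) ≤ n ^ (1 / 2 * -(4 * k)) := by
    rw [← Real.mul_rpow hM hx.le, show 1 / 2 * -(4 * k) = -(2 * k) by ring]
    exact Real.rpow_le_rpow_of_nonpos hpos hpM (by linarith)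
  have hlog : max 1 L ^ (-j) ≤ max 1 (Real.log t) ^ (-j) :=
    Real.rpow_le_rpow_of_nonpos (by positivity) (max_le_max le_rfl hL) (by linarith)
  have hcancel : t ^ (2 * k) * t ^ (-(2 * k)) = 1 := by
    rw [← Real.rpow_add hx, add_neg_cancel, Real.rpow_zero]
  calc M ^ (-(2 * k)) * max 1 L ^ (-j)
      = t ^ (2 * k) * max 1 L ^ (-j) * (M ^ (-(2 * k)) * t ^ (-(2 * k))) := by
        linear_combination -(M ^ (-(2 * k)) * max 1 L ^ (-j)) * hcancel
    _ ≤ t ^ (2 * k) * max 1 (Real.log t) ^ (-j) * n ^ (1 / 2 * -(4 * k)) := by gcongr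

end ShortVectors

section Divergence

open WeierstrassCurve.Affine

variable {a b c D : ℤ} {ω : (d d' : ℕ) → ZMod (d ^ 2) → ℤ × ℤ} {j k : ℝ}

theorem AwayFromTwoTorsion.num_den_mem_Psi {κ : ℝ} (hκ : 0 < κ) {P : (twist a b c D).Point}
    (hP : AwayFromTwoTorsion κ P) : ((twistX P).num, ((twistX P).den : ℤ)) ∈ Psi a b c := by
  refine ⟨(twistX P).reduced, fun h0 => ?_⟩
  have hle := hP.mul_exp_naiveHeight_le
  have hpos : 0 < κ * Real.exp (naiveHeight P) ^ 4 := by positivity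
  rw [h0, Int.cast_zero, abs_zero] at hle
  exact hle.not_gt hpos

theorem exists_Fbin_num_den_eq (hD : D ≠ 0) {P : (twist a b c D).Point} (hP : P ≠ 0) :
    ∃ t : ℚ, (Fbin a b c (twistX P).num (twistX P).den : ℚ) = D * t ^ 2 := by
  rcases P with _ | ⟨X, Y, h⟩
  · exact absurd rfl hP
  · exact ⟨_, Fbin_num_den_eq hD h⟩

theorem num_sq_add_den_sq_le (x : ℚ) :
    (x.num : ℝ) ^ 2 + (x.den : ℝ) ^ 2 ≤ 2 * Real.exp (Height.logHeight₁ x) ^ 2 := by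
  have hnum := pow_le_pow_left₀ (abs_nonneg _) (abs_num_le_exp_logHeight₁ x) 2
  have hden := pow_le_pow_left₀ (Nat.cast_nonneg _) (den_le_exp_logHeight₁ x) 2
  rw [sq_abs] at hnum
  linarith

theorem log_le_two_mul_add_log {t A E : ℝ} (ht : 0 < t) (hA : 1 ≤ A)
    (h : t ^ 2 ≤ A * Real.exp E ^ 4) : Real.log t ≤ 2 * E + Real.log A := by
  have hA0 : 0 < A := by linarith
  have hlog := Real.log_le_log (by positivity) h
  rw [Real.log_mul hA0.ne' (by positivity), Real.log_pow, Real.log_pow, Real.log_exp] at hlog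
  push_cast at hlog
  linarith [Real.log_nonneg hA]

theorem IsShortestChoice.exists_mem_QIdx_of_awayFromTwoTorsion (hω : IsShortestChoice a b c ω)
    (hD : D ≠ 0) {κ : ℝ} (hκ : 0 < κ) {P : (twist a b c D).Point} (hP : AwayFromTwoTorsion κ P)
    (hE : 2 * (|(D : ℝ)| / κ) < Real.exp (naiveHeight P)) :
    ∃ x ∈ QIdx a b c ω, (ω x.1 x.2.1 x.2.2 = ((twistX P).num, ((twistX P).den : ℤ)) ∨
        ω x.1 x.2.1 x.2.2 = -((twistX P).num, ((twistX P).den : ℤ))) ∧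
      κ * Real.exp (naiveHeight P) ^ 4 ≤ |(D : ℝ)| * ((x.1 : ℝ) * x.2.1) ^ 2 ∧
      ((x.1 : ℝ) * x.2.1) ^ 2 ≤
        (1 + |(a : ℝ)| + |(b : ℝ)| + |(c : ℝ)|) * Real.exp (naiveHeight P) ^ 4 := by
  have hF := hP.mul_exp_naiveHeight_le
  have hnorm := num_sq_add_den_sq_le (twistX P)
  have hFle := abs_Fbin_le (a := a) (b := b) (c := c) (v := (twistX P).den)
    (abs_num_le_exp_logHeight₁ (twistX P)) (by simpa using den_le_exp_logHeight₁ (twistX P))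
  rw [← naiveHeight] at hnorm hFle
  obtain ⟨t, ht⟩ := exists_Fbin_num_den_eq hD hP.1
  set E := Real.exp (naiveHeight P)
  have hE1 : 1 ≤ E := Real.one_le_exp (naiveHeight_nonneg P)
  have hlt : |(D : ℝ)| * (((twistX P).num : ℝ) ^ 2 + ((twistX P).den : ℝ) ^ 2) <
      |(Fbin a b c (twistX P).num (twistX P).den : ℝ)| := by
    calc |(D : ℝ)| * (((twistX P).num : ℝ) ^ 2 + ((twistX P).den : ℝ) ^ 2)
        ≤ |(D : ℝ)| * (2 * E ^ 2) := by gcongr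
      _ = κ * (2 * (|(D : ℝ)| / κ) * E ^ 2) := by field_simp
      _ < κ * (E * E ^ 2) := by gcongr
      _ = κ * E ^ 3 := by ring
      _ ≤ κ * E ^ 4 := by gcongr; norm_num
      _ ≤ _ := hF
  obtain ⟨x, hx, hor, hle, hge⟩ :=
    hω.exists_mem_QIdx_eq_or_eq_neg hD (hP.num_den_mem_Psi hκ) ht (by exact_mod_cast hlt)
  exact ⟨x, hx, hor, hF.trans (by exact_mod_cast hle), le_trans (by exact_mod_cast hge) hFle⟩

theorem IsShortestChoice.exists_le_QTerm_of_awayFromTwoTorsion (hω : IsShortestChoice a b c ω)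
    (hj : 0 ≤ j) (hk : 0 ≤ k) (hD : D ≠ 0) {κ : ℝ} (hκ : 0 < κ) :
    ∃ C A B : ℝ, 0 < C ∧ 0 ≤ A ∧ ∀ P : (twist a b c D).Point, AwayFromTwoTorsion κ P →
      B < naiveHeight P → ∃ x ∈ QIdx a b c ω,
        twistX P = (ω x.1 x.2.1 x.2.2).1 / (ω x.1 x.2.1 x.2.2).2 ∧
        C * max 1 (2 * naiveHeight P + A) ^ (-j) ≤ QTerm j k ω x := by
  set A := 1 + |(a : ℝ)| + |(b : ℝ)| + |(c : ℝ)|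
  have hA : 1 ≤ A := by
    simp only [A, add_assoc]
    exact le_add_of_nonneg_right (by positivity)
  set s := √(|(D : ℝ)| / κ)
  have : 0 < s := Real.sqrt_pos.2 (by positivity)
  have hs2 : s ^ 2 = |(D : ℝ)| / κ := Real.sq_sqrt (by positivity)
  refine ⟨(2 * s) ^ (-(2 * k)), Real.log A, 2 * (|(D : ℝ)| / κ), by positivity,
    Real.log_nonneg hA, fun P hP hB => ?_⟩
  have hE : 2 * (|(D : ℝ)| / κ) < Real.exp (naiveHeight P) := by
    linarith [Real.add_one_le_exp (naiveHeight P)]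
  obtain ⟨x, hx, hor, hle, hge⟩ := hω.exists_mem_QIdx_of_awayFromTwoTorsion hD hκ hP hE
  have hdd' : 0 < (x.1 : ℝ) * x.2.1 := by
    exact_mod_cast Nat.mul_pos hx.1 hx.2.1
  have hEs : Real.exp (naiveHeight P) ^ 2 ≤ s * (x.1 * x.2.1) := by
    refine le_of_sq_le_sq ?_ (by positivity)
    rw [mul_pow, hs2, div_mul_eq_mul_div, le_div_iff₀ hκ]
    linarith
  have hnorm := num_sq_add_den_sq_le (twistX P)
  rw [← naiveHeight] at hnorm
  refine ⟨x, hx, ?_, le_QTerm hj hk (by positivity) hdd' hor ?_ ?_ ?_⟩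
  · rw [← Rat.num_div_den (twistX P)]
    rcases hor with h | h <;> simp [h, neg_div_neg_eq]
  · have : ((twistX P).den : ℝ) ≠ 0 := by exact_mod_cast (twistX P).den_nz
    simp only [Int.cast_natCast]
    positivity
  · simp only [Int.cast_natCast]
    linarith
  · exact log_le_two_mul_add_log hdd' hA hge

theorem not_summable_of_inv_pow_le {ι : Type*} [Fintype ι] [Nonempty ι] {g : (ι → ℕ) → ℝ} {ε : ℝ}
    (hε : 0 < ε) (bad : Finset (ι → ℕ)) (h : ∀ N : ℕ, 0 < N → ∀ n : ι → ℕ, (∀ i, n i < N) →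
      n ∉ bad → ε * ((N : ℝ) ^ Fintype.card ι)⁻¹ ≤ g n) : ¬ Summable g := by
  classical
  intro hsum
  obtain ⟨s, hs⟩ := hsum.vanishing (Iio_mem_nhds (half_pos hε))
  set N := 2 * (s.card + bad.card + 1) with hN
  set t := Fintype.piFinset (fun _ : ι => Finset.range N) \ (s ∪ bad) with ht
  have hcard : N ^ Fintype.card ι ≤ 2 * t.card := by
    have hsdiff := Finset.le_card_sdiff (s ∪ bad) (Fintype.piFinset fun _ : ι => Finset.range N)
    rw [Fintype.card_piFinset, Finset.prod_const, Finset.card_range, Finset.card_univ, ← ht]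
      at hsdiff
    have hunion := Finset.card_union_le s bad
    have hpow := Nat.le_self_pow (Fintype.card_ne_zero (α := ι)) N
    omega
  have hlower : t.card • (ε * ((N : ℝ) ^ Fintype.card ι)⁻¹) ≤ ∑ n ∈ t, g n := by
    refine Finset.card_nsmul_le_sum _ _ _ fun n hn => ?_
    simp only [t, Finset.mem_sdiff, Finset.mem_union, not_or, Fintype.mem_piFinset,
      Finset.mem_range] at hn
    exact h N (by omega) n hn.1 hn.2.2
  have hhalf : ε / 2 ≤ t.card • (ε * ((N : ℝ) ^ Fintype.card ι)⁻¹) := by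
    have hcard' : (N : ℝ) ^ Fintype.card ι ≤ 2 * t.card := by exact_mod_cast hcard
    have hNpos : (0 : ℝ) < N := by
      rw [hN]
      positivity
    rw [nsmul_eq_mul, ← mul_assoc, ← div_eq_mul_inv, le_div_iff₀ (by positivity)]
    nlinarith
  refine (hhalf.trans hlower).not_gt (hs t ?_)
  exact Finset.disjoint_left.2 fun n hn hns =>
    (Finset.mem_sdiff.1 hn).2 (Finset.mem_union_left _ hns)

theorem exists_injective_of_or_add_single {ι : Type*} [DecidableEq ι] (i₀ : ι)
    {p : (ι → ℤ) → Prop} (hp : ∀ z, p z ∨ p (z + Pi.single i₀ 1)) :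
    ∃ Z : (ι → ℕ) → ι → ℤ, Function.Injective Z ∧
      (∀ n i, 0 ≤ Z n i ∧ Z n i ≤ 2 * n i + 1) ∧ ∀ n, p (Z n) := by
  have hZ : ∀ n : ι → ℕ, ∃ z : ι → ℤ, (∀ i, 2 * (n i : ℤ) ≤ z i ∧ z i ≤ 2 * n i + 1) ∧ p z := by
    intro n
    rcases hp fun i => 2 * (n i : ℤ) with h | h
    · exact ⟨_, fun i => ⟨le_rfl, by omega⟩, h⟩
    · refine ⟨_, fun i => ?_, h⟩
      rcases eq_or_ne i i₀ with rfl | hi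
      · simp
      · simp [hi]
  choose Z hbound hpZ using hZ
  refine ⟨Z, fun m n hmn => funext fun i => ?_, fun n i => ?_, hpZ⟩
  · have hm := hbound m i
    have hn := hbound n i
    rw [hmn] at hm
    omega
  · have hn := hbound n i
    omega

theorem eq_of_linearCombination_eq_or_eq_neg {ι A : Type*} [Fintype ι] [AddCommGroup A]
    {P : ι → A} (hP : LinearIndependent ℤ P) {z w : ι → ℤ} (hz : ∀ i, 0 ≤ z i) (hw : ∀ i, 0 ≤ w i)
    (h : Fintype.linearCombination ℤ P z = Fintype.linearCombination ℤ P w ∨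
      Fintype.linearCombination ℤ P z = -Fintype.linearCombination ℤ P w) : z = w := by
  have hinj := linearIndependent_iff_injective_fintypeLinearCombination.1 hP
  rcases h with h | h
  · exact hinj h
  · rw [← map_neg] at h
    have hzw := hinj h
    funext i
    have hi := congrFun hzw i
    have hzi := hz i
    have hwi := hw i
    rw [Pi.neg_apply] at hi
    omega

theorem IsQuadraticHeight.exists_map_linearCombination_le {A : Type*} [AddCommGroup A] {H : A → ℝ}
    (hH : IsQuadraticHeight H) {r : ℕ} (P : Fin r → A) : ∃ B : ℝ, 0 ≤ B ∧
      ∀ (M : ℝ) (z : Fin r → ℤ), (∀ i, |(z i : ℝ)| ≤ M) →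
        H (Fintype.linearCombination ℤ P z) ≤ B * M ^ 2 := by
  refine ⟨2 ^ r * ∑ i, H (P i), mul_nonneg (by positivity)
    (Finset.sum_nonneg fun i _ => hH.nonneg (P i)), fun M z hz => ?_⟩
  rw [Fintype.linearCombination_apply]
  refine (hH.map_sum_le _).trans ?_
  rw [mul_assoc, Finset.sum_mul]
  gcongr with i
  rw [hH.map_zsmul, mul_comm, ← sq_abs]
  exact mul_le_mul_of_nonneg_left (pow_le_pow_left₀ (abs_nonneg _) (hz i) 2) (hH.nonneg _)

theorem finite_setOf_naiveHeight_le (hD : D ≠ 0) (B : ℝ) :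
    {P : (twist a b c D).Point | naiveHeight P ≤ B}.Finite := by
  obtain ⟨K, hK⟩ := exists_card_le_of_naiveHeight_le a b c B
  by_contra hinf
  obtain ⟨S, hS, hcard⟩ := Set.Infinite.exists_subset_card_eq hinf (K + 1)
  have hle := hK D hD S fun P hP => hS hP
  omega

theorem mul_inv_pow_le_rpow_neg {B M : ℝ} {N r : ℕ} (hj : 0 ≤ j) (hr : 2 * j ≤ r) (hN : 0 < N)
    (hB : 0 < B) (hM : 0 < M) (hMB : M ≤ B * (N : ℝ) ^ 2) :
    B ^ (-j) * ((N : ℝ) ^ r)⁻¹ ≤ M ^ (-j) := by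
  have hN1 : (1 : ℝ) ≤ N := by exact_mod_cast hN
  have hpow : ((N : ℝ) ^ r)⁻¹ ≤ ((N : ℝ) ^ 2) ^ (-j) := by
    rw [← Real.rpow_natCast (N : ℝ) r, ← Real.rpow_neg (by positivity),
      ← Real.rpow_natCast (N : ℝ) 2, ← Real.rpow_mul (by positivity)]
    refine Real.rpow_le_rpow_of_exponent_le hN1 ?_
    push_cast
    linarith
  calc B ^ (-j) * ((N : ℝ) ^ r)⁻¹ ≤ B ^ (-j) * ((N : ℝ) ^ 2) ^ (-j) := by gcongr
    _ = (B * (N : ℝ) ^ 2) ^ (-j) := (Real.mul_rpow hB.le (by positivity)).symm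
    _ ≤ M ^ (-j) := Real.rpow_le_rpow_of_nonpos hM hMB (by linarith)

theorem exists_awayFromTwoTorsion_family (hf : DistinctRoots a b c) (hD : D ≠ 0) {r : ℕ}
    (hr : 0 < r) {P : Fin r → (twist a b c D).Point} (hP : LinearIndependent ℤ P) :
    ∃ (κ B : ℝ) (R : (Fin r → ℕ) → (twist a b c D).Point), 0 < κ ∧ 0 ≤ B ∧
      (∀ n, AwayFromTwoTorsion κ (R n)) ∧ (∀ m n, R m = R n ∨ R m = -R n → m = n) ∧
      ∀ (N : ℕ) (n : Fin r → ℕ), 0 < N → (∀ i, n i < N) → naiveHeight (R n) ≤ B * (N : ℝ) ^ 2 := by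
  obtain ⟨C, hC, hcan⟩ := exists_canonicalHeight hf
  obtain ⟨H, hH, hHC⟩ := hcan D hD
  obtain ⟨B, hB, hHB⟩ := hH.exists_map_linearCombination_le P
  let i₀ : Fin r := ⟨0, hr⟩
  let L := Fintype.linearCombination ℤ P
  have hdouble : P i₀ + P i₀ ≠ 0 := fun h0 => by
    have h2 := linearIndependent_iff_injective_fintypeLinearCombination.1 hP
      (a₁ := Pi.single i₀ 2) (a₂ := 0) (by
        rw [Fintype.linearCombination_apply_single, map_zero, two_zsmul, h0])
    simpa using congrFun h2 i₀
  obtain ⟨κ, hκ, haway⟩ := exists_awayFromTwoTorsion_or_add hf hD hdouble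
  obtain ⟨Z, hZinj, hZ, hZaway⟩ := exists_injective_of_or_add_single i₀
    (p := fun z => AwayFromTwoTorsion κ (L z)) fun z => by
      simpa [L, map_add, Fintype.linearCombination_apply_single] using haway (L z)
  refine ⟨κ, 4 * B + C, fun n => L (Z n), hκ, by positivity, hZaway, fun m n h => hZinj ?_,
    fun N n hN hn => ?_⟩
  · exact eq_of_linearCombination_eq_or_eq_neg hP (fun i => (hZ m i).1) (fun i => (hZ n i).1) h
  · have hN1 : (1 : ℝ) ≤ (N : ℝ) ^ 2 := one_le_pow₀ (by exact_mod_cast hN)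
    have hbound := hHB (2 * N) (Z n) fun i => by
      have hle : |Z n i| ≤ 2 * N := by
        rw [abs_of_nonneg (hZ n i).1]
        have := hZ n i
        have := hn i
        omega
      exact_mod_cast hle
    have hnaive := abs_le.1 (hHC (L (Z n)))
    nlinarith

theorem QConv.exists_summable_of_awayFromTwoTorsion (hω : IsShortestChoice a b c ω) (hj : 0 ≤ j)
    (hk : 0 ≤ k) (hQ : QConv a b c j k ω) (hD : D ≠ 0) {κ : ℝ} (hκ : 0 < κ) {ι : Type*}
    {R : ι → (twist a b c D).Point} (haway : ∀ n, AwayFromTwoTorsion κ (R n))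
    (hinj : ∀ m n, R m = R n ∨ R m = -R n → m = n) :
    ∃ A B : ℝ, 0 ≤ A ∧ Summable ({n | B < naiveHeight (R n)}.indicator
      fun n => max 1 (2 * naiveHeight (R n) + A) ^ (-j)) := by
  obtain ⟨C, A, B, hC, hA, hterm⟩ := hω.exists_le_QTerm_of_awayFromTwoTorsion hj hk hD hκ
  have hindex : ∀ n : {n | B < naiveHeight (R n)}, ∃ x : QIdx a b c ω,
      twistX (R n) = (ω x.1.1 x.1.2.1 x.1.2.2).1 / (ω x.1.1 x.1.2.1 x.1.2.2).2 ∧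
        C * max 1 (2 * naiveHeight (R n) + A) ^ (-j) ≤ QTerm j k ω x := fun n =>
    let ⟨x, hx, hxR, hxQ⟩ := hterm (R n) (haway n) n.2
    ⟨⟨x, hx⟩, hxR, hxQ⟩
  choose x hxR hxQ using hindex
  have hxinj : Function.Injective x := fun m n h =>
    Subtype.ext (hinj m n (eq_or_eq_neg_of_twistX_eq hD (haway m).1 (haway n).1 (by
      rw [hxR m, hxR n, h])))
  refine ⟨A, B, hA, summable_subtype_iff_indicator.1 ((summable_mul_left_iff hC.ne').1 ?_)⟩
  exact Summable.of_nonneg_of_le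
    (fun n => mul_nonneg hC.le (Real.rpow_nonneg (zero_le_one.trans (le_max_left _ _)) _))
    hxQ (hQ.comp_injective hxinj)

theorem not_linearIndependent_of_QConv (hf : DistinctRoots a b c) (hω : IsShortestChoice a b c ω)
    (hj : 0 < j) (hk : 0 ≤ k) (hQ : QConv a b c j k ω) {r : ℕ} (hr : 2 * j ≤ r) (hD : D ≠ 0)
    (P : Fin r → (twist a b c D).Point) : ¬ LinearIndependent ℤ P := by
  intro hP
  have hr0 : 0 < r := by
    have : (0 : ℝ) < r := by linarith
    exact_mod_cast this
  have : NeZero r := ⟨hr0.ne'⟩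
  obtain ⟨κ, B, R, hκ, hB, haway, hinj, hheight⟩ := exists_awayFromTwoTorsion_family hf hD hr0 hP
  obtain ⟨A, B₀, hA, hsum⟩ :=
    hQ.exists_summable_of_awayFromTwoTorsion hω hj.le hk hD hκ haway hinj
  have hlow : {n | naiveHeight (R n) ≤ B₀}.Finite :=
    (finite_setOf_naiveHeight_le hD B₀).preimage
      (Function.Injective.injOn fun m n h => hinj m n (.inl h))
  refine not_summable_of_inv_pow_le (ε := (1 + 2 * B + A) ^ (-j)) (by positivity)
    hlow.toFinset (fun N hN n hn hnlow => ?_) hsum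
  have hnhigh : n ∈ {n | B₀ < naiveHeight (R n)} := by simpa using hnlow
  have hN1 : (1 : ℝ) ≤ (N : ℝ) ^ 2 := one_le_pow₀ (by exact_mod_cast hN)
  rw [Set.indicator_of_mem hnhigh, Fintype.card_fin]
  refine mul_inv_pow_le_rpow_neg hj.le hr hN (by positivity) (by positivity) (max_le ?_ ?_)
  · nlinarith
  · nlinarith [hheight N n hN hn]

end Divergence

/-! ### Heights along rational functions -/

section HeightGrowth

open Filter Topology Polynomial

theorem exists_abs_log_eval_sub_le {p : ℤ[X]} (hp : p ≠ 0) : ∃ K : ℝ, ∀ᶠ q : ℕ in atTop,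
    p.eval (q : ℤ) ≠ 0 ∧
      |Real.log |((p.eval (q : ℤ) : ℤ) : ℝ)| - p.natDegree * Real.log q| ≤ K := by
  set P : ℝ[X] := p.map (Int.castRingHom ℝ)
  have hPdeg : P.natDegree = p.natDegree := natDegree_map_eq_of_injective Int.cast_injective p
  have hlead : P.leadingCoeff ≠ 0 :=
    leadingCoeff_ne_zero.2 ((Polynomial.map_ne_zero_iff Int.cast_injective).2 hp)
  have hratio : Tendsto (fun x => P.eval x / x ^ p.natDegree) atTop (𝓝 P.leadingCoeff) := by
    have := P.div_tendsto_atTop_leadingCoeff_div_of_degree_eq (X ^ p.natDegree) (by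
      rw [degree_X_pow, ← hPdeg, degree_eq_natDegree (leadingCoeff_ne_zero.1 hlead)])
    simpa using this
  have hlog := ((Real.continuousAt_log hlead).tendsto.comp hratio).comp
    (tendsto_natCast_atTop_atTop (R := ℝ))
  refine ⟨|Real.log P.leadingCoeff| + 1, ?_⟩
  filter_upwards [(hratio.comp tendsto_natCast_atTop_atTop).eventually_ne hlead,
    hlog.eventually (Metric.ball_mem_nhds _ one_pos), eventually_gt_atTop 0] with q hne hball hq
  have heval : P.eval (q : ℝ) = ((p.eval (q : ℤ) : ℤ) : ℝ) := by
    rw [← Int.cast_natCast (R := ℝ) q, eval_intCast_map, eq_intCast, Int.cast_id]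
  simp only [Function.comp_apply, heval] at hne hball
  have hne0 : ((p.eval (q : ℤ) : ℤ) : ℝ) ≠ 0 := left_ne_zero_of_mul hne
  have hq0 : (q : ℝ) ^ p.natDegree ≠ 0 := by positivity
  rw [Real.dist_eq, Real.log_div hne0 hq0, Real.log_pow] at hball
  refine ⟨by exact_mod_cast hne0, ?_⟩
  rw [Real.log_abs]
  have htri := abs_sub_abs_le_abs_sub
    (Real.log ((p.eval (q : ℤ) : ℤ) : ℝ) - p.natDegree * Real.log q) (Real.log P.leadingCoeff)
  linarith

theorem eventually_eval_ne_zero {p : ℤ[X]} (hp : p ≠ 0) :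
    ∀ᶠ q : ℕ in atTop, ((p.eval (q : ℤ) : ℤ) : ℚ) ≠ 0 := by
  obtain ⟨K, hK⟩ := exists_abs_log_eval_sub_le hp
  filter_upwards [hK] with q hq
  exact_mod_cast hq.1

theorem ne_zero_of_eval_ne_zero {p : ℤ[X]} {x : ℤ} (h : p.eval x ≠ 0) : p ≠ 0 := by
  rintro rfl
  exact h eval_zero

theorem eventually_eval_mul_pow_ne_zero {p : ℤ[X]} (hp : p.eval 0 ≠ 0) (e : ℤ) {n : ℕ}
    (hn : n ≠ 0) : ∀ᶠ q : ℕ in atTop, ((p.eval (e * (q : ℤ) ^ n) : ℤ) : ℚ) ≠ 0 := by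
  have hcomp : (p.comp (C e * X ^ n)).eval 0 ≠ 0 := by simpa [hn] using hp
  simpa using eventually_eval_ne_zero (ne_zero_of_eval_ne_zero hcomp)

theorem abs_log_max_sub_logHeight₁_div_le {A B U V r : ℤ} (hB : B ≠ 0) (hr : r ≠ 0)
    (h : U * A + V * B = r) :
    |Real.log (max |(A : ℝ)| |(B : ℝ)|) - Height.logHeight₁ ((A : ℚ) / B)| ≤
      Real.log |(r : ℝ)| := by
  obtain ⟨g, hA', hB'⟩ := Rat.exists_eq_mul_div_num_and_eq_mul_div_den A hB
  rw [Rat.logHeight₁_eq_log_max]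
  set x := (A : ℚ) / B
  have hg0 : g ≠ 0 := by
    rintro rfl
    exact hB (by rw [hB', zero_mul])
  have hgr : g ∣ r := by
    rw [← h, hA', hB']
    exact ⟨U * x.num + V * x.den, by ring⟩
  have hg1 : (1 : ℝ) ≤ |(g : ℝ)| := by exact_mod_cast Int.one_le_abs hg0
  have hgle : |(g : ℝ)| ≤ |(r : ℝ)| := by
    exact_mod_cast Int.le_of_dvd (abs_pos.2 hr) ((abs_dvd_abs g r).2 hgr)
  have hmax : max |(A : ℝ)| |(B : ℝ)| = |(g : ℝ)| * (max x.num.natAbs x.den : ℕ) := by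
    rw [hA', hB', Nat.cast_max, mul_max_of_nonneg _ _ (abs_nonneg _), Nat.cast_natAbs]
    push_cast
    rw [abs_mul, abs_mul, Nat.abs_cast]
  have hden : (max x.num.natAbs x.den : ℕ) ≠ (0 : ℝ) := by
    exact_mod_cast (lt_max_of_lt_right x.den_pos).ne'
  rw [hmax, Real.log_mul (by positivity) hden, add_sub_cancel_right,
    abs_of_nonneg (Real.log_nonneg hg1)]
  exact Real.log_le_log (by positivity) hgle

/-- `X q` has logarithmic height `δ log q + O(1)` as `q → ∞`. -/
def HasHeightGrowth (X : ℕ → ℚ) (δ : ℕ) : Prop :=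
  ∃ K : ℝ, ∀ᶠ q : ℕ in atTop, |Height.logHeight₁ (X q) - δ * Real.log q| ≤ K

theorem HasHeightGrowth.congr {X Y : ℕ → ℚ} {δ : ℕ} (hX : HasHeightGrowth X δ)
    (h : X =ᶠ[atTop] Y) : HasHeightGrowth Y δ := by
  obtain ⟨K, hK⟩ := hX
  refine ⟨K, ?_⟩
  filter_upwards [hK, h] with q hq heq
  rwa [← heq]

theorem HasHeightGrowth.inv {X : ℕ → ℚ} {δ : ℕ} (hX : HasHeightGrowth X δ) :
    HasHeightGrowth (fun q => (X q)⁻¹) δ := by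
  simpa only [HasHeightGrowth, Height.logHeight₁_inv] using hX

theorem hasHeightGrowth_eval_div {A B U V : ℤ[X]} {r : ℤ} (hA : A ≠ 0) (hB : B ≠ 0) (hr : r ≠ 0)
    (h : U * A + V * B = C r) :
    HasHeightGrowth (fun q => ((A.eval (q : ℤ) : ℤ) : ℚ) / ((B.eval (q : ℤ) : ℤ) : ℚ))
      (max A.natDegree B.natDegree) := by
  obtain ⟨K₁, hA⟩ := exists_abs_log_eval_sub_le hA
  obtain ⟨K₂, hB⟩ := exists_abs_log_eval_sub_le hB
  refine ⟨Real.log |(r : ℝ)| + max K₁ K₂, ?_⟩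
  filter_upwards [hA, hB] with q ⟨hA0, hA⟩ ⟨hB0, hB⟩
  have hbezout := abs_log_max_sub_logHeight₁_div_le hB0 hr (by
    simpa using congrArg (eval (q : ℤ)) h)
  have hAR : (0 : ℝ) < |((A.eval (q : ℤ) : ℤ) : ℝ)| := abs_pos.2 (by exact_mod_cast hA0)
  have hBR : (0 : ℝ) < |((B.eval (q : ℤ) : ℤ) : ℝ)| := abs_pos.2 (by exact_mod_cast hB0)
  rw [Real.strictMonoOn_log.monotoneOn.map_max hAR hBR] at hbezout
  have hmax := (abs_max_sub_max_le_max _ _ _ _).trans (max_le_max hA hB)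
  rw [← max_mul_of_nonneg _ _ (Real.log_natCast_nonneg q), ← Nat.cast_max] at hmax
  exact (abs_sub_le _ _ _).trans (add_le_add ((abs_sub_comm _ _).trans_le hbezout) hmax)

theorem hasHeightGrowth_mul_eval_div_eval {r s U V : ℤ[X]} {ρ d e : ℤ} {m n : ℕ}
    (hr : r.natDegree = m) (hs : s.natDegree = m) (hm : 0 < m) (hd : d ≠ 0) (he : e ≠ 0)
    (hn : n ≠ 0) (hρ : ρ ≠ 0) (h : U * (X * r) + V * s = C ρ) :
    HasHeightGrowth (fun q => d * q * ((r.eval (d * e * (q : ℤ) ^ n) : ℤ) : ℚ) /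
      ((s.eval (d * e * (q : ℤ) ^ n) : ℤ) : ℚ)) (m * n + 1) := by
  set Z : ℤ[X] := C (d * e) * X ^ n with hZ
  have hcomp (p : ℤ[X]) (hp : p.natDegree = m) : (p.comp Z).natDegree = m * n := by
    rw [natDegree_comp, natDegree_C_mul_X_pow _ _ (mul_ne_zero hd he), hp]
  have hmn : 0 < m * n := Nat.mul_pos hm hn.bot_lt
  have hs0 : s.comp Z ≠ 0 := ne_zero_of_natDegree_gt ((hcomp s hs).symm ▸ hmn)
  have hr0 : C d * r.comp Z ≠ 0 :=
    mul_ne_zero (C_ne_zero.2 hd) (ne_zero_of_natDegree_gt ((hcomp r hr).symm ▸ hmn))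
  have hdeg : (C d * r.comp Z * X).natDegree = m * n + 1 := by
    rw [natDegree_mul_X hr0, natDegree_C_mul hd, hcomp r hr]
  have hbezout : U.comp Z * C e * X ^ (n - 1) * (C d * r.comp Z * X) + V.comp Z * s.comp Z =
      C ρ := by
    have hZ' : C e * X ^ (n - 1) * (C d * X) = Z := by
      rw [hZ, C_mul, ← pow_sub_one_mul hn]
      ring
    have := congrArg (·.comp Z) h
    simp only [add_comp, mul_comp, X_comp, C_comp] at this
    rw [← this]
    linear_combination U.comp Z * r.comp Z * hZ'
  have hgrowth := hasHeightGrowth_eval_div (mul_ne_zero hr0 X_ne_zero) hs0 hρ hbezout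
  rw [hdeg, hcomp s hs, max_eq_left (Nat.le_succ _)] at hgrowth
  simpa [hZ, mul_right_comm] using hgrowth

theorem exists_abs_logHeight₁_sub_div_sub_le (a : ℚ) {d : ℚ} (hd : d ≠ 0) :
    ∃ K : ℝ, ∀ X : ℚ, |Height.logHeight₁ ((X - a) / d) - Height.logHeight₁ X| ≤ K := by
  refine ⟨Height.totalWeight ℚ * Real.log 2 + Height.logHeight₁ a + Height.logHeight₁ d,
    fun X => ?_⟩
  have hdiv := Height.logHeight₁_mul_le (X - a) d⁻¹
  rw [Height.logHeight₁_inv, ← div_eq_mul_inv] at hdiv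
  have hsub := Height.logHeight₁_sub_le X a
  have hmul := Height.logHeight₁_mul_le d ((X - a) / d)
  rw [mul_div_cancel₀ _ hd] at hmul
  have hadd := Height.logHeight₁_add_le (X - a) a
  rw [sub_add_cancel] at hadd
  rw [abs_le]
  constructor <;> linarith

theorem HasHeightGrowth.sub_div {X : ℕ → ℚ} {δ : ℕ} (hX : HasHeightGrowth X δ) (a : ℚ) {d : ℚ}
    (hd : d ≠ 0) : HasHeightGrowth (fun q => (X q - a) / d) δ := by
  obtain ⟨K, hX⟩ := hX
  obtain ⟨L, hL⟩ := exists_abs_logHeight₁_sub_div_sub_le a hd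
  exact ⟨L + K, hX.mono fun q hq => (abs_sub_le _ _ _).trans (add_le_add (hL _) hq)⟩

theorem HasHeightGrowth.exists_injective_subseq {X : ℕ → ℚ} {δ : ℕ} (hX : HasHeightGrowth X δ)
    (hδ : 0 < δ) {p : ℕ → Prop} (hp : ∀ᶠ q in atTop, p q) :
    ∃ (u : ℕ → ℕ) (A : ℝ), 0 ≤ A ∧ (∀ i, p (u i)) ∧ Function.Injective (fun i => X (u i)) ∧
      ∀ i : ℕ, Height.logHeight₁ (X (u i)) ≤ A * (i + 1) := by
  obtain ⟨K, hX⟩ := hX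
  obtain ⟨Q, hQ⟩ := eventually_atTop.1 (hX.and (hp.and (eventually_gt_atTop 0)))
  have hK : 0 ≤ K := (abs_nonneg _).trans (hQ Q le_rfl).1
  have hQ0 : 0 < Q := (hQ Q le_rfl).2.2
  obtain ⟨n, hn⟩ := exists_nat_gt (Real.exp (2 * K))
  have hn0 : (0 : ℝ) < n := (Real.exp_pos _).trans hn
  have hlogn : 2 * K < Real.log n := (Real.lt_log_iff_exp_lt hn0).2 hn
  have hn1 : 1 ≤ n := by exact_mod_cast hn0
  have hδ1 : (1 : ℝ) ≤ δ := by exact_mod_cast hδ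
  have hu (i : ℕ) := hQ (Q * n ^ i) (Nat.le_mul_of_pos_right _ (by positivity))
  have hlog (i : ℕ) : Real.log ((Q * n ^ i : ℕ) : ℝ) = Real.log Q + i * Real.log n := by
    push_cast
    rw [Real.log_mul (by positivity) (by positivity), Real.log_pow]
  have hmono : StrictMono fun i => Height.logHeight₁ (X (Q * n ^ i)) :=
    strictMono_nat_of_lt_succ fun i => by
      have hi := abs_le.1 (hu i).1
      have hsucc := abs_le.1 (hu (i + 1)).1
      rw [hlog] at hi hsucc
      push_cast at hsucc
      nlinarith
  have := Real.log_natCast_nonneg Q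
  refine ⟨fun i => Q * n ^ i, K + δ * Real.log Q + δ * Real.log n, by positivity,
    fun i => (hu i).2.1, fun i j hij => hmono.injective (congrArg _ hij), fun i => ?_⟩
  have hi := abs_le.1 (hu i).1
  rw [hlog] at hi
  have : 0 ≤ (K + δ * Real.log Q) * i + δ * Real.log n := by positivity
  linarith

end HeightGrowth

/-! ### Twists carrying two prescribed abscissas -/

section TwoPoints

open Finset WeierstrassCurve.Affine

variable {a b c : ℤ}

theorem exists_point_of_eq_mul_sq (hf : DistinctRoots a b c) {D : ℤ} (hD : D ≠ 0) {x t : ℚ}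
    (ht : t ≠ 0) (h : x ^ 3 + a * x ^ 2 + b * x + c = D * t ^ 2) :
    ∃ P : (twist a b c D).Point, P + P ≠ 0 ∧ twistX P = x := by
  have hDq : (D : ℚ) ≠ 0 := by exact_mod_cast hD
  have hns : (twist a b c D).Nonsingular (D * x) (D ^ 2 * t) :=
    twist_nonsingular hf hD (by linear_combination -(D : ℚ) ^ 3 * h)
  refine ⟨.some _ _ hns, (some_add_self_eq_zero_iff hns).not.2 (by positivity), ?_⟩
  rw [twistX_some, mul_div_cancel_left₀ _ hDq]

theorem exists_points_of_mul_eq_sq (hf : DistinctRoots a b c) {x₁ x₂ y : ℚ}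
    (h : (x₁ ^ 3 + a * x₁ ^ 2 + b * x₁ + c) * (x₂ ^ 3 + a * x₂ ^ 2 + b * x₂ + c) = y ^ 2)
    (hy : y ≠ 0) :
    ∃ D : ℤ, Squarefree D ∧ (x₁.num, (x₁.den : ℤ)) ∈ PsiTwist a b c D ∧
      ∃ P Q : (twist a b c D).Point, P + P ≠ 0 ∧ Q + Q ≠ 0 ∧ twistX P = x₁ ∧ twistX Q = x₂ := by
  have hden : (x₁.den : ℤ) ≠ 0 := by exact_mod_cast x₁.den_nz
  have hdenq : (x₁.den : ℚ) ≠ 0 := by exact_mod_cast x₁.den_nz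
  have hF := Fbin_eq_pow_mul (a := a) (b := b) (c := c) (u := x₁.num) hden
  rw [Int.cast_natCast, Rat.num_div_den] at hF
  have hf₁ : x₁ ^ 3 + a * x₁ ^ 2 + b * x₁ + c ≠ 0 :=
    left_ne_zero_of_mul (h ▸ pow_ne_zero 2 hy)
  have hF0 : Fbin a b c x₁.num x₁.den ≠ 0 := by
    have : (Fbin a b c x₁.num x₁.den : ℚ) ≠ 0 := hF ▸ mul_ne_zero (pow_ne_zero 4 hdenq) hf₁
    exact_mod_cast this
  obtain ⟨D, s, hD, hs⟩ := exists_eq_squarefree_mul_sq hF0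
  have hDq : (D : ℚ) ≠ 0 := by exact_mod_cast hD.ne_zero
  have hsq : (s : ℚ) ≠ 0 := by
    rintro h0
    exact hF0 (by rw [hs, Nat.cast_eq_zero.1 h0, Nat.cast_zero, sq, mul_zero, mul_zero])
  rw [hs] at hF
  push_cast at hF
  have h₁ : x₁ ^ 3 + a * x₁ ^ 2 + b * x₁ + c = D * (s / x₁.den ^ 2) ^ 2 := by
    field_simp
    linear_combination -hF
  have h₂ : x₂ ^ 3 + a * x₂ ^ 2 + b * x₂ + c = D * (y / (D * (s / x₁.den ^ 2))) ^ 2 := by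
    refine mul_left_cancel₀ hf₁ (h.trans ?_)
    rw [h₁]
    field_simp
  obtain ⟨P, hP, hxP⟩ := exists_point_of_eq_mul_sq hf hD.ne_zero (by positivity) h₁
  obtain ⟨Q, hQ, hxQ⟩ := exists_point_of_eq_mul_sq hf hD.ne_zero (by positivity) h₂
  exact ⟨D, hD, ⟨⟨x₁.reduced, hF0⟩, s, hs⟩, P, Q, hP, hQ, hxP, hxQ⟩

theorem exists_card_le_of_logHeight₁_le (hf : DistinctRoots a b c) {r : ℕ}
    (hr : ∀ D : ℤ, D ≠ 0 → ¬∃ P : Fin (r + 1) → (twist a b c D).Point, LinearIndependent ℤ P) :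
    ∃ C : ℝ, ∀ D : ℤ, Squarefree D → ∀ B : ℝ, 1 ≤ B → ∀ T : Finset ℚ,
      (∀ x ∈ T, (x.num, (x.den : ℤ)) ∈ PsiTwist a b c D) →
        (∀ x ∈ T, Height.logHeight₁ x ≤ B) → (#T : ℝ) ≤ C * B ^ ((r : ℝ) / 2) := by
  classical
  obtain ⟨C, -, hcard⟩ := exists_card_le_of_ht_le hf hr
  refine ⟨C, fun D hD B hB T hmem hT => ?_⟩
  let p (x : ℚ) : ℤ × ℤ := (x.num, (x.den : ℤ))
  have hp : Function.Injective p := fun x y hxy =>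
    Rat.ext (congrArg Prod.fst hxy) (Int.ofNat_inj.1 (congrArg Prod.snd hxy))
  rw [← card_image_of_injective T hp]
  refine hcard D hD B hB _ (fun z hz => ?_) fun z hz => ?_
  all_goals obtain ⟨x, hx, rfl⟩ := mem_image.1 hz
  · exact hmem x hx
  · rw [ht_eq_max_logHeight₁ (hmem x hx).1.1 (snd_ne_zero_of_mem_Psi (hmem x hx).1),
      Int.cast_natCast, Rat.num_div_den]
    exact (max_le hB (hT x hx)).trans
      (le_mul_of_one_le_right (by positivity) (le_max_left _ _))

theorem not_injective_of_mem_PsiTwist_of_mem (hf : DistinctRoots a b c)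
    (hr : ∀ D : ℤ, D ≠ 0 → ¬∃ P : Fin 2 → (twist a b c D).Point, LinearIndependent ℤ P)
    {x : ℕ → ℚ} {A : ℝ} (hA : 0 ≤ A) (hx : ∀ i : ℕ, Height.logHeight₁ (x i) ≤ A * (i + 1))
    {S : Finset ℤ} {D : ℕ → ℤ} (hS : ∀ i, D i ∈ S) (hD : ∀ i, Squarefree (D i))
    (hmem : ∀ i, ((x i).num, ((x i).den : ℤ)) ∈ PsiTwist a b c (D i)) :
    ¬Function.Injective x := by
  intro hinj
  obtain ⟨C, hcard⟩ := exists_card_le_of_logHeight₁_le hf (r := 1) hr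
  obtain ⟨n, hn⟩ := exists_nat_gt (max 1 (C ^ 2 * ((1 + A) * #S)))
  have hn1 : (1 : ℝ) < n := (le_max_left _ _).trans_lt hn
  have hS0 : S.Nonempty := ⟨D 0, hS 0⟩
  have hN1 : 1 ≤ #S * (n : ℝ) :=
    one_le_mul_of_one_le_of_one_le (by exact_mod_cast hS0.card_pos) hn1.le
  obtain ⟨d, -, hd⟩ := exists_le_card_fiber_of_mul_le_card_of_maps_to (s := range (#S * n))
    (fun i _ => hS i) hS0 (n := n) (by rw [card_range])
  set I : Finset ℕ := {i ∈ range (#S * n) | D i = d}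
  obtain ⟨i₀, hi₀⟩ : I.Nonempty :=
    card_pos.1 (lt_of_lt_of_le (by exact_mod_cast zero_lt_one.trans hn1) hd)
  have hbound := hcard d ((mem_filter.1 hi₀).2 ▸ hD i₀) ((1 + A) * (#S * n))
    (one_le_mul_of_one_le_of_one_le (by linarith) hN1) (I.map ⟨x, hinj⟩)
    (forall_mem_map.2 fun i hi => (mem_filter.1 hi).2 ▸ hmem i)
    (forall_mem_map.2 fun i hi => by
      have hi1 : (i : ℝ) + 1 ≤ #S * n := by
        exact_mod_cast mem_range.1 (mem_filter.1 hi).1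
      exact (hx i).trans (by gcongr; linarith))
  rw [card_map, Nat.cast_one, ← Real.sqrt_eq_rpow] at hbound
  have hsq : (n : ℝ) ^ 2 ≤ C ^ 2 * ((1 + A) * (#S * n)) :=
    calc (n : ℝ) ^ 2 ≤ (C * √((1 + A) * (#S * n))) ^ 2 := by
          gcongr
          exact le_trans (by exact_mod_cast hd) hbound
      _ = C ^ 2 * ((1 + A) * (#S * n)) := by rw [mul_pow, Real.sq_sqrt (by positivity)]
  nlinarith [(le_max_right _ _).trans_lt hn]

end TwoPoints

section RankOne

open Filter

theorem exists_zsmul_mod_torsion_of_not_linearIndependent {A : Type*} [AddCommGroup A]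
    (hr : ¬∃ P : Fin 2 → A, LinearIndependent ℤ P) (P Q : A) :
    ∃ (R : A) (m n : ℤ), IsOfFinAddOrder (P - m • R) ∧ IsOfFinAddOrder (Q - n • R) := by
  classical
  obtain ⟨s, hs, e, he⟩ := exists_fin_generators_mod_torsion (r := 1) hr {P, Q}
  obtain ⟨z, hz⟩ := he P (by simp)
  obtain ⟨w, hw⟩ := he Q (by simp)
  interval_cases s
  · exact ⟨0, 0, 0, by simpa using hz, by simpa using hw⟩
  · exact ⟨e 0, z 0, w 0, by simpa using hz, by simpa using hw⟩

variable {a b c : ℤ}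

theorem exists_add_self_eq_zero_of_isOfFinAddOrder (hf : DistinctRoots a b c) :
    ∃ B : ℝ, ∀ D : ℤ, Squarefree D → B < Real.log |(D : ℝ)| →
      ∀ T : (twist a b c D).Point, IsOfFinAddOrder T → T + T = 0 := by
  obtain ⟨C, _, _, -, -, hH⟩ := exists_uniform_canonicalHeight hf
  obtain ⟨C', -, hlog⟩ := exists_log_abs_le_naiveHeight a b c
  refine ⟨4 * C + C', fun D hD hlt T hT => ?_⟩
  obtain ⟨H, hquad, hnaive, -⟩ := hH D hD
  by_contra hne
  have hT0 := abs_le.1 (hnaive T)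
  rw [hquad.map_of_isOfFinAddOrder hT] at hT0
  linarith [hlog hD T hne]

theorem exists_zsmul_relation_of_abs_naiveHeight_le (hf : DistinctRoots a b c) (p q : ℕ) (K : ℝ) :
    ∃ B : ℝ, ∀ D : ℤ, Squarefree D → B < Real.log |(D : ℝ)| →
      (¬∃ P : Fin 2 → (twist a b c D).Point, LinearIndependent ℤ P) →
      ∀ P Q : (twist a b c D).Point, |p * naiveHeight P - q * naiveHeight Q| ≤ K →
        ∃ (R : (twist a b c D).Point) (m n : ℤ), IsOfFinAddOrder (P - m • R) ∧
          IsOfFinAddOrder (Q - n • R) ∧ p * m ^ 2 = q * n ^ 2 := by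
  obtain ⟨C, c₀, _, -, hc₀, hH⟩ := exists_uniform_canonicalHeight hf
  refine ⟨(K + (p + q) * C) / c₀, fun D hD hlt hr P Q hPQ => ?_⟩
  obtain ⟨H, hquad, hnaive, hlow, -⟩ := hH D hD
  obtain ⟨R, m, n, hm, hn⟩ := exists_zsmul_mod_torsion_of_not_linearIndependent hr P Q
  by_cases hR : IsOfFinAddOrder R
  · refine ⟨0, 0, 0, ?_, ?_, by simp⟩
    · simpa using hm.add (hR.zsmul (i := m))
    · simpa using hn.add (hR.zsmul (i := n))
  refine ⟨R, m, n, hm, hn, ?_⟩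
  have hHR : K + (p + q) * C < H R := by
    refine lt_of_lt_of_le ?_ (not_lt.1 fun h => hR (hlow R h))
    rw [div_lt_iff₀' hc₀] at hlt
    exact hlt.trans_le (mul_le_mul_of_nonneg_left (le_max_right _ _) hc₀.le)
  have hHP : H P = m ^ 2 * H R := by
    rw [hquad.map_eq_of_isOfFinAddOrder_sub hm, hquad.map_zsmul]
  have hHQ : H Q = n ^ 2 * H R := by
    rw [hquad.map_eq_of_isOfFinAddOrder_sub hn, hquad.map_zsmul]
  have hdiff : |(p * m ^ 2 - q * n ^ 2 : ℝ)| * H R ≤ K + (p + q) * C := by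
    have hP := mul_le_mul_of_nonneg_left (hnaive P) (Nat.cast_nonneg (α := ℝ) p)
    have hQ := mul_le_mul_of_nonneg_left (hnaive Q) (Nat.cast_nonneg (α := ℝ) q)
    rw [← Nat.abs_cast, ← abs_mul, abs_le, Nat.abs_cast] at hP hQ
    have hPQ := abs_le.1 hPQ
    rw [← abs_of_nonneg (hquad.nonneg R), ← abs_mul, sub_mul, mul_assoc, mul_assoc, ← hHP, ← hHQ,
      abs_le]
    constructor <;> linarith
  by_contra hne
  have hone : (1 : ℝ) ≤ |(p * m ^ 2 - q * n ^ 2 : ℝ)| := by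
    exact_mod_cast Int.one_le_abs (sub_ne_zero.2 hne)
  nlinarith [hquad.nonneg R]

theorem HasHeightGrowth.frequently_lt_log_of_mem_PsiTwist (hf : DistinctRoots a b c)
    (hr : ∀ D : ℤ, D ≠ 0 → ¬∃ P : Fin 2 → (twist a b c D).Point, LinearIndependent ℤ P)
    {x : ℕ → ℚ} {δ : ℕ} (hx : HasHeightGrowth x δ) (hδ : 0 < δ) (B : ℝ) :
    ∃ᶠ q in atTop, ∀ D : ℤ, Squarefree D →
      ((x q).num, ((x q).den : ℤ)) ∈ PsiTwist a b c D → B < Real.log |(D : ℝ)| := by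
  by_contra hcon
  rw [not_frequently] at hcon
  push Not at hcon
  obtain ⟨u, A, hA, hu, hinj, hht⟩ := hx.exists_injective_subseq hδ hcon
  choose D hD hmem hlog using hu
  obtain ⟨M, hM⟩ := exists_nat_gt (Real.exp B)
  refine not_injective_of_mem_PsiTwist_of_mem hf hr hA hht (S := Finset.Icc (-M) M)
    (fun i => ?_) hD hmem hinj
  have hpos : 0 < |(D i : ℝ)| := abs_pos.2 (by exact_mod_cast (hD i).ne_zero)
  have hle : |(D i : ℝ)| ≤ M := ((Real.log_le_iff_le_exp hpos).1 (hlog i)).trans hM.le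
  exact Finset.mem_Icc.2 (abs_le.1 (by exact_mod_cast hle))

theorem HasHeightGrowth.frequently_exists_zsmul_relation (hf : DistinctRoots a b c)
    (hr : ∀ D : ℤ, D ≠ 0 → ¬∃ P : Fin 2 → (twist a b c D).Point, LinearIndependent ℤ P)
    {x₁ x₂ : ℕ → ℚ} {δ₁ δ₂ : ℕ} (hx₁ : HasHeightGrowth x₁ δ₁) (hx₂ : HasHeightGrowth x₂ δ₂)
    (hδ₁ : 0 < δ₁) (hsq : ∀ᶠ q in atTop, ∃ y ≠ 0, (x₁ q ^ 3 + a * x₁ q ^ 2 + b * x₁ q + c) *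
      (x₂ q ^ 3 + a * x₂ q ^ 2 + b * x₂ q + c) = y ^ 2) (B : ℝ) :
    ∃ᶠ q in atTop, ∃ D : ℤ, Squarefree D ∧ B < Real.log |(D : ℝ)| ∧
      ∃ (P Q R : (twist a b c D).Point) (m n : ℤ), P + P ≠ 0 ∧ Q + Q ≠ 0 ∧
        twistX P = x₁ q ∧ twistX Q = x₂ q ∧ IsOfFinAddOrder (P - m • R) ∧
        IsOfFinAddOrder (Q - n • R) ∧ δ₂ * m ^ 2 = δ₁ * n ^ 2 := by
  obtain ⟨K₁, hK₁⟩ := id hx₁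
  obtain ⟨K₂, hK₂⟩ := hx₂
  obtain ⟨B', hB'⟩ := exists_zsmul_relation_of_abs_naiveHeight_le hf δ₂ δ₁ (δ₂ * K₁ + δ₁ * K₂)
  refine ((hx₁.frequently_lt_log_of_mem_PsiTwist hf hr hδ₁ (max B B')).and_eventually
    (hsq.and (hK₁.and hK₂))).mono ?_
  rintro q ⟨hlog, ⟨y, hy, hsq⟩, hK₁, hK₂⟩
  obtain ⟨D, hD, hmem, P, Q, hP, hQ, hxP, hxQ⟩ := exists_points_of_mul_eq_sq hf hsq hy
  obtain ⟨hB, hB'lt⟩ := max_lt_iff.1 (hlog D hD hmem)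
  have hheight : |δ₂ * naiveHeight P - δ₁ * naiveHeight Q| ≤ δ₂ * K₁ + δ₁ * K₂ := by
    rw [naiveHeight, naiveHeight, hxP, hxQ]
    have h₁ := mul_le_mul_of_nonneg_left hK₁ (Nat.cast_nonneg (α := ℝ) δ₂)
    have h₂ := mul_le_mul_of_nonneg_left hK₂ (Nat.cast_nonneg (α := ℝ) δ₁)
    rw [← Nat.abs_cast, ← abs_mul, abs_le, Nat.abs_cast] at h₁ h₂
    rw [abs_le]
    constructor <;> linarith
  obtain ⟨R, m, n, hm, hn, hrel⟩ := hB' D hD hB'lt (hr D hD.ne_zero) P Q hheight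
  exact ⟨D, hD, hB, P, Q, R, m, n, hP, hQ, hxP, hxQ, hm, hn, hrel⟩

theorem add_self_eq_or_eq_neg_of_sq_eq {A : Type*} [AddCommGroup A] {P Q R : A} {m n : ℤ}
    (htors : ∀ T : A, IsOfFinAddOrder T → T + T = 0) (hP : IsOfFinAddOrder (P - m • R))
    (hQ : IsOfFinAddOrder (Q - n • R)) (hmn : m ^ 2 = n ^ 2) :
    P + P = Q + Q ∨ P + P = -(Q + Q) := by
  have hP2 : P + P = (m + m) • R := by
    rw [add_zsmul, ← sub_eq_zero, ← htors _ hP]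
    abel
  have hQ2 : Q + Q = (n + n) • R := by
    rw [add_zsmul, ← sub_eq_zero, ← htors _ hQ]
    abel
  rw [hP2, hQ2]
  obtain rfl | rfl := sq_eq_sq_iff_eq_or_eq_neg.1 hmn
  · exact .inl rfl
  · exact .inr (by rw [← neg_add, neg_zsmul])

theorem exists_linearIndependent_of_duplication_ne (hf : DistinctRoots a b c)
    {x₁ x₂ : ℕ → ℚ} {δ : ℕ} (hx₁ : HasHeightGrowth x₁ δ) (hx₂ : HasHeightGrowth x₂ δ)
    (hδ : 0 < δ) (hsq : ∀ᶠ q in atTop, ∃ y ≠ 0, (x₁ q ^ 3 + a * x₁ q ^ 2 + b * x₁ q + c) *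
      (x₂ q ^ 3 + a * x₂ q ^ 2 + b * x₂ q + c) = y ^ 2)
    (hne : ∀ᶠ q in atTop, (x₁ q ^ 4 - 2 * b * x₁ q ^ 2 - 8 * c * x₁ q + b ^ 2 - 4 * a * c) *
        (x₂ q ^ 3 + a * x₂ q ^ 2 + b * x₂ q + c) ≠
      (x₂ q ^ 4 - 2 * b * x₂ q ^ 2 - 8 * c * x₂ q + b ^ 2 - 4 * a * c) *
        (x₁ q ^ 3 + a * x₁ q ^ 2 + b * x₁ q + c)) :
    ∃ D : ℤ, D ≠ 0 ∧ ∃ P : Fin 2 → (twist a b c D).Point, LinearIndependent ℤ P := by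
  by_contra hcon
  have hr : ∀ D : ℤ, D ≠ 0 → ¬∃ P : Fin 2 → (twist a b c D).Point, LinearIndependent ℤ P :=
    fun D hD hP => hcon ⟨D, hD, hP⟩
  obtain ⟨B, htors⟩ := exists_add_self_eq_zero_of_isOfFinAddOrder hf
  obtain ⟨q, ⟨D, hD, hB, P, Q, R, m, n, hP, hQ, hxP, hxQ, hm, hn, hrel⟩, hne⟩ :=
    ((hx₁.frequently_exists_zsmul_relation hf hr hx₂ hδ hsq B).and_eventually hne).exists
  have hmn : m ^ 2 = n ^ 2 := mul_left_cancel₀ (by exact_mod_cast hδ.ne') hrel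
  have hdouble : twistX (P + P) = twistX (Q + Q) := by
    obtain h | h := add_self_eq_or_eq_neg_of_sq_eq (htors D hD hB) hm hn hmn
    · rw [h]
    · rw [h, twistX_neg]
  have hdupP := twistX_add_self hD.ne_zero hP
  have hdupQ := twistX_add_self hD.ne_zero hQ
  rw [hxP] at hdupP
  rw [hxQ] at hdupQ
  refine hne ?_
  rw [← hdupP, ← hdupQ, hdouble]
  ring

theorem exists_linearIndependent_of_not_isSquare (hf : DistinctRoots a b c)
    {x₁ x₂ : ℕ → ℚ} {δ₁ δ₂ : ℕ} (hx₁ : HasHeightGrowth x₁ δ₁) (hx₂ : HasHeightGrowth x₂ δ₂)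
    (hδ : ¬IsSquare (δ₁ * δ₂))
    (hsq : ∀ᶠ q in atTop, ∃ y ≠ 0, (x₁ q ^ 3 + a * x₁ q ^ 2 + b * x₁ q + c) *
      (x₂ q ^ 3 + a * x₂ q ^ 2 + b * x₂ q + c) = y ^ 2) :
    ∃ D : ℤ, D ≠ 0 ∧ ∃ P : Fin 2 → (twist a b c D).Point, LinearIndependent ℤ P := by
  by_contra hcon
  have hr : ∀ D : ℤ, D ≠ 0 → ¬∃ P : Fin 2 → (twist a b c D).Point, LinearIndependent ℤ P :=
    fun D hD hP => hcon ⟨D, hD, hP⟩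
  have hδ₁ : 0 < δ₁ := Nat.pos_of_ne_zero fun h0 => hδ ⟨0, by rw [h0, zero_mul, zero_mul]⟩
  obtain ⟨B, htors⟩ := exists_add_self_eq_zero_of_isOfFinAddOrder hf
  obtain ⟨q, D, hD, hB, P, Q, R, m, n, hP, -, -, -, hm, -, hrel⟩ :=
    (hx₁.frequently_exists_zsmul_relation hf hr hx₂ hδ₁ hsq B).exists
  have hm0 : (m : ℚ) ≠ 0 := by
    rintro h0
    rw [Int.cast_eq_zero.1 h0, zero_zsmul, sub_zero] at hm
    exact hP (htors D hD hB P hm)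
  refine hδ (Rat.isSquare_natCast_iff.1 ⟨δ₁ * n / m, ?_⟩)
  have hrel : (δ₂ * m ^ 2 : ℚ) = δ₁ * n ^ 2 := by exact_mod_cast hrel
  push_cast
  field_simp
  linear_combination hrel

end RankOne

/-! ### A twist of rank at least two -/

section Depressed

open Filter

variable {a b c b' c' : ℤ}

theorem cubic_sub_div_three (hb' : b' = 9 * b - 3 * a ^ 2)
    (hc' : c' = 27 * c - 9 * a * b + 2 * a ^ 3) (X : ℚ) :
    ((X - a) / 3) ^ 3 + a * ((X - a) / 3) ^ 2 + b * ((X - a) / 3) + c =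
      (X ^ 3 + b' * X + c') / 27 := by
  rw [hb', hc']
  push_cast
  ring

theorem duplication_sub_div_three (hb' : b' = 9 * b - 3 * a ^ 2)
    (hc' : c' = 27 * c - 9 * a * b + 2 * a ^ 3) (X : ℚ) :
    ((X - a) / 3) ^ 4 - 2 * b * ((X - a) / 3) ^ 2 - 8 * c * ((X - a) / 3) + b ^ 2 - 4 * a * c =
      (X ^ 4 - 2 * b' * X ^ 2 - 8 * c' * X + b' ^ 2) / 81 -
        4 * a / 3 * ((X ^ 3 + b' * X + c') / 27) := by
  rw [hb', hc']
  push_cast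
  ring

theorem exists_mul_eq_sq_sub_div_three (hb' : b' = 9 * b - 3 * a ^ 2)
    (hc' : c' = 27 * c - 9 * a * b + 2 * a ^ 3) {X₁ X₂ : ℚ}
    (h : ∃ y ≠ 0, (X₁ ^ 3 + b' * X₁ + c') * (X₂ ^ 3 + b' * X₂ + c') = y ^ 2) :
    ∃ y ≠ 0, (((X₁ - a) / 3) ^ 3 + a * ((X₁ - a) / 3) ^ 2 + b * ((X₁ - a) / 3) + c) *
      (((X₂ - a) / 3) ^ 3 + a * ((X₂ - a) / 3) ^ 2 + b * ((X₂ - a) / 3) + c) = y ^ 2 := by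
  obtain ⟨y, hy, hsq⟩ := h
  refine ⟨y / 27, by positivity, ?_⟩
  rw [cubic_sub_div_three hb' hc', cubic_sub_div_three hb' hc', div_pow, ← hsq]
  ring

theorem exists_linearIndependent_of_depressed_duplication_ne (hf : DistinctRoots a b c)
    (hb' : b' = 9 * b - 3 * a ^ 2) (hc' : c' = 27 * c - 9 * a * b + 2 * a ^ 3)
    {X₁ X₂ : ℕ → ℚ} {δ : ℕ} (hX₁ : HasHeightGrowth X₁ δ) (hX₂ : HasHeightGrowth X₂ δ) (hδ : 0 < δ)
    (hsq : ∀ᶠ q in atTop, ∃ y ≠ 0,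
      (X₁ q ^ 3 + b' * X₁ q + c') * (X₂ q ^ 3 + b' * X₂ q + c') = y ^ 2)
    (hne : ∀ᶠ q in atTop,
      (X₁ q ^ 4 - 2 * b' * X₁ q ^ 2 - 8 * c' * X₁ q + b' ^ 2) * (X₂ q ^ 3 + b' * X₂ q + c') ≠
        (X₂ q ^ 4 - 2 * b' * X₂ q ^ 2 - 8 * c' * X₂ q + b' ^ 2) * (X₁ q ^ 3 + b' * X₁ q + c')) :
    ∃ D : ℤ, D ≠ 0 ∧ ∃ P : Fin 2 → (twist a b c D).Point, LinearIndependent ℤ P := by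
  refine exists_linearIndependent_of_duplication_ne hf (hX₁.sub_div a three_ne_zero)
    (hX₂.sub_div a three_ne_zero) hδ
    (hsq.mono fun q => exists_mul_eq_sq_sub_div_three hb' hc') (hne.mono fun q hq heq => hq ?_)
  simp only [cubic_sub_div_three hb' hc', duplication_sub_div_three hb' hc'] at heq
  linear_combination 2187 * heq

theorem exists_linearIndependent_of_depressed_not_isSquare (hf : DistinctRoots a b c)
    (hb' : b' = 9 * b - 3 * a ^ 2) (hc' : c' = 27 * c - 9 * a * b + 2 * a ^ 3)
    {X₁ X₂ : ℕ → ℚ} {δ₁ δ₂ : ℕ} (hX₁ : HasHeightGrowth X₁ δ₁) (hX₂ : HasHeightGrowth X₂ δ₂)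
    (hδ : ¬IsSquare (δ₁ * δ₂))
    (hsq : ∀ᶠ q in atTop, ∃ y ≠ 0,
      (X₁ q ^ 3 + b' * X₁ q + c') * (X₂ q ^ 3 + b' * X₂ q + c') = y ^ 2) :
    ∃ D : ℤ, D ≠ 0 ∧ ∃ P : Fin 2 → (twist a b c D).Point, LinearIndependent ℤ P :=
  exists_linearIndependent_of_not_isSquare hf (hX₁.sub_div a three_ne_zero)
    (hX₂.sub_div a three_ne_zero) hδ
    (hsq.mono fun _ => exists_mul_eq_sq_sub_div_three hb' hc')

end Depressed

section ScalingFamily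

open Filter Polynomial

/-- The solution `x` of `(T x) ^ 3 + b (T x) + c = T ^ 3 (x ^ 3 + b x + c)`, an equation which is
linear in `x`. When `T` is a square, `x` and `T x` are abscissas of points on the same twist. -/
def scalingX (b c T : ℚ) : ℚ :=
  -c * (T ^ 2 + T + 1) / (b * (T * (T + 1)))

theorem cubic_mul_eq_cube_mul_cubic {b c T x : ℚ}
    (hx : x * (b * (T * (T + 1))) = -c * (T ^ 2 + T + 1)) :
    (T * x) ^ 3 + b * (T * x) + c = T ^ 3 * (x ^ 3 + b * x + c) := by
  linear_combination (1 - T) * hx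

theorem duplication_mul_ne {b c T x : ℚ} (hx : x * (b * (T * (T + 1))) = -c * (T ^ 2 + T + 1))
    (hT0 : T ≠ 0) (hT1 : T - 1 ≠ 0) (hcubic : x ^ 3 + b * x + c ≠ 0)
    (hW : c ^ 4 * (T ^ 2 + T + 1) ^ 4 + T * (2 * b ^ 3 * c ^ 2 * (T ^ 2 + T + 1) ^ 2 * (T + 1) ^ 2
      - 8 * b ^ 3 * c ^ 2 * (T ^ 2 + T + 1) * (T + 1) ^ 4
      - b ^ 6 * (T ^ 2 + T + 1) * (T + 1) ^ 4) ≠ 0) :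
    (x ^ 4 - 2 * b * x ^ 2 - 8 * c * x + b ^ 2) * ((T * x) ^ 3 + b * (T * x) + c) ≠
      ((T * x) ^ 4 - 2 * b * (T * x) ^ 2 - 8 * c * (T * x) + b ^ 2) * (x ^ 3 + b * x + c) := by
  intro h
  rw [cubic_mul_eq_cube_mul_cubic hx] at h
  have hdup : T ^ 3 * (x ^ 4 - 2 * b * x ^ 2 - 8 * c * x + b ^ 2) =
      (T * x) ^ 4 - 2 * b * (T * x) ^ 2 - 8 * c * (T * x) + b ^ 2 :=
    mul_right_cancel₀ hcubic (by linear_combination h)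
  have hquartic : T ^ 3 * x ^ 4 + 2 * b * T ^ 2 * x ^ 2 + 8 * c * T * (T + 1) * x
      - b ^ 2 * (T ^ 2 + T + 1) = 0 :=
    mul_left_cancel₀ hT1 (by linear_combination -hdup)
  have hx2 : (-c * (T ^ 2 + T + 1)) ^ 2 = (x * (b * (T * (T + 1)))) ^ 2 := by rw [hx]
  have hx4 : (-c * (T ^ 2 + T + 1)) ^ 4 = (x * (b * (T * (T + 1)))) ^ 4 := by rw [hx]
  refine hW (mul_left_cancel₀ (pow_ne_zero 3 hT0) ?_)
  linear_combination (b * (T * (T + 1))) ^ 4 * hquartic + T ^ 3 * hx4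
    + 2 * T ^ 4 * (T + 1) ^ 2 * b ^ 3 * hx2 - 8 * c * (T * (T + 1)) * (b * (T * (T + 1))) ^ 3 * hx

variable {b c : ℤ}

theorem scalingX_sq_mul (hb : b ≠ 0) {q : ℕ} (hq : 0 < q) :
    scalingX b c (q ^ 2) * (b * ((q : ℚ) ^ 2 * ((q : ℚ) ^ 2 + 1))) =
      -c * (((q : ℚ) ^ 2) ^ 2 + (q : ℚ) ^ 2 + 1) :=
  have : (b : ℚ) ≠ 0 := Int.cast_ne_zero.2 hb
  div_mul_cancel₀ _ (by positivity)

theorem eventually_cubic_scalingX_ne_zero (hb : b ≠ 0) (hc : c ≠ 0) : ∀ᶠ q : ℕ in atTop,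
    scalingX b c (q ^ 2) ^ 3 + b * scalingX b c (q ^ 2) + c ≠ 0 := by
  set W : ℤ[X] := (-C c * (X ^ 2 + X + 1)) ^ 3
    + C b * (-C c * (X ^ 2 + X + 1)) * (C b * (X * (X + 1))) ^ 2
    + C c * (C b * (X * (X + 1))) ^ 3 with hW
  have hW0 : W.eval 0 ≠ 0 := by simp [hW, hc]
  filter_upwards [eventually_eval_mul_pow_ne_zero hW0 1 two_ne_zero, eventually_gt_atTop 0]
    with q hWq hq hcubic
  rw [one_mul] at hWq
  simp only [hW, eval_add, eval_mul, eval_pow, eval_X, eval_C, eval_neg, eval_one] at hWq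
  push_cast at hWq
  refine hWq ?_
  rw [← scalingX_sq_mul hb hq]
  linear_combination (b * ((q : ℚ) ^ 2 * ((q : ℚ) ^ 2 + 1))) ^ 3 * hcubic

theorem eventually_duplication_scalingX_ne (hb : b ≠ 0) (hc : c ≠ 0) : ∀ᶠ q : ℕ in atTop,
    (scalingX b c (q ^ 2) ^ 4 - 2 * b * scalingX b c (q ^ 2) ^ 2 - 8 * c * scalingX b c (q ^ 2)
        + b ^ 2) * ((q ^ 2 * scalingX b c (q ^ 2)) ^ 3 + b * (q ^ 2 * scalingX b c (q ^ 2)) + c) ≠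
      ((q ^ 2 * scalingX b c (q ^ 2)) ^ 4 - 2 * b * (q ^ 2 * scalingX b c (q ^ 2)) ^ 2
        - 8 * c * (q ^ 2 * scalingX b c (q ^ 2)) + b ^ 2) *
          (scalingX b c (q ^ 2) ^ 3 + b * scalingX b c (q ^ 2) + c) := by
  set W : ℤ[X] := C c ^ 4 * (X ^ 2 + X + 1) ^ 4
    + X * (2 * C b ^ 3 * C c ^ 2 * (X ^ 2 + X + 1) ^ 2 * (X + 1) ^ 2
      - 8 * C b ^ 3 * C c ^ 2 * (X ^ 2 + X + 1) * (X + 1) ^ 4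
      - C b ^ 6 * (X ^ 2 + X + 1) * (X + 1) ^ 4) with hW
  have hW0 : W.eval 0 ≠ 0 := by simp [hW, hc]
  filter_upwards [eventually_eval_mul_pow_ne_zero hW0 1 two_ne_zero, eventually_gt_atTop 1,
    eventually_cubic_scalingX_ne_zero hb hc] with q hWq hq hcubic
  rw [one_mul] at hWq
  simp only [hW, eval_add, eval_sub, eval_mul, eval_pow, eval_X, eval_C, eval_one,
    eval_ofNat] at hWq
  push_cast at hWq
  have hq1 : (1 : ℚ) < q := by exact_mod_cast hq
  exact duplication_mul_ne (scalingX_sq_mul hb (zero_lt_one.trans hq)) (by positivity)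
    (by nlinarith) hcubic hWq

theorem hasHeightGrowth_scalingX_sq (hb : b ≠ 0) (hc : c ≠ 0) :
    HasHeightGrowth (fun q => scalingX b c (q ^ 2)) 4 := by
  have hA : (C (-c) * ((X ^ 2) ^ 2 + X ^ 2 + 1) : ℤ[X]).natDegree = 4 := by
    rw [natDegree_C_mul (neg_ne_zero.2 hc)]
    compute_degree!
  have hB : (C b * (X ^ 2 * (X ^ 2 + 1)) : ℤ[X]).natDegree = 4 := by
    rw [natDegree_C_mul hb]
    compute_degree!
  have h := hasHeightGrowth_eval_div (U := C (-b)) (V := C (-c))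
    (ne_zero_of_natDegree_gt (hA.symm ▸ four_pos)) (ne_zero_of_natDegree_gt (hB.symm ▸ four_pos))
    (mul_ne_zero hb hc) (by simp only [C_mul, C_neg]; ring)
  rw [hA, hB, max_self] at h
  simpa [scalingX] using h

theorem hasHeightGrowth_sq_mul_scalingX_sq (hb : b ≠ 0) (hc : c ≠ 0) :
    HasHeightGrowth (fun q => q ^ 2 * scalingX b c (q ^ 2)) 4 := by
  have hA : (C (-c) * ((X ^ 2) ^ 2 + X ^ 2 + 1) : ℤ[X]).natDegree = 4 := by
    rw [natDegree_C_mul (neg_ne_zero.2 hc)]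
    compute_degree!
  have hB : (C b * (X ^ 2 + 1) : ℤ[X]).natDegree = 2 := by
    rw [natDegree_C_mul hb]
    compute_degree!
  have h := hasHeightGrowth_eval_div (U := C (-b)) (V := C (-c) * X ^ 2)
    (ne_zero_of_natDegree_gt (hA.symm ▸ four_pos)) (ne_zero_of_natDegree_gt (hB.symm ▸ two_pos))
    (mul_ne_zero hb hc) (by simp only [C_mul, C_neg]; ring)
  rw [hA, hB] at h
  refine HasHeightGrowth.congr (by simpa using h) ?_
  filter_upwards [eventually_gt_atTop 0] with q hq
  simp only [scalingX]
  have : (b : ℚ) ≠ 0 := Int.cast_ne_zero.2 hb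
  field_simp

theorem exists_linearIndependent_of_depressed_ne_zero {a b c b' c' : ℤ}
    (hf : DistinctRoots a b c) (hb' : b' = 9 * b - 3 * a ^ 2)
    (hc' : c' = 27 * c - 9 * a * b + 2 * a ^ 3) (hb0 : b' ≠ 0) (hc0 : c' ≠ 0) :
    ∃ D : ℤ, D ≠ 0 ∧ ∃ P : Fin 2 → (twist a b c D).Point, LinearIndependent ℤ P := by
  refine exists_linearIndependent_of_depressed_duplication_ne hf hb' hc'
    (hasHeightGrowth_scalingX_sq hb0 hc0) (hasHeightGrowth_sq_mul_scalingX_sq hb0 hc0) four_pos ?_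
    (eventually_duplication_scalingX_ne hb0 hc0)
  filter_upwards [eventually_gt_atTop 0, eventually_cubic_scalingX_ne_zero hb0 hc0]
    with q hq hcubic
  rw [cubic_mul_eq_cube_mul_cubic (scalingX_sq_mul hb0 hq)]
  exact ⟨_, mul_ne_zero (pow_ne_zero 3 (Nat.cast_ne_zero.2 hq.ne')) hcubic, by ring⟩

end ScalingFamily

namespace Lemniscatic

open Filter Polynomial

/-- The numerator `r` in the parametrization `x₁ = b q r(Z) / s(Z)`, `x₂ = t(Z) / (q s(Z))`,
`Z = b q ^ 2`, of a curve on the surface `(x₁ ^ 3 + b x₁) (x₂ ^ 3 + b x₂) = y ^ 2`. -/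
noncomputable def num₁ : ℤ[X] :=
  -2 * X ^ 3 - 20 * X ^ 2 - 2 * X - 8

/-- The denominator `s` in the parametrization described at `Lemniscatic.num₁`. -/
noncomputable def den : ℤ[X] :=
  X ^ 3 - 17 * X ^ 2 - 17 * X + 1

/-- The numerator `t` in the parametrization described at `Lemniscatic.num₁`. -/
noncomputable def num₂ : ℤ[X] :=
  -8 * X ^ 3 - 2 * X ^ 2 - 20 * X - 2

/-- The polynomial `R` with `y = b R(Z) / (q s(Z) ^ 3)` in the parametrization described at
`Lemniscatic.num₁`. -/
noncomputable def root : ℤ[X] :=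
  8 * X ^ 10 + 242 * X ^ 9 + 2376 * X ^ 8 + 8408 * X ^ 7 + 10544 * X ^ 6 + 22380 * X ^ 5
    + 10544 * X ^ 4 + 8408 * X ^ 3 + 2376 * X ^ 2 + 242 * X + 8

theorem num_mul_num_mul_eq_sq :
    num₁ * num₂ * (X * num₁ ^ 2 + den ^ 2) * (num₂ ^ 2 + X * den ^ 2) = root ^ 2 := by
  rw [num₁, num₂, den, root]
  ring

theorem natDegree_num₁ : num₁.natDegree = 3 := by
  rw [num₁]
  compute_degree!

theorem natDegree_den : den.natDegree = 3 := by
  rw [den]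
  compute_degree!

theorem natDegree_num₂ : num₂.natDegree = 3 := by
  rw [num₂]
  compute_degree!

theorem bezout_num₁_den :
    (727 * X ^ 2 - 12332 * X - 12803) * (X * num₁)
      + (1454 * X ^ 3 + 14594 * X ^ 2 + 2024 * X + 6144) * den = C 6144 := by
  rw [num₁, den, C_ofNat]
  ring

theorem bezout_den_num₂ :
    (-9720 * X ^ 2 - 1494 * X - 24122) * (X * den)
      + (-1215 * X ^ 3 + 20772 * X ^ 2 + 18659 * X - 3072) * num₂ = C 6144 := by
  rw [num₂, den, C_ofNat]
  ring

theorem cubic_mul_cubic_eq_sq {b q r s t R : ℚ} (hq : q ≠ 0) (hs : s ≠ 0)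
    (h : r * t * (b * q ^ 2 * r ^ 2 + s ^ 2) * (t ^ 2 + b * q ^ 2 * s ^ 2) = R ^ 2) :
    ((b * q * r / s) ^ 3 + b * (b * q * r / s)) * ((t / (q * s)) ^ 3 + b * (t / (q * s))) =
      (b * R / (q * s ^ 3)) ^ 2 := by
  rw [div_pow _ (q * s ^ 3), mul_pow b, ← h]
  field_simp

theorem duplication_mul_cubic_ne {b q r s t : ℚ} (hb : b ≠ 0) (hq : q ≠ 0) (hs : s ≠ 0)
    (h : (b * q ^ 2 * r ^ 2 - s ^ 2) ^ 2 * t * (t ^ 2 + b * q ^ 2 * s ^ 2)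
      - (t ^ 2 - b * q ^ 2 * s ^ 2) ^ 2 * r * (b * q ^ 2 * r ^ 2 + s ^ 2) ≠ 0) :
    ((b * q * r / s) ^ 4 - 2 * b * (b * q * r / s) ^ 2 + b ^ 2) *
        ((t / (q * s)) ^ 3 + b * (t / (q * s))) ≠
      ((t / (q * s)) ^ 4 - 2 * b * (t / (q * s)) ^ 2 + b ^ 2) *
        ((b * q * r / s) ^ 3 + b * (b * q * r / s)) := by
  intro heq
  refine h (mul_left_cancel₀ (by positivity : b ^ 2 / (q ^ 3 * s ^ 7) ≠ 0) ?_)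
  rw [mul_zero, ← sub_eq_zero.2 heq]
  field_simp
  ring

/-- The abscissa `x₁` in the parametrization described at `Lemniscatic.num₁`. -/
noncomputable def x₁ (b : ℤ) (q : ℕ) : ℚ :=
  b * q * ((num₁.eval (b * (q : ℤ) ^ 2) : ℤ) : ℚ) / ((den.eval (b * (q : ℤ) ^ 2) : ℤ) : ℚ)

/-- The abscissa `x₂` in the parametrization described at `Lemniscatic.num₁`. -/
noncomputable def x₂ (b : ℤ) (q : ℕ) : ℚ :=
  ((num₂.eval (b * (q : ℤ) ^ 2) : ℤ) : ℚ) / (q * ((den.eval (b * (q : ℤ) ^ 2) : ℤ) : ℚ))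

variable {b : ℤ}

theorem hasHeightGrowth_x₁ (hb : b ≠ 0) : HasHeightGrowth (x₁ b) 7 := by
  have h := hasHeightGrowth_mul_eval_div_eval natDegree_num₁ natDegree_den three_pos hb one_ne_zero
    two_ne_zero (by norm_num) bezout_num₁_den
  simp only [mul_one] at h
  exact h

theorem hasHeightGrowth_x₂ (hb : b ≠ 0) : HasHeightGrowth (x₂ b) 7 := by
  have h := (hasHeightGrowth_mul_eval_div_eval natDegree_den natDegree_num₂ three_pos one_ne_zero
    hb two_ne_zero (by norm_num) bezout_den_num₂).inv
  simp only [inv_div, one_mul, Int.cast_one] at h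
  exact h

theorem eventually_den_ne_zero (b : ℤ) :
    ∀ᶠ q : ℕ in atTop, ((den.eval (b * (q : ℤ) ^ 2) : ℤ) : ℚ) ≠ 0 :=
  eventually_eval_mul_pow_ne_zero (by simp [den]) b two_ne_zero

theorem eventually_mul_eq_sq (hb : b ≠ 0) : ∀ᶠ q in atTop, ∃ y ≠ 0,
    (x₁ b q ^ 3 + b * x₁ b q) * (x₂ b q ^ 3 + b * x₂ b q) = y ^ 2 := by
  filter_upwards [eventually_gt_atTop 0, eventually_den_ne_zero b,
    eventually_eval_mul_pow_ne_zero (p := root) (by simp [root]) b two_ne_zero] with q hq hden hroot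
  have : (b : ℚ) ≠ 0 := Int.cast_ne_zero.2 hb
  have hq : (q : ℚ) ≠ 0 := Nat.cast_ne_zero.2 hq.ne'
  refine ⟨b * ((root.eval (b * (q : ℤ) ^ 2) : ℤ) : ℚ) /
    (q * ((den.eval (b * (q : ℤ) ^ 2) : ℤ) : ℚ) ^ 3), by positivity,
    cubic_mul_cubic_eq_sq hq hden ?_⟩
  have h := congrArg (eval (b * (q : ℤ) ^ 2)) num_mul_num_mul_eq_sq
  simp only [eval_add, eval_mul, eval_pow, eval_X] at h
  exact_mod_cast h

theorem eventually_duplication_ne (hb : b ≠ 0) : ∀ᶠ q in atTop,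
    (x₁ b q ^ 4 - 2 * b * x₁ b q ^ 2 + b ^ 2) * (x₂ b q ^ 3 + b * x₂ b q) ≠
      (x₂ b q ^ 4 - 2 * b * x₂ b q ^ 2 + b ^ 2) * (x₁ b q ^ 3 + b * x₁ b q) := by
  set W : ℤ[X] := (X * num₁ ^ 2 - den ^ 2) ^ 2 * num₂ * (num₂ ^ 2 + X * den ^ 2)
    - (num₂ ^ 2 - X * den ^ 2) ^ 2 * num₁ * (X * num₁ ^ 2 + den ^ 2) with hW
  have hW0 : W.eval 0 ≠ 0 := by simp [hW, num₁, num₂, den]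
  filter_upwards [eventually_gt_atTop 0, eventually_den_ne_zero b,
    eventually_eval_mul_pow_ne_zero hW0 b two_ne_zero] with q hq hden hWq
  refine duplication_mul_cubic_ne (Int.cast_ne_zero.2 hb) (Nat.cast_ne_zero.2 hq.ne') hden ?_
  simp only [hW, eval_add, eval_sub, eval_mul, eval_pow, eval_X] at hWq
  exact_mod_cast hWq

end Lemniscatic

theorem exists_linearIndependent_of_depressed_lemniscatic {a b c b' : ℤ}
    (hf : DistinctRoots a b c) (hb' : b' = 9 * b - 3 * a ^ 2)
    (hc' : 0 = 27 * c - 9 * a * b + 2 * a ^ 3) (hb0 : b' ≠ 0) :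
    ∃ D : ℤ, D ≠ 0 ∧ ∃ P : Fin 2 → (twist a b c D).Point, LinearIndependent ℤ P := by
  refine exists_linearIndependent_of_depressed_duplication_ne hf hb' hc'
    (Lemniscatic.hasHeightGrowth_x₁ hb0) (Lemniscatic.hasHeightGrowth_x₂ hb0) (by norm_num) ?_ ?_
  · simpa using Lemniscatic.eventually_mul_eq_sq hb0
  · simpa using Lemniscatic.eventually_duplication_ne hb0

namespace Equianharmonic

open Filter Polynomial

/-- The numerator `r₁` in the parametrization `xᵢ = c q rᵢ(Z) / sᵢ(Z)`, `Z = c ^ 2 q ^ 3`, of a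
curve on the surface `(x₁ ^ 3 + c) (x₂ ^ 3 + c) = y ^ 2`. -/
noncomputable def num₁ : ℤ[X] :=
  -X ^ 4 + 86 * X ^ 3 + 48 * X ^ 2 + 320 * X + 1088

/-- The denominator `s₁` in the parametrization described at `Equianharmonic.num₁`. -/
noncomputable def den₁ : ℤ[X] :=
  2 * X ^ 4 + 17 * X ^ 3 + 552 * X ^ 2 - 640 * X - 448

/-- The numerator `r₂` in the parametrization described at `Equianharmonic.num₁`. -/
noncomputable def num₂ : ℤ[X] :=
  -X ^ 5 - 95 * X ^ 4 + 224 * X ^ 3 + 5120 * X ^ 2 - 3200 * X + 5120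

/-- The denominator `s₂` in the parametrization described at `Equianharmonic.num₁`. -/
noncomputable def den₂ : ℤ[X] :=
  8 * X ^ 5 + 76 * X ^ 4 + 2276 * X ^ 3 - 352 * X ^ 2 - 4352 * X - 1792

/-- The polynomial `R` with `y = c R(Z) / (s₁(Z) s₂(Z)) ^ 2` in the parametrization described at
`Equianharmonic.num₁`. -/
noncomputable def root : ℤ[X] :=
  4 * X ^ 19 - 950 * X ^ 18 + 58788 * X ^ 17 - 438168 * X ^ 16 - 42005568 * X ^ 15
    - 781123266 * X ^ 14 - 16490994024 * X ^ 13 - 20588294640 * X ^ 12 - 242100255744 * X ^ 11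
    - 820240150528 * X ^ 10 - 1647762042880 * X ^ 9 + 13307810660352 * X ^ 8
    - 29933165936640 * X ^ 7 - 4634614824960 * X ^ 6 + 30500733321216 * X ^ 5
    + 18016779632640 * X ^ 4 + 32164892639232 * X ^ 3 - 2826927341568 * X ^ 2
    - 7160113135616 * X + 644513529856

theorem mul_den_mul_den_eq_sq :
    (X * num₁ ^ 3 + den₁ ^ 3) * (X * num₂ ^ 3 + den₂ ^ 3) * den₁ * den₂ = root ^ 2 := by
  rw [num₁, num₂, den₁, den₂, root]
  ring

theorem natDegree_num₁ : num₁.natDegree = 4 := by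
  rw [num₁]
  compute_degree!

theorem natDegree_den₁ : den₁.natDegree = 4 := by
  rw [den₁]
  compute_degree!

theorem natDegree_num₂ : num₂.natDegree = 5 := by
  rw [num₂]
  compute_degree!

theorem natDegree_den₂ : den₂.natDegree = 5 := by
  rw [den₂]
  compute_degree!

theorem bezout_num₁_den₁ :
    (7110 * X ^ 3 + 58643 * X ^ 2 + 1950712 * X - 2736640) * (X * num₁)
      + (3555 * X ^ 4 - 306626 * X ^ 3 - 91792 * X ^ 2 - 1247360 * X - 3779136) * den₁ =
        C 1693052928 := by
  rw [num₁, den₁, C_ofNat]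
  ring

theorem bezout_num₂_den₂ :
    (374440 * X ^ 4 + 3464164 * X ^ 3 + 105685296 * X ^ 2 - 42429260 * X - 186828608) * (X * num₂)
      + (46805 * X ^ 5 + 4434848 * X ^ 4 - 11583789 * X ^ 3 - 236537800 * X ^ 2 + 209614016 * X
        - 306110016) * den₂ = C 548549148672 := by
  rw [num₂, den₂, C_ofNat]
  ring

theorem cubic_mul_cubic_eq_sq {c q r₁ s₁ r₂ s₂ R : ℚ} (hs₁ : s₁ ≠ 0) (hs₂ : s₂ ≠ 0)
    (h : (c * c * q ^ 3 * r₁ ^ 3 + s₁ ^ 3) * (c * c * q ^ 3 * r₂ ^ 3 + s₂ ^ 3) * s₁ * s₂ =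
      R ^ 2) :
    ((c * q * r₁ / s₁) ^ 3 + c) * ((c * q * r₂ / s₂) ^ 3 + c) = (c * R / (s₁ * s₂) ^ 2) ^ 2 := by
  rw [div_pow _ ((s₁ * s₂) ^ 2), mul_pow c, ← h]
  field_simp

/-- The abscissa `x₁` in the parametrization described at `Equianharmonic.num₁`. -/
noncomputable def x₁ (c : ℤ) (q : ℕ) : ℚ :=
  c * q * ((num₁.eval (c * c * (q : ℤ) ^ 3) : ℤ) : ℚ) /
    ((den₁.eval (c * c * (q : ℤ) ^ 3) : ℤ) : ℚ)

/-- The abscissa `x₂` in the parametrization described at `Equianharmonic.num₁`. -/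
noncomputable def x₂ (c : ℤ) (q : ℕ) : ℚ :=
  c * q * ((num₂.eval (c * c * (q : ℤ) ^ 3) : ℤ) : ℚ) /
    ((den₂.eval (c * c * (q : ℤ) ^ 3) : ℤ) : ℚ)

variable {c : ℤ}

theorem hasHeightGrowth_x₁ (hc : c ≠ 0) : HasHeightGrowth (x₁ c) 13 :=
  (hasHeightGrowth_mul_eval_div_eval natDegree_num₁ natDegree_den₁ four_pos hc hc three_ne_zero
    (by norm_num) bezout_num₁_den₁ :)

theorem hasHeightGrowth_x₂ (hc : c ≠ 0) : HasHeightGrowth (x₂ c) 16 :=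
  (hasHeightGrowth_mul_eval_div_eval natDegree_num₂ natDegree_den₂ (by norm_num) hc hc
    three_ne_zero (by norm_num) bezout_num₂_den₂ :)

theorem eventually_mul_eq_sq (hc : c ≠ 0) : ∀ᶠ q in atTop, ∃ y ≠ 0,
    (x₁ c q ^ 3 + c) * (x₂ c q ^ 3 + c) = y ^ 2 := by
  filter_upwards
    [eventually_eval_mul_pow_ne_zero (p := den₁) (by simp [den₁]) (c * c) three_ne_zero,
    eventually_eval_mul_pow_ne_zero (p := den₂) (by simp [den₂]) (c * c) three_ne_zero,
    eventually_eval_mul_pow_ne_zero (p := root) (by simp [root]) (c * c) three_ne_zero]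
    with q hden₁ hden₂ hroot
  have : (c : ℚ) ≠ 0 := Int.cast_ne_zero.2 hc
  refine ⟨c * ((root.eval (c * c * (q : ℤ) ^ 3) : ℤ) : ℚ) /
    (((den₁.eval (c * c * (q : ℤ) ^ 3) : ℤ) : ℚ) *
      ((den₂.eval (c * c * (q : ℤ) ^ 3) : ℤ) : ℚ)) ^ 2, by positivity,
    cubic_mul_cubic_eq_sq hden₁ hden₂ ?_⟩
  have h := congrArg (eval (c * c * (q : ℤ) ^ 3)) mul_den_mul_den_eq_sq
  simp only [eval_add, eval_mul, eval_pow, eval_X] at h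
  exact_mod_cast h

end Equianharmonic

theorem exists_linearIndependent_of_depressed_equianharmonic {a b c c' : ℤ}
    (hf : DistinctRoots a b c) (hb' : 0 = 9 * b - 3 * a ^ 2)
    (hc' : c' = 27 * c - 9 * a * b + 2 * a ^ 3) (hc0 : c' ≠ 0) :
    ∃ D : ℤ, D ≠ 0 ∧ ∃ P : Fin 2 → (twist a b c D).Point, LinearIndependent ℤ P := by
  refine exists_linearIndependent_of_depressed_not_isSquare hf hb' hc'
    (Equianharmonic.hasHeightGrowth_x₁ hc0) (Equianharmonic.hasHeightGrowth_x₂ hc0) ?_ ?_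
  · norm_num
  · simpa using Equianharmonic.eventually_mul_eq_sq hc0

theorem exists_linearIndependent_two {a b c : ℤ} (hf : DistinctRoots a b c) :
    ∃ D : ℤ, D ≠ 0 ∧ ∃ P : Fin 2 → (twist a b c D).Point, LinearIndependent ℤ P := by
  have hdisc : 4 * (9 * b - 3 * a ^ 2) ^ 3 + 27 * (27 * c - 9 * a * b + 2 * a ^ 3) ^ 2 =
      -729 * (a ^ 2 * b ^ 2 - 4 * b ^ 3 - 4 * a ^ 3 * c - 27 * c ^ 2 + 18 * a * b * c) := by
    ring
  by_cases hb : 9 * b - 3 * a ^ 2 = 0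
  · have hc : 27 * c - 9 * a * b + 2 * a ^ 3 ≠ 0 := fun hc => hf.discr_ne_zero (by
      rw [hb, hc] at hdisc
      linarith)
    exact exists_linearIndependent_of_depressed_equianharmonic hf hb.symm rfl hc
  by_cases hc : 27 * c - 9 * a * b + 2 * a ^ 3 = 0
  · exact exists_linearIndependent_of_depressed_lemniscatic hf rfl hc.symm hb
  · exact exists_linearIndependent_of_depressed_ne_zero hf rfl rfl hb hc

theorem one_lt_of_rankBound {a b c : ℤ} (hf : DistinctRoots a b c) {j : ℝ}
    (h : RankBound a b c j) : 1 < j := by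
  by_contra! hj
  obtain ⟨D, hD, P, hP⟩ := exists_linearIndependent_two hf
  have hle : ⌈2 * j⌉₊ ≤ 2 := Nat.ceil_le.2 (by push_cast; linarith)
  exact h D hD ⟨fun i => P (Fin.castLE hle i), hP.comp _ (Fin.castLE_injective hle)⟩

/-- **Corollary 14.** For `j > 0`, the following are equivalent:
(a) `rank E^{(D)}(ℚ) < 2j` for all nonzero `D`;
(b) `Q_E(j,k)` converges for some `k ≥ 1`;
(c) `Q_E(j,k)` converges for every `k ≥ 1`. -/
theorem rank_tfae_Q (a b c : ℤ) (hf : DistinctRoots a b c)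
    (ω : (d d' : ℕ) → ZMod (d^2) → ℤ × ℤ) (hω : IsShortestChoice a b c ω)
    (j : ℝ) (hj : 0 < j) :
    List.TFAE
      [RankBound a b c j,
       ∃ k : ℝ, 1 ≤ k ∧ QConv a b c j k ω,
       ∀ k : ℝ, 1 ≤ k → QConv a b c j k ω] := by
  tfae_have 1 → 3 := by
    intro hrank k hk
    obtain ⟨r, hr⟩ := Nat.exists_eq_add_one_of_ne_zero
      (Nat.ceil_pos.2 (mul_pos two_pos hj)).ne'
    have hlt : (r : ℝ) < 2 * j := Nat.lt_ceil.1 (hr ▸ r.lt_succ_self)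
    have hj1 : 1 < j := one_lt_of_rankBound hf hrank
    rw [RankBound, hr] at hrank
    exact QConv_of_rank_le hf hω hrank (by linarith) hj1 hk
  tfae_have 3 → 2 := fun h => ⟨1, le_rfl, h 1 le_rfl⟩
  tfae_have 2 → 1 := fun ⟨k, hk, hQ⟩ D hD ⟨P, hP⟩ =>
    not_linearIndependent_of_QConv hf hω hj (zero_le_one.trans hk) hQ (Nat.le_ceil _) hD P hP
  tfae_finish
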